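/- RSW property of the DaC model: for every p < 1/2 and r ∈ [0,1], (a) if limsup_{n→∞} ℙ_{p,r}(V^b_{n,⌈ρn⌉}) > 0 for some ρ > 0, then limsup_{n→∞} ℙ_{p,r}(V^b_{n,⌈ρn⌉}) > 0 for all ρ > 0; and (b) if limsup_{n→∞} ℙ_{p,r}(V^{w*}_{n,⌈ρn⌉}) > 0 for some ρ > 0, then limsup_{n→∞} ℙ_{p,r}(V^{w*}_{n,⌈ρn⌉}) > 0 for all ρ > 0. -/

import Mathlib

/-!
Common definitions for the Divide-and-Colour (DaC) model of
Bálint, Camia and Meester, "Sharp phase transition and critical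
behaviour in 2D divide and colour models".

The model is built concretely: a single uniform random variable on `(0,1]`
is decomposed into countably many i.i.d. uniform random variables (via its
binary digits); one family of uniforms drives the Bernoulli(p) bond
percolation (the edge configuration), and an independent family of uniforms
attaches an independent Bernoulli(r) colour to each bond cluster (the colour
of a cluster is determined by the uniform label of its canonical
representative, the vertex of minimal encoding).  The DaC measure
`ℙ_{p,r}` is the pushforward of Lebesgue measure on `(0,1]` under the map
producing the pair (edge configuration, colour configuration).
-/

open MeasureTheory ENNReal

namespace DaC

/-- Vertices of the lattice. -/
abbrev V : Type := ℤ × ℤ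

/-- Square lattice adjacency: Euclidean distance `1`. -/
def SqAdj (u v : V) : Prop := (u.1 - v.1) ^ 2 + (u.2 - v.2) ^ 2 = 1

/-- `*`-adjacency (matching graph of the square lattice):
Euclidean distance `1` or `√2`. -/
def StarAdj (u v : V) : Prop :=
  (u.1 - v.1) ^ 2 + (u.2 - v.2) ^ 2 = 1 ∨ (u.1 - v.1) ^ 2 + (u.2 - v.2) ^ 2 = 2

/-- Triangular lattice adjacency. -/
def TriAdj (u v : V) : Prop :=
  (u.1 - v.1, u.2 - v.2) ∈
    ({(1, 0), (-1, 0), (0, 1), (0, -1), (1, 1), (-1, -1)} : Set (ℤ × ℤ))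

/-- Classical indicator of a proposition, as a boolean. -/
noncomputable def boolOf (P : Prop) : Bool := @decide P (Classical.propDecidable P)

/-- The `n`-th binary digit of a real number `x ∈ (0,1]`. -/
noncomputable def bit (n : ℕ) (x : ℝ) : Bool := boolOf (⌊x * 2 ^ (n + 1)⌋ % 2 = 1)

/-- A countable family of i.i.d. uniform random variables on `[0,1]`, extracted
from a single uniform sample `x` by splitting its binary digits. -/
noncomputable def unif (i : ℕ) (x : ℝ) : ℝ :=
  ∑' k : ℕ, if bit (Nat.pair i k) x then ((2 : ℝ)⁻¹) ^ (k + 1) else 0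

/-- A symmetric encoding of (unordered) pairs of vertices. -/
noncomputable def eIdx (u v : V) : ℕ :=
  min (Encodable.encode (u, v)) (Encodable.encode (v, u))

/-- The uniform label attached to the edge `{u,v}`. -/
noncomputable def edgeU (u v : V) (x : ℝ) : ℝ := unif (2 * eIdx u v) x

/-- The uniform label attached to the vertex `v` (independent of the edge labels). -/
noncomputable def vtxU (v : V) (x : ℝ) : ℝ := unif (2 * Encodable.encode v + 1) x

/-- Edge configurations: a boolean (open/closed) for each (ordered) pair of
vertices; configurations arising from the model are symmetric and are
supported on pairs of adjacent vertices. -/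
abbrev EdgeCfg : Type := V → V → Bool

/-- Colour configurations: a colour (black = `true`, white = `false`) for each vertex. -/
abbrev ColourCfg : Type := V → Bool

/-- Full configurations of the DaC model: an edge configuration together with
a colour configuration. -/
abbrev Config : Type := EdgeCfg × ColourCfg

/-- The Bernoulli(p) edge configuration determined by the uniform sample `x`,
on the lattice with adjacency `adj`: an edge `{u,v}` of the lattice is open
iff its uniform label is `< p`. -/
noncomputable def edgeCfg (adj : V → V → Prop) (p : ℝ) (x : ℝ) : EdgeCfg :=
  fun u v => boolOf (adj u v) && boolOf (edgeU u v x < p)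

/-- Connectivity through open edges of the edge configuration `η`. -/
def Conn (η : EdgeCfg) (u v : V) : Prop :=
  Relation.ReflTransGen (fun a b => η a b = true) u v

/-- The `p`-cluster of the vertex `v`: its connected component in the graph
retaining only open edges. -/
def pCluster (η : EdgeCfg) (v : V) : Set V := {w | Conn η v w}

/-- Canonical representative of the `p`-cluster of `v`: the vertex of the
cluster with minimal encoding. -/
noncomputable def clusterRep (η : EdgeCfg) (v : V) : V :=
  (Encodable.decode (α := V) (sInf (Encodable.encode '' pCluster η v))).getD v

/-- The colour configuration with parameters `p, r` determined by the uniform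
sample `x`: every `p`-cluster is coloured black (with probability `r`)
or white, independently of all other `p`-clusters, according to the uniform
label of its canonical representative. -/
noncomputable def colourCfg (adj : V → V → Prop) (p r : ℝ) (x : ℝ) : ColourCfg :=
  fun v => boolOf (vtxU (clusterRep (edgeCfg adj p x) v) x < r)

/-- The uniform sample: Lebesgue measure on `(0,1]`. -/
noncomputable def base : Measure ℝ := volume.restrict (Set.Ioc 0 1)

/-- `ν_p`: the product Bernoulli(p) measure on edge configurations of the
lattice with adjacency `adj`. -/
noncomputable def edgeMeasure (adj : V → V → Prop) (p : ℝ) : Measure EdgeCfg :=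
  base.map (edgeCfg adj p)

/-- `ℙ_{p,r}`: the DaC measure on pairs (edge configuration, colour
configuration) for the lattice with adjacency `adj`. -/
noncomputable def DaCMeasure (adj : V → V → Prop) (p r : ℝ) : Measure Config :=
  base.map (fun x => (edgeCfg adj p x, colourCfg adj p r x))

/-- Monochromatic connectivity: `u` and `v` are joined by a path (for the
adjacency `adj`) all of whose vertices have colour `c`. -/
def MonoConn (adj : V → V → Prop) (ξ : ColourCfg) (c : Bool) (u v : V) : Prop :=
  Relation.ReflTransGen (fun a b => adj a b ∧ ξ a = c ∧ ξ b = c) u v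

/-- The colour-`c` cluster of `v` (for the adjacency `adj`): empty if `v` does
not have colour `c`, and otherwise the maximal `adj`-connected set of
`c`-coloured vertices containing `v`. -/
def monoCluster (adj : V → V → Prop) (ξ : ColourCfg) (c : Bool) (v : V) : Set V :=
  {w | ξ v = c ∧ MonoConn adj ξ c v w}

/-- The origin. -/
def origin : V := (0, 0)

/-- The size (cardinality) of a set of vertices, with values in `ℝ≥0∞`. -/
noncomputable def sizeE (S : Set V) : ℝ≥0∞ := S.encard

/-- The probability, under the DaC measure with edge adjacency `eadj` and
parameters `p, r`, that the origin lies in an infinite colour-`c` cluster for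
the adjacency `cadj`. -/
noncomputable def percProb (eadj cadj : V → V → Prop) (c : Bool) (p r : ℝ) : ℝ≥0∞ :=
  DaCMeasure eadj p r {ω | (monoCluster cadj ω.2 c origin).Infinite}

/-- `Θ(p,r)` for the square lattice: probability that the origin lies in an
infinite black `r`-cluster. -/
noncomputable def thetaSq (p r : ℝ) : ℝ≥0∞ := percProb SqAdj SqAdj true p r

/-- `Θ*(p,s)` for the square lattice: the `ℙ_{p,1-s}`-probability that the
origin lies in an infinite white `*`-cluster. -/
noncomputable def thetaStarSq (p s : ℝ) : ℝ≥0∞ := percProb SqAdj StarAdj false p (1 - s)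

/-- `Θ(p,r)` for the triangular lattice. -/
noncomputable def thetaTri (p r : ℝ) : ℝ≥0∞ := percProb TriAdj TriAdj true p r

/-- The critical colouring density `r_c(p)` of the square lattice DaC model. -/
noncomputable def rcSq (p : ℝ) : ℝ :=
  sSup {r : ℝ | r ∈ Set.Icc (0 : ℝ) 1 ∧ thetaSq p r = 0}

/-- The critical colouring density `r_c*(p)` for white `*`-percolation. -/
noncomputable def rcStarSq (p : ℝ) : ℝ :=
  sSup {s : ℝ | s ∈ Set.Icc (0 : ℝ) 1 ∧ thetaStarSq p s = 0}

/-- The critical colouring density `r_c(p)` of the triangular lattice DaC model. -/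
noncomputable def rcTri (p : ℝ) : ℝ :=
  sSup {r : ℝ | r ∈ Set.Icc (0 : ℝ) 1 ∧ thetaTri p r = 0}

/-! ### Rectangles and crossings -/

/-- The rectangle `S_{n,m} = ([0,n] × [0,m]) ∩ ℤ²`. -/
def Rect (n m : ℕ) : Set V :=
  {v | 0 ≤ v.1 ∧ v.1 ≤ (n : ℤ) ∧ 0 ≤ v.2 ∧ v.2 ≤ (m : ℤ)}

/-- The top side of `S_{n,m}`. -/
def TopSide (n m : ℕ) : Set V := {v | v ∈ Rect n m ∧ v.2 = (m : ℤ)}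

/-- The bottom side of `S_{n,m}`. -/
def BotSide (n m : ℕ) : Set V := {v | v ∈ Rect n m ∧ v.2 = 0}

/-- The left side of `S_{n,m}`. -/
def LeftSide (n m : ℕ) : Set V := {v | v ∈ Rect n m ∧ v.1 = 0}

/-- The right side of `S_{n,m}`. -/
def RightSide (n m : ℕ) : Set V := {v | v ∈ Rect n m ∧ v.1 = (n : ℤ)}

/-- There is a path (for the adjacency `adj`), all of whose vertices lie in the
region `R` and satisfy the predicate `good`, from the set `A` to the set `B`. -/
def HasCrossing (adj : V → V → Prop) (good : V → Prop) (R A B : Set V) : Prop :=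
  ∃ (k : ℕ) (f : Fin (k + 1) → V),
    (∀ i, f i ∈ R ∧ good (f i)) ∧
    (∀ i : Fin k, adj (f i.castSucc) (f i.succ)) ∧
    f 0 ∈ A ∧ f (Fin.last k) ∈ B

/-- `V^b_{n,m}` as a set of colour configurations: there is a black vertical
crossing of `S_{n,m}` (for the adjacency `adj`). -/
def VertBC (adj : V → V → Prop) (n m : ℕ) : Set ColourCfg :=
  {ξ | HasCrossing adj (fun v => ξ v = true) (Rect n m) (TopSide n m) (BotSide n m)}

/-- `V^{w*}_{n,m}` as a set of colour configurations: there is a white vertical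
`*`-crossing of `S_{n,m}`. -/
def VertWStarC (n m : ℕ) : Set ColourCfg :=
  {ξ | HasCrossing StarAdj (fun v => ξ v = false) (Rect n m) (TopSide n m) (BotSide n m)}

/-- `H^{w*}_{n,m}` as a set of colour configurations: there is a white
horizontal `*`-crossing of `S_{n,m}`. -/
def HorizWStarC (n m : ℕ) : Set ColourCfg :=
  {ξ | HasCrossing StarAdj (fun v => ξ v = false) (Rect n m) (LeftSide n m) (RightSide n m)}

/-- The event (set of full configurations) determined by a set of colour
configurations. -/
def colourEvent (C : Set ColourCfg) : Set Config := {ω | ω.2 ∈ C}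

/-! ### Events depending on colours, increasing events, pivotal clusters -/

/-- The event `A` is defined in terms of the colours of the vertices in `W`. -/
def DependsOnColoursIn (A : Set Config) (W : Set V) : Prop :=
  ∀ ω ω' : Config, (∀ v ∈ W, ω.2 v = ω'.2 v) → (ω ∈ A ↔ ω' ∈ A)

/-- The event `A` is increasing (for the partial order comparing colour
configurations pointwise, black = `true` above white = `false`). -/
def IncreasingColourEvent (A : Set Config) : Prop :=
  ∀ ω ω' : Config, (∀ v : V, ω.2 v = true → ω'.2 v = true) → ω ∈ A → ω' ∈ A

/-- Flip the colours of the vertices of `C`. -/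
noncomputable def flipOn (C : Set V) (ξ : ColourCfg) : ColourCfg :=
  fun v => @ite _ (v ∈ C) (Classical.propDecidable _) (!ξ v) (ξ v)

/-- The set `C` is a pivotal `p`-cluster for the event `A` in the
configuration `ω`: `C` is a `p`-cluster of the edge configuration of `ω`, and
flipping the colour of (all the vertices of) `C` changes whether the
configuration belongs to `A`. -/
def IsPivotal (A : Set Config) (ω : Config) (C : Set V) : Prop :=
  (∃ v : V, C = pCluster ω.1 v) ∧ ¬ (ω ∈ A ↔ (ω.1, flipOn C ω.2) ∈ A)

/-- `n(A)`: the number of pivotal `p`-clusters for the event `A`, with values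
in `ℝ≥0∞`. -/
noncomputable def numPivotal (A : Set Config) (ω : Config) : ℝ≥0∞ :=
  {C : Set V | IsPivotal A ω C}.encard

/-! ### Barriers -/

/-- Connectivity in the square lattice avoiding the edges of `E`. -/
def AvoidConn (E : Set (V × V)) (u v : V) : Prop :=
  Relation.ReflTransGen (fun a b => SqAdj a b ∧ (a, b) ∉ E ∧ (b, a) ∉ E) u v

/-- `E` is a barrier: a set of edges of the square lattice whose removal
(keeping the end-vertices) separates `ℤ²` into two or more connected
components, exactly one of which is infinite. -/
def IsBarrier (E : Set (V × V)) : Prop :=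
  (∀ e ∈ E, SqAdj e.1 e.2) ∧
  (∃ v, {w | AvoidConn E v w}.Infinite) ∧
  (∀ v w, {x | AvoidConn E v x}.Infinite → {x | AvoidConn E w x}.Infinite → AvoidConn E v w) ∧
  (∃ v, {w | AvoidConn E v w}.Finite)

/-- The exterior of a barrier: its unique infinite complementary component. -/
def barrierExt (E : Set (V × V)) : Set V := {v | {w | AvoidConn E v w}.Infinite}

/-- The interior of a barrier: the union of the finite complementary components. -/
def barrierInt (E : Set (V × V)) : Set V := {v | {w | AvoidConn E v w}.Finite}

/-- The event `A ⊆ EdgeCfg` is increasing (opening edges preserves it). -/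
def IncreasingEdgeEvent (A : Set EdgeCfg) : Prop :=
  ∀ η η' : EdgeCfg, (∀ a b : V, η a b = true → η' a b = true) → η ∈ A → η' ∈ A

/-- The event `A ⊆ EdgeCfg` depends only on the states of the edges both of
whose endpoints lie in `W`. -/
def DependsOnEdgesIn (A : Set EdgeCfg) (W : Set V) : Prop :=
  ∀ η η' : EdgeCfg, (∀ a b : V, a ∈ W → b ∈ W → η a b = η' a b) → (η ∈ A ↔ η' ∈ A)

/-! ### Translations -/

/-- Translation of configurations by the vector `u`. -/
def shift (u : V) (ω : Config) : Config :=
  (fun a b => ω.1 (a + u) (b + u), fun a => ω.2 (a + u))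

end DaC
namespace DaC

/-! ### Topological lemma -/

section Topo

/-- Sup-norm nearest neighbour steps. -/
def Near (u v : V) : Prop := |u.1 - v.1| ≤ 1 ∧ |u.2 - v.2| ≤ 1

open Classical in
/-- Indicator in `ZMod 2`. -/
noncomputable def ind2 (P : Prop) : ZMod 2 := if P then 1 else 0

lemma ind2_true {P : Prop} (h : P) : ind2 P = 1 := by simp [ind2, h]
lemma ind2_false {P : Prop} (h : ¬ P) : ind2 P = 0 := by simp [ind2, h]
lemma ind2_congr {P Q : Prop} (h : P ↔ Q) : ind2 P = ind2 Q := by rw [propext h]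

lemma two2 (a : ZMod 2) : a + a = 0 := by
  revert a; decide

/-- Crossing of the vertical line between columns `x` and `x+1`, with left end point below `y`. -/
noncomputable def rterm (f : ℕ → V) (v : V) (i : ℕ) : ZMod 2 :=
  ind2 (((f i).1 = v.1 ∧ (f (i+1)).1 = v.1 + 1 ∧ (f i).2 < v.2) ∨
    ((f (i+1)).1 = v.1 ∧ (f i).1 = v.1 + 1 ∧ (f (i+1)).2 < v.2))

noncomputable def lterm (f : ℕ → V) (v : V) (i : ℕ) : ZMod 2 :=
  ind2 (((f i).1 = v.1 ∧ (f (i+1)).1 = v.1 - 1 ∧ (f i).2 < v.2) ∨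
    ((f (i+1)).1 = v.1 ∧ (f i).1 = v.1 - 1 ∧ (f (i+1)).2 < v.2))

noncomputable def Rpar (f : ℕ → V) (k : ℕ) (x2 : ℤ) (v : V) : ZMod 2 :=
  (∑ i ∈ Finset.range k, rterm f v i) + ind2 (v.1 = x2 ∧ (f k).2 < v.2)

noncomputable def Lpar (f : ℕ → V) (k : ℕ) (x1 : ℤ) (v : V) : ZMod 2 :=
  (∑ i ∈ Finset.range k, lterm f v i) + ind2 (v.1 = x1 ∧ (f 0).2 < v.2)

variable {f : ℕ → V} {k : ℕ} {x1 x2 : ℤ}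

lemma tele2 (A : ℕ → ZMod 2) (k : ℕ) :
    ∑ i ∈ Finset.range k, (A i + A (i+1)) = A 0 + A k := by
  induction k with
  | zero => simp [two2]
  | succ n ih =>
    rw [Finset.sum_range_succ, ih]
    have := two2 (A n)
    linear_combination this

lemma near_cases {u v : V} (h : Near u v) :
    (u.1 = v.1 ∨ u.1 = v.1 + 1 ∨ u.1 = v.1 - 1) ∧ u.2 - v.2 ≤ 1 ∧ v.2 - u.2 ≤ 1 := by
  obtain ⟨h1, h2⟩ := h
  rw [abs_le] at h1 h2
  omega

lemma par_eq (hs : ∀ i < k, Near (f i) (f (i+1))) (h0 : (f 0).1 = x1) (hk : (f k).1 = x2)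
    (v : V) (hv : ∀ i ≤ k, f i ≠ v) : Rpar f k x2 v = Lpar f k x1 v := by
  have key : ∀ i < k, ind2 ((f i).1 = v.1 ∧ (f i).2 < v.2)
      + ind2 ((f (i+1)).1 = v.1 ∧ (f (i+1)).2 < v.2) = rterm f v i + lterm f v i := by
    intro i hi
    have h1 := near_cases (hs i hi)
    have n1 : ¬ ((f i).1 = v.1 ∧ (f i).2 = v.2) := fun h => hv i hi.le (Prod.ext h.1 h.2)
    have n2 : ¬ ((f (i+1)).1 = v.1 ∧ (f (i+1)).2 = v.2) :=
      fun h => hv (i+1) hi (Prod.ext h.1 h.2)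
    unfold rterm lterm ind2
    generalize (f i).1 = a at *
    generalize (f i).2 = b at *
    generalize (f (i+1)).1 = c at *
    generalize (f (i+1)).2 = d at *
    generalize v.1 = x at *
    generalize v.2 = y at *
    split_ifs <;> first | rfl | (exfalso; omega)
  have := tele2 (fun i => ind2 ((f i).1 = v.1 ∧ (f i).2 < v.2)) k
  rw [Finset.sum_congr rfl (fun i hi => key i (Finset.mem_range.1 hi)),
    Finset.sum_add_distrib] at this
  unfold Rpar Lpar
  rw [ind2_congr (show (v.1 = x2 ∧ (f k).2 < v.2) ↔ ((f k).1 = v.1 ∧ (f k).2 < v.2) by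
      rw [hk]; exact ⟨fun h => ⟨h.1.symm, h.2⟩, fun h => ⟨h.1.symm, h.2⟩⟩),
    ind2_congr (show (v.1 = x1 ∧ (f 0).2 < v.2) ↔ ((f 0).1 = v.1 ∧ (f 0).2 < v.2) by
      rw [h0]; exact ⟨fun h => ⟨h.1.symm, h.2⟩, fun h => ⟨h.1.symm, h.2⟩⟩)]
  have e1 := two2 (∑ i ∈ Finset.range k, lterm f v i)
  have e2 := two2 (ind2 ((f k).1 = v.1 ∧ (f k).2 < v.2))
  linear_combination this - e1 + e2

lemma par_vert (v : V) (hv : ∀ i ≤ k, f i ≠ v) (hk : (f k).1 = x2) :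
    Rpar f k x2 (v.1, v.2 + 1) = Rpar f k x2 v := by
  have n1 : ∀ i ≤ k, ¬ ((f i).1 = v.1 ∧ (f i).2 = v.2) :=
    fun i hi h => hv i hi (Prod.ext h.1 h.2)
  unfold Rpar
  congr 1
  · apply Finset.sum_congr rfl
    intro i hi
    have hi := Finset.mem_range.1 hi
    have a1 := n1 i hi.le
    have a2 := n1 (i+1) hi
    apply ind2_congr
    simp only
    omega
  · apply ind2_congr
    have := n1 k le_rfl
    simp only
    omega

lemma par_horiz (hs : ∀ i < k, Near (f i) (f (i+1))) (h0 : (f 0).1 = x1) (hk : (f k).1 = x2)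
    (v : V) (hv1 : x1 ≤ v.1) (hv2 : v.1 < x2)
    (hv : ∀ i ≤ k, f i ≠ v) (hv' : ∀ i ≤ k, f i ≠ (v.1 + 1, v.2)) :
    Rpar f k x2 (v.1 + 1, v.2) = Rpar f k x2 v := by
  rw [par_eq hs h0 hk _ hv']
  have n1 : ∀ i ≤ k, ¬ ((f i).1 = v.1 ∧ (f i).2 = v.2) :=
    fun i hi h => hv i hi (Prod.ext h.1 h.2)
  have n2 : ∀ i ≤ k, ¬ ((f i).1 = v.1 + 1 ∧ (f i).2 = v.2) :=
    fun i hi h => hv' i hi (Prod.ext h.1 h.2)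
  unfold Rpar Lpar
  congr 1
  · apply Finset.sum_congr rfl
    intro i hi
    have hi := Finset.mem_range.1 hi
    have a1 := n1 i hi.le
    have a2 := n1 (i+1) hi
    have a3 := n2 i hi.le
    have a4 := n2 (i+1) hi
    have := near_cases (hs i hi)
    apply ind2_congr
    simp only
    omega
  · rw [ind2_false, ind2_false]
    · omega
    · simp only
      omega

lemma par_low (v : V) (hv : ∀ i ≤ k, v.2 ≤ (f i).2) : Rpar f k x2 v = 0 := by
  unfold Rpar
  rw [Finset.sum_eq_zero, ind2_false]
  · simp
  · have := hv k le_rfl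
    omega
  · intro i hi
    have hi := Finset.mem_range.1 hi
    have a1 := hv i hi.le
    have a2 := hv (i+1) hi
    apply ind2_false
    omega

lemma par_left (hs : ∀ i < k, Near (f i) (f (i+1))) (h0 : (f 0).1 = x1) (hk : (f k).1 = x2)
    (hx : ∀ i ≤ k, x1 ≤ (f i).1)
    (v : V) (hv : ∀ i ≤ k, f i ≠ v) (hv1 : v.1 = x1) (hv2 : v.2 < (f 0).2) :
    Rpar f k x2 v = 0 := by
  rw [par_eq hs h0 hk v hv]
  unfold Lpar
  rw [Finset.sum_eq_zero, ind2_false]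
  · simp
  · omega
  · intro i hi
    have hi := Finset.mem_range.1 hi
    have a1 := hx i hi.le
    have a2 := hx (i+1) hi
    apply ind2_false
    omega

lemma par_high (hs : ∀ i < k, Near (f i) (f (i+1))) (h0 : (f 0).1 = x1) (hk : (f k).1 = x2)
    (v : V) (hv1 : x1 ≤ v.1) (hv2 : v.1 ≤ x2) (hv : ∀ i ≤ k, f i ≠ v)
    (hh : ∀ i ≤ k, (f i).2 ≤ v.2) :
    Rpar f k x2 v = 1 := by
  have n1 : ∀ i ≤ k, ¬ ((f i).1 = v.1 ∧ (f i).2 = v.2) :=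
    fun i hi h => hv i hi (Prod.ext h.1 h.2)
  have key : ∀ i < k, ind2 ((f i).1 ≤ v.1) + ind2 ((f (i+1)).1 ≤ v.1) = rterm f v i := by
    intro i hi
    have h1 := near_cases (hs i hi)
    have a1 := n1 i hi.le
    have a2 := n1 (i+1) hi
    have a3 := hh i hi.le
    have a4 := hh (i+1) hi
    unfold rterm ind2
    split_ifs <;> first | rfl | (exfalso; omega)
  have := tele2 (fun i => ind2 ((f i).1 ≤ v.1)) k
  rw [Finset.sum_congr rfl (fun i hi => key i (Finset.mem_range.1 hi))] at this
  unfold Rpar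
  rw [this]
  rw [ind2_true (show (f 0).1 ≤ v.1 by omega)]
  rw [ind2_congr (show (v.1 = x2 ∧ (f k).2 < v.2) ↔ (f k).1 ≤ v.1 by
    have := n1 k le_rfl
    have := hh k le_rfl
    omega)]
  rw [add_assoc, two2, add_zero]

/-- Planarity. -/
lemma topo {g : ℕ → V} {l : ℕ}
    (hs : ∀ i < k, Near (f i) (f (i+1))) (h0 : (f 0).1 = x1) (hk : (f k).1 = x2)
    (hx : ∀ i ≤ k, x1 ≤ (f i).1)
    (hg : ∀ j < l, Near (g j) (g (j+1))) (hgx : ∀ j ≤ l, x1 ≤ (g j).1 ∧ (g j).1 ≤ x2)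
    (hst : (∀ i ≤ k, (g 0).2 ≤ (f i).2) ∨ ((g 0).1 = x1 ∧ (g 0).2 < (f 0).2))
    (hen : ∀ i ≤ k, (f i).2 ≤ (g l).2) :
    ∃ i ≤ k, ∃ j ≤ l, f i = g j ∨
      (j < l ∧ (g j).1 ≠ (g (j+1)).1 ∧ (g j).2 ≠ (g (j+1)).2 ∧ f i = ((g j).1, (g (j+1)).2)) := by
  by_contra hcon
  push Not at hcon
  have hne : ∀ j ≤ l, ∀ i ≤ k, f i ≠ g j := fun j hj i hi => (hcon i hi j hj).1
  have vstep : ∀ v w : V, v.1 = w.1 → |v.2 - w.2| ≤ 1 → (∀ i ≤ k, f i ≠ v) →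
      (∀ i ≤ k, f i ≠ w) → Rpar f k x2 v = Rpar f k x2 w := by
    intro v w h1 h2 hv hw
    rw [abs_le] at h2
    have : v.2 = w.2 ∨ v.2 = w.2 + 1 ∨ w.2 = v.2 + 1 := by omega
    rcases this with h | h | h
    · rw [show v = w from Prod.ext h1 h]
    · have := par_vert w hw hk
      rw [← this]; congr 1; exact Prod.ext h1 h
    · have := par_vert v hv hk
      rw [← this]; congr 1; exact Prod.ext h1 h.symm
  have hstep : ∀ v w : V, v.2 = w.2 → |v.1 - w.1| ≤ 1 → (x1 ≤ v.1 ∧ v.1 ≤ x2) →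
      (x1 ≤ w.1 ∧ w.1 ≤ x2) → (∀ i ≤ k, f i ≠ v) →
      (∀ i ≤ k, f i ≠ w) → Rpar f k x2 v = Rpar f k x2 w := by
    intro v w h1 h2 hv hw nv nw
    rw [abs_le] at h2
    have : v.1 = w.1 ∨ v.1 = w.1 + 1 ∨ w.1 = v.1 + 1 := by omega
    rcases this with h | h | h
    · rw [show v = w from Prod.ext h h1]
    · have e : v = (w.1+1, w.2) := Prod.ext h h1
      rw [e] at nv ⊢
      exact par_horiz hs h0 hk w hw.1 (by omega) nw nv
    · have e : w = (v.1+1, v.2) := Prod.ext h h1.symm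
      rw [e] at nw ⊢
      exact (par_horiz hs h0 hk v hv.1 (by omega) nv nw).symm
  have hconst : ∀ j ≤ l, Rpar f k x2 (g j) = 0 := by
    intro j
    induction j with
    | zero =>
      intro _
      rcases hst with h | h
      · exact par_low _ h
      · exact par_left hs h0 hk hx _ (hne 0 (Nat.zero_le _)) h.1 h.2
    | succ j ih =>
      intro hj
      have hj' : j < l := hj
      rw [← ih hj'.le]
      have hn := hg j hj'
      have c1 := hgx j hj'.le
      have c2 := hgx (j+1) hj
      have m1 := hne j hj'.le
      have m2 := hne (j+1) hj
      by_cases e1 : (g j).1 = (g (j+1)).1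
      · exact (vstep _ _ e1 hn.2 m1 m2).symm
      by_cases e2 : (g j).2 = (g (j+1)).2
      · exact (hstep _ _ e2 hn.1 c1 c2 m1 m2).symm
      have m3 : ∀ i ≤ k, f i ≠ ((g j).1, (g (j+1)).2) :=
        fun i hi => (hcon i hi j hj'.le).2 hj' e1 e2
      rw [vstep (g j) ((g j).1, (g (j+1)).2) rfl hn.2 m1 m3]
      exact (hstep ((g j).1, (g (j+1)).2) (g (j+1)) rfl hn.1 c1 c2 m3 m2).symm
  have := hconst l le_rfl
  rw [par_high hs h0 hk (g l) (hgx l le_rfl).1 (hgx l le_rfl).2 (hne l le_rfl) hen] at this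
  exact one_ne_zero this

end Topo

/-! ### One dimensional extraction -/

lemma extract_up (u : ℕ → ℤ) (i j : ℕ) (hij : i ≤ j) (α β : ℤ) (hαβ : α ≤ β)
    (hu : ∀ m, i ≤ m → m < j → |u m - u (m+1)| ≤ 1) (hi : u i ≤ α) (hj : β ≤ u j) :
    ∃ i' j', i ≤ i' ∧ i' ≤ j' ∧ j' ≤ j ∧ u i' = α ∧ u j' = β ∧
      ∀ m, i' ≤ m → m ≤ j' → α ≤ u m ∧ u m ≤ β := by
  classical
  have hu' : ∀ m, i ≤ m → m < j → u m - u (m+1) ≤ 1 ∧ u (m+1) - u m ≤ 1 := by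
    intro m h1 h2
    have := hu m h1 h2
    rw [abs_le] at this
    omega
  have ex : ∃ m, i ≤ m ∧ β ≤ u m := ⟨j, hij, hj⟩
  let j' := Nat.find ex
  have hj1 : i ≤ j' ∧ β ≤ u j' := Nat.find_spec ex
  have hj2 : j' ≤ j := Nat.find_min' ex ⟨hij, hj⟩
  have hj3 : ∀ m, i ≤ m → m < j' → u m < β := by
    intro m h1 h2
    have := Nat.find_min ex h2
    push Not at this
    exact this h1
  have hjβ : u j' = β := by
    rcases Nat.eq_or_lt_of_le hj1.1 with h | h
    · rw [← h] at hj1 ⊢; omega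
    · have a := hj3 (j'-1) (by omega) (by omega)
      have b := hu' (j'-1) (by omega) (by omega)
      rw [show j' - 1 + 1 = j' by omega] at b
      omega
  let i' := Nat.findGreatest (fun m => i ≤ m ∧ u m ≤ α) j'
  have hi1 : i ≤ i' ∧ u i' ≤ α :=
    Nat.findGreatest_spec (P := fun m => i ≤ m ∧ u m ≤ α) (m := i) hj1.1 ⟨le_rfl, hi⟩
  have hi2 : i' ≤ j' := Nat.findGreatest_le _
  have hi3 : ∀ m, i' < m → m ≤ j' → α < u m := by
    intro m h1 h2
    have := Nat.findGreatest_is_greatest h1 h2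
    push Not at this
    exact this (by omega)
  have hiα : u i' = α := by
    rcases Nat.eq_or_lt_of_le hi2 with h | h
    · rw [h] at hi1 ⊢; omega
    · have a := hi3 (i'+1) (by omega) (by omega)
      have b := hu' i' hi1.1 (by omega)
      omega
  refine ⟨i', j', hi1.1, hi2, hj2, hiα, hjβ, fun m h1 h2 => ⟨?_, ?_⟩⟩
  · rcases Nat.eq_or_lt_of_le h1 with h | h
    · rw [← h, hiα]
    · exact (hi3 m h h2).le
  · rcases Nat.eq_or_lt_of_le h2 with h | h
    · rw [h, hjβ]
    · exact (hj3 m (by omega) h).le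

lemma extract_down (u : ℕ → ℤ) (i j : ℕ) (hij : i ≤ j) (α β : ℤ) (hαβ : α ≤ β)
    (hu : ∀ m, i ≤ m → m < j → |u m - u (m+1)| ≤ 1) (hi : β ≤ u i) (hj : u j ≤ α) :
    ∃ i' j', i ≤ i' ∧ i' ≤ j' ∧ j' ≤ j ∧ u i' = β ∧ u j' = α ∧
      ∀ m, i' ≤ m → m ≤ j' → α ≤ u m ∧ u m ≤ β := by
  obtain ⟨i', j', h1, h2, h3, h4, h5, h6⟩ := extract_up (fun m => - u m) i j hij (-β) (-α)
    (by omega) (by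
      intro m a b
      have := hu m a b
      rw [abs_le] at this ⊢
      omega) (by omega) (by omega)
  refine ⟨i', j', h1, h2, h3, by omega, by omega, ?_⟩
  intro m a b
  have := h6 m a b
  omega

end DaC

namespace DaC

/-! ### Abstract crossing models -/

/-- Consecutive points of `f` on `[i,j]` are related. -/
def Steps (E : V → V → Prop) (f : ℕ → V) (i j : ℕ) : Prop :=
  ∀ m, i ≤ m → m < j → E (f m) (f (m+1))

/-- Event that there is a path in `R` from `A` to `B` with fewer than `ℓ` steps. -/
def EvL {Ω : Type*} (E : Ω → V → V → Prop) (R A B : Set V) (ℓ : ℕ∞) : Set Ω :=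
  {ω | ∃ (f : ℕ → V) (k : ℕ), (∀ i ≤ k, f i ∈ R) ∧ Steps (E ω) f 0 k ∧ f 0 ∈ A ∧ f k ∈ B ∧
    (k : ℕ∞) < ℓ}

def box (x1 x2 y1 y2 : ℤ) : Set V := {v | (x1 ≤ v.1 ∧ v.1 ≤ x2) ∧ y1 ≤ v.2 ∧ v.2 ≤ y2}

lemma box_finite (x1 x2 y1 y2 : ℤ) : (box x1 x2 y1 y2).Finite := by
  apply Set.Finite.subset ((Set.finite_Icc x1 x2).prod (Set.finite_Icc y1 y2))
  rintro v ⟨h1, h2⟩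
  exact ⟨h1, h2⟩

def IsIso (σ : V ≃ V) : Prop :=
  ∀ u v : V, ((σ u).1 - (σ v).1)^2 + ((σ u).2 - (σ v).2)^2 = (u.1 - v.1)^2 + (u.2-v.2)^2

structure Model (Ω : Type*) where
  P : Set Ω → ℝ
  E : Ω → V → V → Prop
  P_nonneg : ∀ A, 0 ≤ P A
  P_mono : ∀ {A B}, A ⊆ B → P A ≤ P B
  P_union : ∀ A B, P (A ∪ B) ≤ P A + P B
  P_empty : P ∅ = 0
  P_univ : P Set.univ = 1
  E_symm : ∀ ω u v, E ω u v → E ω v u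
  E_near : ∀ ω u v, E ω u v → Near u v
  E_diag : ∀ ω u v w z, E ω u v → u.1 ≠ v.1 → u.2 ≠ v.2 → w = (u.1, v.2) → E ω w z → E ω u w
  Inc : Set Ω → Prop
  inc_univ : Inc Set.univ
  inc_inter : ∀ {A B}, Inc A → Inc B → Inc (A ∩ B)
  fkg : ∀ {A B}, Inc A → Inc B → P A * P B ≤ P (A ∩ B)
  inc_ev : ∀ R A B, R.Finite → Inc (EvL E R A B ⊤)
  symm : ∀ σ : V ≃ V, IsIso σ → ∀ R A B ℓ, R.Finite →
    P (EvL E (σ ⁻¹' R) (σ ⁻¹' A) (σ ⁻¹' B) ℓ) = P (EvL E R A B ℓ)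

namespace Model

variable {Ω : Type*} (X : Model Ω) {ω : Ω}

def Hc (x1 x2 y1 y2 : ℤ) (ℓ : ℕ∞) : Set Ω :=
  EvL X.E (box x1 x2 y1 y2) {v | v.1 = x1} {v | v.1 = x2} ℓ
def Vc (x1 x2 y1 y2 : ℤ) (ℓ : ℕ∞) : Set Ω :=
  EvL X.E (box x1 x2 y1 y2) {v | v.2 = y1} {v | v.2 = y2} ℓ
/-- Horizontal crossing probability of `[0,a] × [0,b]`. -/
def h (a b : ℤ) : ℝ := X.P (X.Hc 0 a 0 b ⊤)

lemma h_nonneg (a b : ℤ) : 0 ≤ X.h a b := X.P_nonneg _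

lemma P_biUnion {ι : Type*} (s : Finset ι) (A : ι → Set Ω) :
    X.P (⋃ i ∈ s, A i) ≤ ∑ i ∈ s, X.P (A i) := by
  classical
  induction s using Finset.induction_on with
  | empty => simp [X.P_empty]
  | insert a s ha ih =>
    rw [Finset.set_biUnion_insert, Finset.sum_insert ha]
    exact (X.P_union _ _).trans (by linarith)

lemma fkg_finset {ι : Type*} (s : Finset ι) (A : ι → Set Ω) (hA : ∀ i, X.Inc (A i)) :
    X.Inc (⋂ i ∈ s, A i) ∧ ∏ i ∈ s, X.P (A i) ≤ X.P (⋂ i ∈ s, A i) := by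
  classical
  induction s using Finset.induction_on with
  | empty => simp [X.P_univ, X.inc_univ]
  | insert a s ha ih =>
    rw [Finset.set_biInter_insert, Finset.prod_insert ha]
    refine ⟨X.inc_inter (hA a) ih.1, le_trans ?_ (X.fkg (hA a) ih.1)⟩
    exact mul_le_mul_of_nonneg_left ih.2 (X.P_nonneg _)

/-- Isometries. -/
def trans (a b : ℤ) : V ≃ V where
  toFun v := (v.1 + a, v.2 + b)
  invFun v := (v.1 - a, v.2 - b)
  left_inv v := by simp
  right_inv v := by simp
def swp : V ≃ V where
  toFun v := (v.2, v.1)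
  invFun v := (v.2, v.1)
  left_inv v := by simp
  right_inv v := by simp
def refl2 : V ≃ V where
  toFun v := (v.1, -v.2)
  invFun v := (v.1, -v.2)
  left_inv v := by simp
  right_inv v := by simp

lemma iso_trans (a b : ℤ) : IsIso (trans a b) := by
  intro u v; simp [trans]
lemma iso_swp : IsIso swp := by
  intro u v; simp [swp]; ring
lemma iso_refl2 : IsIso refl2 := by
  intro u v; simp [refl2]; ring

lemma mem_EvL {R A B : Set V} {ℓ : ℕ∞} {f : ℕ → V} {i j : ℕ} (hij : i ≤ j)
    (hs : Steps (X.E ω) f i j)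
    (hR : ∀ m, i ≤ m → m ≤ j → f m ∈ R) (hA : f i ∈ A) (hB : f j ∈ B)
    (hℓ : ((j - i : ℕ) : ℕ∞) < ℓ) : ω ∈ EvL X.E R A B ℓ := by
  refine ⟨fun m => f (i + m), j - i, fun m hm => hR _ (by omega) (by omega), ?_, by simpa using hA,
    ?_, hℓ⟩
  · intro m _ hm
    have := hs (i+m) (by omega) (by omega)
    simpa [add_assoc] using this
  · simpa [hij] using hB

lemma mem_EvL_rev {R A B : Set V} {ℓ : ℕ∞} {f : ℕ → V} {i j : ℕ} (hij : i ≤ j)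
    (hs : Steps (X.E ω) f i j)
    (hR : ∀ m, i ≤ m → m ≤ j → f m ∈ R) (hA : f j ∈ A) (hB : f i ∈ B)
    (hℓ : ((j - i : ℕ) : ℕ∞) < ℓ) : ω ∈ EvL X.E R A B ℓ := by
  refine ⟨fun m => f (j - m), j - i, fun m hm => hR _ (by omega) (by omega), ?_, by simpa using hA,
    ?_, hℓ⟩
  · intro m _ hm
    have := hs (j-m-1) (by omega) (by omega)
    rw [show j - m - 1 + 1 = j - m by omega] at this
    exact X.E_symm _ _ _ this
  · simpa [show j - (j - i) = i by omega] using hB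

lemma EvL_comm (R A B : Set V) (ℓ : ℕ∞) : EvL X.E R A B ℓ = EvL X.E R B A ℓ := by
  ext ω
  constructor
  · rintro ⟨f, k, h1, h2, h3, h4, h5⟩
    exact X.mem_EvL_rev (Nat.zero_le k) h2 (fun m _ hm => h1 m hm) h4 h3 (by simpa using h5)
  · rintro ⟨f, k, h1, h2, h3, h4, h5⟩
    exact X.mem_EvL_rev (Nat.zero_le k) h2 (fun m _ hm => h1 m hm) h4 h3 (by simpa using h5)

lemma EvL_mono {R R' A A' B B' : Set V} {ℓ ℓ' : ℕ∞} (hR : R ⊆ R') (hA : A ⊆ A') (hB : B ⊆ B')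
    (hℓ : ℓ ≤ ℓ') : EvL X.E R A B ℓ ⊆ EvL X.E R' A' B' ℓ' := by
  rintro ω ⟨f, k, h1, h2, h3, h4, h5⟩
  exact ⟨f, k, fun i hi => hR (h1 i hi), h2, hA h3, hB h4, h5.trans_le hℓ⟩

lemma near1 {f : ℕ → V} {i j : ℕ} (hs : Steps (X.E ω) f i j) :
    ∀ m, i ≤ m → m < j → |(f m).1 - (f (m+1)).1| ≤ 1 := fun m h1 h2 => (X.E_near _ _ _ (hs m h1 h2)).1
lemma near2 {f : ℕ → V} {i j : ℕ} (hs : Steps (X.E ω) f i j) :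
    ∀ m, i ≤ m → m < j → |(f m).2 - (f (m+1)).2| ≤ 1 := fun m h1 h2 => (X.E_near _ _ _ (hs m h1 h2)).2

lemma _root_.DaC.Steps.sub {E : V → V → Prop} {f : ℕ → V} {i j i' j' : ℕ} (hs : Steps E f i j)
    (h1 : i ≤ i') (h2 : j' ≤ j) : Steps E f i' j' :=
  fun m a b => hs m (h1.trans a) (b.trans_le h2)

lemma hcross {f : ℕ → V} {i j : ℕ} {x1 x2 y1 y2 : ℤ} {ℓ : ℕ∞} (hij : i ≤ j)
    (hs : Steps (X.E ω) f i j) (hx : x1 ≤ x2)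
    (hy : ∀ m, i ≤ m → m ≤ j → y1 ≤ (f m).2 ∧ (f m).2 ≤ y2)
    (h : ((f i).1 ≤ x1 ∧ x2 ≤ (f j).1) ∨ (x2 ≤ (f i).1 ∧ (f j).1 ≤ x1))
    (hℓ : ((j - i : ℕ) : ℕ∞) < ℓ) : ω ∈ X.Hc x1 x2 y1 y2 ℓ := by
  rcases h with h | h
  · obtain ⟨i', j', h1, h2, h3, h4, h5, h6⟩ := extract_up (fun m => (f m).1) i j hij x1 x2 hx
      (X.near1 hs) h.1 h.2
    refine X.mem_EvL h2 (hs.sub h1 h3) (fun m a b => ⟨h6 m a b, hy m (by omega) (by omega)⟩) h4 h5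
      (lt_of_le_of_lt ?_ hℓ)
    exact_mod_cast (by omega : j' - i' ≤ j - i)
  · obtain ⟨i', j', h1, h2, h3, h4, h5, h6⟩ := extract_down (fun m => (f m).1) i j hij x1 x2 hx
      (X.near1 hs) h.1 h.2
    refine X.mem_EvL_rev h2 (hs.sub h1 h3)
      (fun m a b => ⟨h6 m a b, hy m (by omega) (by omega)⟩) h5 h4
      (lt_of_le_of_lt ?_ hℓ)
    exact_mod_cast (by omega : j' - i' ≤ j - i)

lemma vcross {f : ℕ → V} {i j : ℕ} {x1 x2 y1 y2 : ℤ} {ℓ : ℕ∞} (hij : i ≤ j)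
    (hs : Steps (X.E ω) f i j) (hy : y1 ≤ y2)
    (hx : ∀ m, i ≤ m → m ≤ j → x1 ≤ (f m).1 ∧ (f m).1 ≤ x2)
    (h : ((f i).2 ≤ y1 ∧ y2 ≤ (f j).2) ∨ (y2 ≤ (f i).2 ∧ (f j).2 ≤ y1))
    (hℓ : ((j - i : ℕ) : ℕ∞) < ℓ) : ω ∈ X.Vc x1 x2 y1 y2 ℓ := by
  rcases h with h | h
  · obtain ⟨i', j', h1, h2, h3, h4, h5, h6⟩ := extract_up (fun m => (f m).2) i j hij y1 y2 hy
      (X.near2 hs) h.1 h.2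
    refine X.mem_EvL h2 (hs.sub h1 h3) (fun m a b => ⟨hx m (by omega) (by omega), h6 m a b⟩) h4 h5
      (lt_of_le_of_lt ?_ hℓ)
    exact_mod_cast (by omega : j' - i' ≤ j - i)
  · obtain ⟨i', j', h1, h2, h3, h4, h5, h6⟩ := extract_down (fun m => (f m).2) i j hij y1 y2 hy
      (X.near2 hs) h.1 h.2
    refine X.mem_EvL_rev h2 (hs.sub h1 h3)
      (fun m a b => ⟨hx m (by omega) (by omega), h6 m a b⟩) h5 h4
      (lt_of_le_of_lt ?_ hℓ)
    exact_mod_cast (by omega : j' - i' ≤ j - i)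

lemma P_Hc (x1 x2 y1 y2 : ℤ) (ℓ : ℕ∞) :
    X.P (X.Hc x1 x2 y1 y2 ℓ) = X.P (X.Hc 0 (x2 - x1) 0 (y2 - y1) ℓ) := by
  rw [Hc, ← X.symm (trans x1 y1) (iso_trans _ _) _ _ _ _ (box_finite _ _ _ _)]
  congr 1
  unfold Hc
  congr 1
  · ext v; simp only [box, trans, Set.mem_preimage, Set.mem_ofPred_eq, Equiv.coe_fn_mk]; omega
  · ext v; simp only [trans, Set.mem_preimage, Set.mem_ofPred_eq, Equiv.coe_fn_mk]; omega
  · ext v; simp only [trans, Set.mem_preimage, Set.mem_ofPred_eq, Equiv.coe_fn_mk]; omega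

lemma P_Vc (x1 x2 y1 y2 : ℤ) (ℓ : ℕ∞) :
    X.P (X.Vc x1 x2 y1 y2 ℓ) = X.P (X.Hc 0 (y2 - y1) 0 (x2 - x1) ℓ) := by
  rw [← X.P_Hc y1 y2 x1 x2]
  rw [Vc, ← X.symm swp iso_swp _ _ _ _ (box_finite _ _ _ _)]
  congr 1
  unfold Hc
  congr 1
  · ext v; simp only [box, swp, Set.mem_preimage, Set.mem_ofPred_eq, Equiv.coe_fn_mk]; omega

lemma P_Hc' (x1 x2 y1 y2 : ℤ) : X.P (X.Hc x1 x2 y1 y2 ⊤) = X.h (x2 - x1) (y2 - y1) :=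
  X.P_Hc _ _ _ _ _
lemma P_Vc' (x1 x2 y1 y2 : ℤ) : X.P (X.Vc x1 x2 y1 y2 ⊤) = X.h (y2 - y1) (x2 - x1) :=
  X.P_Vc _ _ _ _ _

lemma h_mono {a a' b b' : ℤ} (h0 : 0 ≤ a) (ha : a ≤ a') (hb : b' ≤ b) : X.h a' b' ≤ X.h a b := by
  apply X.P_mono
  rintro ω ⟨f, k, h1, h2, h3, h4, h5⟩
  refine X.hcross (Nat.zero_le k) h2 h0 (fun m _ hm => ⟨(h1 m hm).2.1, (h1 m hm).2.2.trans hb⟩) ?_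
    (by simp)
  left
  simp only [Set.mem_ofPred_eq] at h3 h4
  omega

/-- Connectivity inside a region. -/
def Jn (ω : Ω) (R : Set V) (u v : V) : Prop :=
  Relation.ReflTransGen (fun a b => X.E ω a b ∧ a ∈ R ∧ b ∈ R) u v

lemma Jn.symm {R : Set V} {u v : V} (h : X.Jn ω R u v) : X.Jn ω R v u := by
  unfold Jn at *
  induction h with
  | refl => exact Relation.ReflTransGen.refl
  | tail _ h ih => exact Relation.ReflTransGen.head ⟨X.E_symm _ _ _ h.1, h.2.2, h.2.1⟩ ih

lemma Jn.trans {R : Set V} {u v w : V} (h : X.Jn ω R u v) (h' : X.Jn ω R v w) : X.Jn ω R u w :=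
  Relation.ReflTransGen.trans h h'

lemma Jn_steps' {R : Set V} {f : ℕ → V} {i j : ℕ} (hij : i ≤ j) (hs : Steps (X.E ω) f i j)
    (hR : ∀ m, i ≤ m → m ≤ j → f m ∈ R) : X.Jn ω R (f i) (f j) := by
  induction j, hij using Nat.le_induction with
  | base => exact Relation.ReflTransGen.refl
  | succ j hj ih =>
    refine Relation.ReflTransGen.tail (ih (hs.sub le_rfl (by omega))
      (fun m a b => hR m a (by omega))) ⟨hs j hj (by omega), hR _ (by omega) (by omega),
        hR _ (by omega) (by omega)⟩

lemma Jn_steps {R : Set V} {f : ℕ → V} {i j : ℕ} (hs : Steps (X.E ω) f i j)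
    (hR : ∀ m, i ≤ m → m ≤ j → f m ∈ R) {m n : ℕ} (hm : i ≤ m ∧ m ≤ j) (hn : i ≤ n ∧ n ≤ j) :
    X.Jn ω R (f m) (f n) := by
  rcases le_total m n with h | h
  · exact X.Jn_steps' h (hs.sub hm.1 hn.2) (fun m' a b => hR m' (by omega) (by omega))
  · exact Jn.symm X (X.Jn_steps' h (hs.sub hn.1 hm.2) (fun m' a b => hR m' (by omega) (by omega)))

lemma Jn_path {R : Set V} {u v : V} (h : X.Jn ω R u v) (hu : u ∈ R) :
    ∃ (f : ℕ → V) (k : ℕ), f 0 = u ∧ f k = v ∧ (∀ i ≤ k, f i ∈ R) ∧ Steps (X.E ω) f 0 k := by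
  unfold Jn at h
  induction h with
  | refl => exact ⟨fun _ => u, 0, rfl, rfl, fun _ _ => hu, fun m _ h => absurd h (by omega)⟩
  | @tail b c _ h ih =>
    obtain ⟨f, k, h0, hk, hR, hs⟩ := ih
    refine ⟨fun i => if i ≤ k then f i else c, k+1, by simp [h0], by simp, ?_, ?_⟩
    · intro i hi
      by_cases hi' : i ≤ k
      · simp [hi', hR]
      · simp [hi', h.2.2]
    · intro m _ hm
      rcases Nat.lt_or_ge m k with h' | h'
      · simp only [if_pos h'.le, if_pos (show m + 1 ≤ k from h')]
        exact hs m (by omega) h'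
      · have : m = k := by omega
        subst this
        simp [hk, h.1]

/-- Two crossing paths meet. -/
lemma meet {f g : ℕ → V} {i j p q : ℕ} {x1 x2 : ℤ} (hij : i ≤ j) (hpq : p ≤ q) (hx : x1 < x2)
    (hf : Steps (X.E ω) f i j) (hg : Steps (X.E ω) g p q)
    (hfi : (f i).1 = x1) (hfj : (f j).1 = x2) (hfx : ∀ m, i ≤ m → m ≤ j → x1 ≤ (f m).1)
    (hgx : ∀ m, p ≤ m → m ≤ q → x1 ≤ (g m).1 ∧ (g m).1 ≤ x2)
    (hst : (∀ m, i ≤ m → m ≤ j → (g p).2 ≤ (f m).2) ∨ ((g p).1 = x1 ∧ (g p).2 < (f i).2))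
    (hen : ∀ m, i ≤ m → m ≤ j → (f m).2 ≤ (g q).2) :
    ∃ m n, (i ≤ m ∧ m ≤ j) ∧ (p ≤ n ∧ n ≤ q) ∧ (f m = g n ∨ X.E ω (g n) (f m)) := by
  obtain ⟨a, ha, b, hb, hab⟩ := topo (f := fun m => f (i+m)) (g := fun m => g (p+m))
    (k := j - i) (l := q - p) (x1 := x1) (x2 := x2)
    (fun m hm => X.E_near _ _ _ (hf (i+m) (by omega) (by omega))) hfi
    (by simpa [hij] using hfj) (fun m hm => hfx _ (by omega) (by omega))
    (fun m hm => X.E_near _ _ _ (hg (p+m) (by omega) (by omega)))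
    (fun m hm => hgx _ (by omega) (by omega))
    (by
      rcases hst with h | h
      · left; exact fun m hm => h _ (by omega) (by omega)
      · right; exact h)
    (by
      intro m hm
      have := hen (i+m) (by omega) (by omega)
      simpa [hpq] using this)
  refine ⟨i + a, p + b, by omega, by omega, ?_⟩
  rcases hab with h | ⟨h1, h2, h3, h4⟩
  · exact Or.inl h
  · right
    have hE := hg (p+b) (by omega) (by omega)
    have hw : ∃ z, X.E ω (f (i+a)) z := by
      rcases Nat.lt_or_ge (i+a) j with h' | h'
      · exact ⟨_, hf (i+a) (by omega) h'⟩
      · have hlt : i < j := by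
          rcases Nat.eq_or_lt_of_le hij with e | e
          · subst e; omega
          · exact e
        refine ⟨f (i+a-1), X.E_symm _ _ _ ?_⟩
        have := hf (i+a-1) (by omega) (by omega)
        rwa [show i + a - 1 + 1 = i + a by omega] at this
    obtain ⟨z, hz⟩ := hw
    exact X.E_diag ω _ _ _ z hE h2 h3 h4 hz

/-- Gluing version of `meet`. -/
lemma meet_Jn {R : Set V} {f g : ℕ → V} {i j p q : ℕ} {x1 x2 : ℤ} (hij : i ≤ j) (hpq : p ≤ q)
    (hx : x1 < x2)
    (hf : Steps (X.E ω) f i j) (hg : Steps (X.E ω) g p q)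
    (hfR : ∀ m, i ≤ m → m ≤ j → f m ∈ R) (hgR : ∀ m, p ≤ m → m ≤ q → g m ∈ R)
    (hfi : (f i).1 = x1) (hfj : (f j).1 = x2) (hfx : ∀ m, i ≤ m → m ≤ j → x1 ≤ (f m).1)
    (hgx : ∀ m, p ≤ m → m ≤ q → x1 ≤ (g m).1 ∧ (g m).1 ≤ x2)
    (hst : (∀ m, i ≤ m → m ≤ j → (g p).2 ≤ (f m).2) ∨ ((g p).1 = x1 ∧ (g p).2 < (f i).2))
    (hen : ∀ m, i ≤ m → m ≤ j → (f m).2 ≤ (g q).2) :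
    X.Jn ω R (f i) (g p) := by
  obtain ⟨m, n, hm, hn, h⟩ := X.meet hij hpq hx hf hg hfi hfj hfx hgx hst hen
  have h1 := X.Jn_steps hf hfR ⟨le_rfl, hij⟩ hm
  have h2 := X.Jn_steps hg hgR hn ⟨le_rfl, hpq⟩
  refine Jn.trans X h1 (Jn.trans X ?_ h2)
  rcases h with h | h
  · rw [h]; exact Relation.ReflTransGen.refl
  · exact Relation.ReflTransGen.single ⟨X.E_symm _ _ _ h, hfR _ hm.1 hm.2, hgR _ hn.1 hn.2⟩

/-- Doubling of the aspect ratio. -/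
lemma double {m n : ℤ} (hn : 0 < n) (hmn : n ≤ m) : X.h m n ^ 3 ≤ X.h (2 * m - n) n := by
  have e1 : X.P (X.Hc 0 m 0 n ⊤) = X.h m n := rfl
  have e2 : X.P (X.Hc (m-n) (2*m-n) 0 n ⊤) = X.h m n := by
    rw [X.P_Hc']; congr 1 <;> ring
  have e3 : X.h m n ≤ X.P (X.Vc (m-n) m 0 n ⊤) := by
    rw [X.P_Vc']
    refine X.h_mono (by omega) (by omega) (by omega)
  have i1 := X.inc_ev _ {v | v.1 = 0} {v | v.1 = m} (box_finite 0 m 0 n)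
  have i2 := X.inc_ev _ {v | v.1 = m-n} {v | v.1 = 2*m-n} (box_finite (m-n) (2*m-n) 0 n)
  have i3 := X.inc_ev _ {v | v.2 = 0} {v | v.2 = n} (box_finite (m-n) m 0 n)
  have f1 := X.fkg i1 i2
  have f2 := X.fkg (X.inc_inter i1 i2) i3
  have hh := X.h_nonneg m n
  have : X.h m n ^ 3 ≤ X.P ((X.Hc 0 m 0 n ⊤ ∩ X.Hc (m-n) (2*m-n) 0 n ⊤) ∩ X.Vc (m-n) m 0 n ⊤) := by
    refine le_trans ?_ f2
    change X.P (X.Hc 0 m 0 n ⊤) * X.P (X.Hc (m-n) (2*m-n) 0 n ⊤) ≤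
      X.P (X.Hc 0 m 0 n ⊤ ∩ X.Hc (m-n) (2*m-n) 0 n ⊤) at f1
    rw [e1, e2] at f1
    calc X.h m n ^ 3 = (X.h m n * X.h m n) * X.h m n := by ring
      _ ≤ _ := mul_le_mul f1 e3 hh (X.P_nonneg _)
  refine this.trans (X.P_mono ?_)
  rintro ω ⟨⟨⟨f, k, hf1, hf2, hf3, hf4, -⟩, ⟨f', k', hf1', hf2', hf3', hf4', -⟩⟩,
    ⟨g, l, hg1, hg2, hg3, hg4, -⟩⟩
  simp only [Set.mem_ofPred_eq] at hf3 hf4 hf3' hf4' hg3 hg4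
  simp only [box, Set.mem_ofPred_eq] at hf1 hf1' hg1
  obtain ⟨i, j, a1, a2, a3, a4, a5, a6⟩ := extract_up (fun m => (f m).1) 0 k (Nat.zero_le k)
    (m-n) m (by omega) (X.near1 hf2) (by simp only [hf3]; omega) (by simp only [hf4]; omega)
  obtain ⟨i', j', b1, b2, b3, b4, b5, b6⟩ := extract_up (fun m => (f' m).1) 0 k' (Nat.zero_le k')
    (m-n) m (by omega) (X.near1 hf2') (by simp only [hf3']; omega) (by simp only [hf4']; omega)
  set R : Set V := box 0 (2*m-n) 0 n with hR
  have rf : ∀ q, 0 ≤ q → q ≤ k → f q ∈ R := fun q _ hq => by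
    have := hf1 q hq
    simp only [hR, box, Set.mem_ofPred_eq]; omega
  have rf' : ∀ q, 0 ≤ q → q ≤ k' → f' q ∈ R := fun q _ hq => by
    have := hf1' q hq
    simp only [hR, box, Set.mem_ofPred_eq]; omega
  have rg : ∀ q, 0 ≤ q → q ≤ l → g q ∈ R := fun q _ hq => by
    have := hg1 q hq
    simp only [hR, box, Set.mem_ofPred_eq]; omega
  have J1 : X.Jn ω R (f i) (g 0) := X.meet_Jn (x1 := m-n) (x2 := m) a2 (Nat.zero_le l) (by omega)
    (hf2.sub a1 a3) hg2 (fun q _ hq => rf q (by omega) (by omega)) rg a4 a5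
    (fun q x y => (a6 q x y).1) (fun q _ hq => (hg1 q hq).1)
    (Or.inl fun q x y => by rw [hg3]; exact (hf1 q (by omega)).2.1)
    (fun q x y => by rw [hg4]; exact (hf1 q (by omega)).2.2)
  have J2 : X.Jn ω R (f' i') (g 0) := X.meet_Jn (x1 := m-n) (x2 := m) b2 (Nat.zero_le l) (by omega)
    (hf2'.sub b1 b3) hg2 (fun q _ hq => rf' q (by omega) (by omega)) rg b4 b5
    (fun q x y => (b6 q x y).1) (fun q _ hq => (hg1 q hq).1)
    (Or.inl fun q x y => by rw [hg3]; exact (hf1' q (by omega)).2.1)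
    (fun q x y => by rw [hg4]; exact (hf1' q (by omega)).2.2)
  have J3 := X.Jn_steps hf2 rf (m := 0) (n := i) (by omega) (by omega)
  have J4 := X.Jn_steps hf2' rf' (m := i') (n := k') (by omega) (by omega)
  have J := Jn.trans X J3 (Jn.trans X J1 (Jn.trans X (Jn.symm X J2) J4))
  obtain ⟨F, K, c1, c2, c3, c4⟩ := X.Jn_path J (rf 0 le_rfl (by omega))
  exact ⟨F, K, c3, c4, by simp [c1, hf3], by simp [c2, hf4'], by simp⟩

end Model
end DaC

namespace DaC
namespace Model

variable {Ω : Type*} (X : Model Ω) {ω : Ω}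

/-- Long crossings are unlikely. -/
def Lp (θ : ℝ) : Prop :=
  ∀ ε : ℝ, 0 < ε → ∃ n0 : ℤ, ∀ n, n0 ≤ n → ∀ m : ℤ, (1 + θ) * n ≤ m → X.h m n ≤ ε

lemma Lp_half {θ : ℝ} (hθ : 0 < θ) (h : X.Lp θ) : X.Lp (θ / 2) := by
  intro ε hε
  obtain ⟨n0, hn0⟩ := h (ε ^ 3) (by positivity)
  refine ⟨max n0 1, fun n hn m hm => ?_⟩
  have h1 : 0 < n := by have := le_max_right n0 1; omega
  have h1' : (0:ℝ) < n := by exact_mod_cast h1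
  have hmn : n ≤ m := by
    have : (n:ℝ) ≤ m := by nlinarith
    exact_mod_cast this
  have h2 := X.double h1 hmn
  have h3 := hn0 n (by have := le_max_left n0 1; omega) (2*m-n) (by push_cast; nlinarith)
  exact le_of_pow_le_pow_left₀ (by norm_num) hε.le (h2.trans h3)

lemma Lp_mono {θ θ' : ℝ} (hθ : θ ≤ θ') (h : X.Lp θ) : X.Lp θ' := by
  intro ε hε
  obtain ⟨n0, hn0⟩ := h ε hε
  refine ⟨max n0 0, fun n hn m hm => hn0 n (le_trans (le_max_left _ _) hn) m ?_⟩
  have : (0:ℝ) ≤ n := by exact_mod_cast le_trans (le_max_right _ _) hn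
  nlinarith

lemma Lp_all {θ : ℝ} (hθ : 0 < θ) (h : X.Lp θ) (θ' : ℝ) (hθ' : 0 < θ') : X.Lp θ' := by
  have key : ∀ k : ℕ, X.Lp (θ / 2 ^ k) := by
    intro k
    induction k with
    | zero => simpa using h
    | succ k ih =>
      have := X.Lp_half (by positivity) ih
      rwa [div_div, ← pow_succ] at this
  obtain ⟨k, hk⟩ := pow_unbounded_of_one_lt (θ / θ') (by norm_num : (1:ℝ) < 2)
  refine X.Lp_mono ?_ (key k)
  rw [div_lt_iff₀ hθ'] at hk
  rw [div_le_iff₀ (by positivity)]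
  linarith

/-- Integer form. -/
def LpN (N : ℕ) : Prop :=
  ∀ ε : ℝ, 0 < ε → ∃ n0 : ℤ, ∀ n, n0 ≤ n → ∀ m : ℤ, (N + 1) * n ≤ N * m → X.h m n ≤ ε

lemma LpN_all {θ : ℝ} (hθ : 0 < θ) (h : X.Lp θ) (N : ℕ) (hN : 0 < N) : X.LpN N := by
  intro ε hε
  have hN' : (0:ℝ) < N := by exact_mod_cast hN
  obtain ⟨n0, hn0⟩ := X.Lp_all hθ h (1 / N) (by positivity) ε hε
  refine ⟨n0, fun n hn m hm => hn0 n hn m ?_⟩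
  have : ((N:ℝ) + 1) * n ≤ N * m := by exact_mod_cast hm
  rw [show (1 + 1 / (N:ℝ)) * n = ((N+1) * n) / N by field_simp, div_le_iff₀ hN']
  linarith

/-! ### Landing points -/

def DD (T b q y0 : ℤ) : Set Ω :=
  EvL X.E (box 0 T y0 (y0+b)) {v | v.1 = 0 ∧ v.2 ≤ y0 + q} {v | v.1 = T} ⊤
def UU (T b q y0 : ℤ) : Set Ω :=
  EvL X.E (box 0 T y0 (y0+b)) {v | v.1 = 0 ∧ y0 + b - q ≤ v.2} {v | v.1 = T} ⊤

lemma P_DD (T b q y0 : ℤ) : X.P (X.DD T b q y0) = X.P (X.DD T b q 0) := by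
  rw [DD, ← X.symm (trans 0 y0) (iso_trans _ _) _ _ _ _ (box_finite _ _ _ _)]
  congr 1
  unfold DD
  congr 1
  · ext v; simp only [box, trans, Set.mem_preimage, Set.mem_ofPred_eq, Equiv.coe_fn_mk]; omega
  · ext v; simp only [trans, Set.mem_preimage, Set.mem_ofPred_eq, Equiv.coe_fn_mk]; omega
  · ext v; simp only [trans, Set.mem_preimage, Set.mem_ofPred_eq, Equiv.coe_fn_mk]; omega

lemma P_UU (T b q y0 : ℤ) : X.P (X.UU T b q y0) = X.P (X.DD T b q 0) := by
  rw [← X.P_DD T b q (-(y0+b)), UU, ← X.symm refl2 iso_refl2 _ _ _ _ (box_finite _ _ _ _)]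
  congr 1
  unfold DD
  congr 1
  · ext v; simp only [box, refl2, Set.mem_preimage, Set.mem_ofPred_eq, Equiv.coe_fn_mk]; omega
  · ext v; simp only [refl2, Set.mem_preimage, Set.mem_ofPred_eq, Equiv.coe_fn_mk]; omega

lemma landing_det {T b q u : ℤ} {K : ℕ} (hT : 0 < T) (hu : 0 < u) (hq0 : 0 ≤ q)
    (hq : 2 * u + 2 * q < b) (hK : 0 < K)
    (hD : ∀ m : ℕ, m < K → ω ∈ X.DD T b q ((m+1) * u))
    (hU : ∀ m : ℕ, m < K → ω ∈ X.UU T b q (m * u))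
    (hU' : ∀ m : ℕ, m < K → ω ∈ X.UU T b q ((m-1) * u))
    (hL : ∀ m : ℕ, m < K → ω ∉ X.Hc 0 T ((m+1)*u) ((m+1)*u + (b - u)) ⊤) :
    ω ∈ X.Vc 0 T b (b + (K-1) * u) ⊤ := by
  set R : Set V := {v | 0 ≤ v.1 ∧ v.1 ≤ T} with hR
  choose f k f1 f2 f3 f4 _ using hD
  -- each `D` path climbs high
  have high : ∀ (m : ℕ) (hm : m < K), ∃ j ≤ k m hm, m * u + b < (f m hm j).2 := by
    intro m hm
    by_contra hcon
    push Not at hcon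
    apply hL m hm
    have e3 := (f3 m hm).1
    have e4 := f4 m hm
    simp only [Set.mem_ofPred_eq] at e4
    refine X.hcross (Nat.zero_le (k m hm)) (f2 m hm) hT.le ?_ (Or.inl ⟨e3.le, e4.ge⟩) (by simp)
    intro j _ hj
    have := hcon j hj
    have := (f1 m hm j hj).2
    constructor
    · exact this.1
    · linarith
  have climb : ∀ (m : ℕ) (hm : m < K) (y0 : ℤ), (y0 = m * u ∨ y0 = (m-1) * u) →
      ∀ (g : ℕ → V) (l : ℕ), (∀ i ≤ l, g i ∈ box 0 T y0 (y0+b)) → Steps (X.E ω) g 0 l →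
      (g 0).1 = 0 → y0 + b - q ≤ (g 0).2 → (g l).1 = T → X.Jn ω R (g 0) (f m hm 0) := by
    intro m hm y0 hy0 g l g1 g2 g3 g4 g5
    obtain ⟨j, hj, hj'⟩ := high m hm
    have e3 := f3 m hm
    simp only [Set.mem_ofPred_eq] at e3
    have hy1 : y0 ≤ m * u ∧ m * u ≤ y0 + u := by
      rcases hy0 with h | h
      · constructor <;> linarith
      · constructor <;> linarith
    refine X.meet_Jn (x1 := 0) (x2 := T) (Nat.zero_le l) (Nat.zero_le j) hT g2
      ((f2 m hm).sub le_rfl hj) (fun i _ hi => (g1 i hi).1)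
      (fun i _ hi => (f1 m hm i (by omega)).1) g3 g5 (fun i _ hi => (g1 i hi).1.1)
      (fun i _ hi => (f1 m hm i (by omega)).1) (Or.inr ⟨e3.1, ?_⟩) ?_
    · have := e3.2
      linarith
    · intro i _ hi
      have := (g1 i hi).2.2
      linarith
  have chain : ∀ (m : ℕ) (hm : m < K), X.Jn ω R (f 0 hK 0) (f m hm 0) := by
    intro m
    induction m with
    | zero => intro _; exact Relation.ReflTransGen.refl
    | succ m ih =>
      intro hm
      have hm' : m < K := by omega
      refine Jn.trans X (ih hm') ?_
      obtain ⟨g, l, g1, g2, g3, g4, -⟩ := hU m hm'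
      have a := climb m hm' (m*u) (Or.inl rfl) g l g1 g2 g3.1 g3.2 g4
      have b := climb (m+1) hm (m*u) (Or.inr (by push_cast; ring)) g l g1 g2 g3.1 g3.2 g4
      exact Jn.trans X (Jn.symm X a) b
  have hK1 : K - 1 < K := by omega
  obtain ⟨j, hj, hj'⟩ := high (K-1) hK1
  have J1 := chain (K-1) hK1
  have J2 := X.Jn_steps (R := R) (f2 (K-1) hK1) (fun i _ hi => (f1 (K-1) hK1 i hi).1)
    (m := 0) (n := j) (by omega) (by omega)
  obtain ⟨F, l, c1, c2, c3, c4⟩ := X.Jn_path (Jn.trans X J1 J2) (f1 0 hK 0 (by omega)).1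
  have cK : ((K - 1 : ℕ) : ℤ) = K - 1 := by omega
  rw [cK] at hj'
  have e3 := (f3 0 hK).2
  have hK' : (0:ℤ) ≤ (K:ℤ) - 1 := by omega
  refine X.vcross (Nat.zero_le l) c4 ?_ (fun i _ hi => c3 i hi) (Or.inl ⟨?_, ?_⟩) (by simp)
  · nlinarith
  · rw [c1]
    push_cast at e3
    linarith
  · rw [c2]; linarith

lemma landing {T b q u : ℤ} {K : ℕ} (hT : 0 < T) (hu : 0 < u) (hq0 : 0 ≤ q)
    (hq : 2 * u + 2 * q < b) (hK : 0 < K) :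
    X.P (X.DD T b q 0) ^ (3 * K) ≤ X.h ((K-1)*u) T + K * X.h T (b - u) := by
  set A : ℕ → Set Ω := fun m => (X.DD T b q ((m+1) * u) ∩ X.UU T b q (m * u)) ∩
    X.UU T b q ((m-1) * u) with hA
  have iD : ∀ y, X.Inc (X.DD T b q y) := fun y => X.inc_ev _ _ _ (box_finite _ _ _ _)
  have iU : ∀ y, X.Inc (X.UU T b q y) := fun y => X.inc_ev _ _ _ (box_finite _ _ _ _)
  set d := X.P (X.DD T b q 0) with hd
  have hd0 : 0 ≤ d := X.P_nonneg _
  have hAi : ∀ m, X.Inc (A m) := fun m => X.inc_inter (X.inc_inter (iD _) (iU _)) (iU _)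
  have hAP : ∀ m, d ^ 3 ≤ X.P (A m) := by
    intro m
    have a1 := X.fkg (iD ((m+1)*u)) (iU (m*u))
    have a2 := X.fkg (X.inc_inter (iD ((m+1)*u)) (iU (m*u))) (iU ((m-1)*u))
    rw [X.P_DD, X.P_UU] at a1
    rw [X.P_UU] at a2
    refine le_trans ?_ a2
    calc d ^ 3 = (d * d) * d := by ring
      _ ≤ _ := mul_le_mul_of_nonneg_right a1 hd0
  have h1 := (X.fkg_finset (Finset.range K) A hAi).2
  have h2 : d ^ (3 * K) ≤ ∏ i ∈ Finset.range K, X.P (A i) := by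
    rw [pow_mul]
    calc (d^3)^K = ∏ i ∈ Finset.range K, d^3 := by simp
      _ ≤ _ := Finset.prod_le_prod (fun _ _ => by positivity) (fun i _ => hAP i)
  have h3 : (⋂ i ∈ Finset.range K, A i) ⊆ X.Vc 0 T b (b + (K-1) * u) ⊤ ∪
      ⋃ m ∈ Finset.range K, X.Hc 0 T ((m+1)*u) ((m+1)*u + (b - u)) ⊤ := by
    intro ω hω
    simp only [Set.mem_iInter, Finset.mem_range] at hω
    by_cases hL : ∀ m : ℕ, m < K → ω ∉ X.Hc 0 T ((m+1)*u) ((m+1)*u + (b - u)) ⊤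
    · left
      exact X.landing_det hT hu hq0 hq hK (fun m hm => (hω m hm).1.1) (fun m hm => (hω m hm).1.2)
        (fun m hm => (hω m hm).2) hL
    · right
      push Not at hL
      obtain ⟨m, hm, h⟩ := hL
      simp only [Set.mem_iUnion, Finset.mem_range]
      exact ⟨m, hm, h⟩
  refine (h2.trans h1).trans ((X.P_mono h3).trans ((X.P_union _ _).trans ?_))
  refine add_le_add ?_ ((X.P_biUnion _ _).trans ?_)
  · rw [X.P_Vc']; apply le_of_eq; congr 1 <;> ring
  · rw [Finset.sum_congr rfl (g := fun _ => X.h T (b-u))]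
    · simp
    · intro m _
      rw [X.P_Hc']; congr 1 <;> ring

/-- Rotated landing events: vertical crossings of `[0,s] × [y0,y0+T]` with an end point close
to a vertical side. -/
def Land (s q T y0 : ℤ) : Set Ω :=
  ((EvL X.E (box 0 s y0 (y0+T)) {v | v.2 = y0 ∧ v.1 ≤ q} {v | v.2 = y0 + T} ⊤) ∪
   (EvL X.E (box 0 s y0 (y0+T)) {v | v.2 = y0 ∧ s - q ≤ v.1} {v | v.2 = y0 + T} ⊤)) ∪
  ((EvL X.E (box 0 s y0 (y0+T)) {v | v.2 = y0 + T ∧ v.1 ≤ q} {v | v.2 = y0} ⊤) ∪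
   (EvL X.E (box 0 s y0 (y0+T)) {v | v.2 = y0 + T ∧ s - q ≤ v.1} {v | v.2 = y0} ⊤))

def gsw (a b e d : ℤ) (he : e * e = 1) (hd : d * d = 1) : V ≃ V where
  toFun v := (a + e * v.2, b + d * v.1)
  invFun v := (d * (v.2 - b), e * (v.1 - a))
  left_inv v := by
    ext
    · simp only [add_sub_cancel_left, ← mul_assoc, hd, one_mul]
    · simp only [add_sub_cancel_left, ← mul_assoc, he, one_mul]
  right_inv v := by
    ext
    · simp only [← mul_assoc, he, one_mul]; ring
    · simp only [← mul_assoc, hd, one_mul]; ring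

lemma iso_gsw (a b e d : ℤ) (he : e * e = 1) (hd : d * d = 1) : IsIso (gsw a b e d he hd) := by
  intro u v
  simp only [gsw, Equiv.coe_fn_mk]
  linear_combination (u.2 - v.2)^2 * he + (u.1-v.1)^2 * hd

lemma P_Land (s q T y0 : ℤ) : X.P (X.Land s q T y0) ≤ 4 * X.P (X.DD T s q 0) := by
  have e1 : X.P (EvL X.E (box 0 s y0 (y0+T)) {v | v.2 = y0 ∧ v.1 ≤ q} {v | v.2 = y0 + T} ⊤)
      = X.P (X.DD T s q 0) := by
    rw [← X.symm (gsw 0 y0 1 1 rfl rfl) (iso_gsw _ _ _ _ _ _) _ _ _ _ (box_finite _ _ _ _)]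
    unfold DD
    congr 2 <;> (ext v; simp only [box, gsw, Set.mem_preimage, Set.mem_ofPred_eq,
      Equiv.coe_fn_mk]; omega)
  have e2 : X.P (EvL X.E (box 0 s y0 (y0+T)) {v | v.2 = y0 ∧ s - q ≤ v.1} {v | v.2 = y0 + T} ⊤)
      = X.P (X.DD T s q 0) := by
    rw [← X.symm (gsw s y0 (-1) 1 rfl rfl) (iso_gsw _ _ _ _ _ _) _ _ _ _ (box_finite _ _ _ _)]
    unfold DD
    congr 2 <;> (ext v; simp only [box, gsw, Set.mem_preimage, Set.mem_ofPred_eq,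
      Equiv.coe_fn_mk]; omega)
  have e3 : X.P (EvL X.E (box 0 s y0 (y0+T)) {v | v.2 = y0 + T ∧ v.1 ≤ q} {v | v.2 = y0} ⊤)
      = X.P (X.DD T s q 0) := by
    rw [← X.symm (gsw 0 (y0+T) 1 (-1) rfl rfl) (iso_gsw _ _ _ _ _ _) _ _ _ _ (box_finite _ _ _ _)]
    unfold DD
    congr 2 <;> (ext v; simp only [box, gsw, Set.mem_preimage, Set.mem_ofPred_eq,
      Equiv.coe_fn_mk]; omega)
  have e4 : X.P (EvL X.E (box 0 s y0 (y0+T)) {v | v.2 = y0 + T ∧ s - q ≤ v.1} {v | v.2 = y0} ⊤)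
      = X.P (X.DD T s q 0) := by
    rw [← X.symm (gsw s (y0+T) (-1) (-1) rfl rfl) (iso_gsw _ _ _ _ _ _) _ _ _ _
      (box_finite _ _ _ _)]
    unfold DD
    congr 2 <;> (ext v; simp only [box, gsw, Set.mem_preimage, Set.mem_ofPred_eq,
      Equiv.coe_fn_mk]; omega)
  refine (X.P_union _ _).trans ?_
  have a := X.P_union (EvL X.E (box 0 s y0 (y0+T)) {v | v.2 = y0 ∧ v.1 ≤ q} {v | v.2 = y0 + T} ⊤)
    (EvL X.E (box 0 s y0 (y0+T)) {v | v.2 = y0 ∧ s - q ≤ v.1} {v | v.2 = y0 + T} ⊤)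
  have b := X.P_union (EvL X.E (box 0 s y0 (y0+T)) {v | v.2 = y0 + T ∧ v.1 ≤ q} {v | v.2 = y0} ⊤)
    (EvL X.E (box 0 s y0 (y0+T)) {v | v.2 = y0 + T ∧ s - q ≤ v.1} {v | v.2 = y0} ⊤)
  linarith

end Model
end DaC

namespace DaC
namespace Model

variable {Ω : Type*} (X : Model Ω) {ω : Ω}

/-- Bad event at level `a` and window `j`. -/
def Bad (s t u a j : ℤ) : Set Ω :=
  (X.Hc a (s-a) (j*u) (j*u + (s-2*a-u)) ⊤ ∪ X.Land s (3*t) (s-2*a-2*u) ((j+1)*u)) ∪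
  (X.Vc (2*a+4*u) s ((j+1)*u) ((j+1)*u + (s-2*a-2*u)) ⊤ ∪
   X.Vc 0 (s-(2*a+4*u)) ((j+1)*u) ((j+1)*u + (s-2*a-2*u)) ⊤)

def Pass (s : ℤ) (f : ℕ → V) (i j : ℕ) (a : ℤ) : Prop :=
  ((f i).1 ≤ a ∧ s - a ≤ (f j).1) ∨ (s - a ≤ (f i).1 ∧ (f j).1 ≤ a)

lemma exists_win {u y : ℤ} (hu : 0 < u) : (y / u) * u ≤ y ∧ y < (y/u + 1) * u := by
  have h1 := Int.emod_add_mul_ediv y u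
  have h2 := Int.emod_nonneg y hu.ne'
  have h3 := Int.emod_lt_of_pos y hu
  constructor <;> nlinarith

lemma onestep {s t u a : ℤ} {J : ℕ} (hu : 0 < u) (ha : 0 ≤ a) (hat : 2*a+4*u ≤ t) (hts : 10*t ≤ s)
    (hJ : 4 * s < J * u)
    (hB : ∀ j : ℕ, j < J → ω ∉ X.Bad s t u a j)
    {f : ℕ → V} {i j : ℕ} (hij : i ≤ j) (hs : Steps (X.E ω) f i j)
    (hR : ∀ m, i ≤ m → m ≤ j → f m ∈ box 0 s 0 (4*s))
    (hp : Pass s f i j a) :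
    ∃ i1 i2 i3 i4, i ≤ i1 ∧ i1 ≤ i2 ∧ i2 ≤ i3 ∧ i3 ≤ i4 ∧ i4 ≤ j ∧
      (3*t < (f i1).1 ∧ (f i1).1 < s - 3*t) ∧ (3*t < (f i4).1 ∧ (f i4).1 < s - 3*t) ∧
      Pass s f i2 i3 (2*a+4*u) := by
  obtain ⟨m0, hm0, hmin⟩ := Finset.exists_min_image (Finset.Icc i j) (fun m => (f m).2)
    ⟨i, by simp [hij]⟩
  rw [Finset.mem_Icc] at hm0
  have hmin' : ∀ m, i ≤ m → m ≤ j → (f m0).2 ≤ (f m).2 :=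
    fun m h1 h2 => hmin m (Finset.mem_Icc.2 ⟨h1, h2⟩)
  have hr0 := hR m0 hm0.1 hm0.2
  obtain ⟨w1, w2⟩ := exists_win (y := (f m0).2) hu
  set w := (f m0).2 / u with hw
  have hw0 : 0 ≤ w := Int.ediv_nonneg hr0.2.1 hu.le
  have hwJ : w < J := by
    have := hr0.2.2
    by_contra hc
    push Not at hc
    nlinarith
  have hBw := hB w.toNat (by omega)
  rw [Int.toNat_of_nonneg hw0] at hBw
  simp only [Bad, Set.mem_union, not_or] at hBw
  obtain ⟨⟨b1, b2⟩, b3, b4⟩ := hBw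
  set T := s - 2*a - 2*u with hT
  set y0 := (w+1)*u with hy0
  have hT0 : 0 ≤ T := by omega
  -- a high point
  have hhigh : ∃ m1, i ≤ m1 ∧ m1 ≤ j ∧ y0 + T < (f m1).2 := by
    by_contra hcon
    push Not at hcon
    apply b1
    refine X.hcross hij hs (by omega) ?_ hp (ENat.natCast_lt_top _)
    intro m h1 h2
    have c1 := hcon m h1 h2
    have c2 := hmin' m h1 h2
    constructor
    · linarith
    · rw [hy0] at c1; linarith
  obtain ⟨m1, hm1, hm1', hh⟩ := hhigh
  have hext : ∃ i' j', i ≤ i' ∧ i' ≤ j' ∧ j' ≤ j ∧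
      (((f i').2 = y0 ∧ (f j').2 = y0 + T) ∨ ((f i').2 = y0 + T ∧ (f j').2 = y0)) ∧
      ∀ m, i' ≤ m → m ≤ j' → y0 ≤ (f m).2 ∧ (f m).2 ≤ y0 + T := by
    rcases le_total m0 m1 with h | h
    · obtain ⟨i', j', h1, h2, h3, h4, h5, h6⟩ := extract_up (fun m => (f m).2) m0 m1 h y0 (y0+T)
        (by omega) (X.near2 (hs.sub hm0.1 hm1')) w2.le hh.le
      exact ⟨i', j', by omega, h2, by omega, Or.inl ⟨h4, h5⟩, h6⟩
    · obtain ⟨i', j', h1, h2, h3, h4, h5, h6⟩ := extract_down (fun m => (f m).2) m1 m0 h y0 (y0+T)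
        (by omega) (X.near2 (hs.sub hm1 hm0.2)) hh.le w2.le
      exact ⟨i', j', by omega, h2, by omega, Or.inr ⟨h4, h5⟩, h6⟩
  obtain ⟨i', j', h1, h2, h3, h4, h6⟩ := hext
  have hs' := hs.sub h1 h3
  have hbox : ∀ m, i' ≤ m → m ≤ j' → f m ∈ box 0 s y0 (y0+T) :=
    fun m x y => ⟨(hR m (by omega) (by omega)).1, h6 m x y⟩
  simp only [Land, Set.mem_union, not_or] at b2
  obtain ⟨⟨l1, l2⟩, l3, l4⟩ := b2
  have hend : (3*t < (f i').1 ∧ (f i').1 < s - 3*t) ∧ (3*t < (f j').1 ∧ (f j').1 < s - 3*t) := by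
    by_contra hcon
    rcases h4 with ⟨e1, e2⟩ | ⟨e1, e2⟩
    · have : (f i').1 ≤ 3*t ∨ s - 3*t ≤ (f i').1 ∨ (f j').1 ≤ 3*t ∨ s - 3*t ≤ (f j').1 := by omega
      rcases this with c | c | c | c
      · exact l1 (X.mem_EvL h2 hs' hbox ⟨e1, c⟩ e2 (ENat.natCast_lt_top _))
      · exact l2 (X.mem_EvL h2 hs' hbox ⟨e1, c⟩ e2 (ENat.natCast_lt_top _))
      · exact l3 (X.mem_EvL_rev h2 hs' hbox ⟨e2, c⟩ e1 (ENat.natCast_lt_top _))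
      · exact l4 (X.mem_EvL_rev h2 hs' hbox ⟨e2, c⟩ e1 (ENat.natCast_lt_top _))
    · have : (f i').1 ≤ 3*t ∨ s - 3*t ≤ (f i').1 ∨ (f j').1 ≤ 3*t ∨ s - 3*t ≤ (f j').1 := by omega
      rcases this with c | c | c | c
      · exact l3 (X.mem_EvL h2 hs' hbox ⟨e1, c⟩ e2 (ENat.natCast_lt_top _))
      · exact l4 (X.mem_EvL h2 hs' hbox ⟨e1, c⟩ e2 (ENat.natCast_lt_top _))
      · exact l1 (X.mem_EvL_rev h2 hs' hbox ⟨e2, c⟩ e1 (ENat.natCast_lt_top _))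
      · exact l2 (X.mem_EvL_rev h2 hs' hbox ⟨e2, c⟩ e1 (ENat.natCast_lt_top _))
  have hv : ((f i').2 ≤ y0 ∧ y0 + T ≤ (f j').2) ∨ (y0 + T ≤ (f i').2 ∧ (f j').2 ≤ y0) := by omega
  have hn1 : ∃ n1, i' ≤ n1 ∧ n1 ≤ j' ∧ (f n1).1 ≤ 2*a+4*u := by
    by_contra hcon
    push Not at hcon
    apply b3
    exact X.vcross h2 hs' (by omega) (fun m x y => ⟨(hcon m x y).le, (hbox m x y).1.2⟩) hv (ENat.natCast_lt_top _)
  have hn2 : ∃ n1, i' ≤ n1 ∧ n1 ≤ j' ∧ s - (2*a+4*u) ≤ (f n1).1 := by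
    by_contra hcon
    push Not at hcon
    apply b4
    exact X.vcross h2 hs' (by omega) (fun m x y => ⟨(hbox m x y).1.1, (hcon m x y).le⟩) hv (ENat.natCast_lt_top _)
  obtain ⟨n1, p1, p2, p3⟩ := hn1
  obtain ⟨n2, q1, q2, q3⟩ := hn2
  rcases le_total n1 n2 with h | h
  · exact ⟨i', n1, n2, j', h1, p1, h, q2, h3, hend.1, hend.2, Or.inl ⟨p3, q3⟩⟩
  · exact ⟨i', n2, n1, j', h1, q1, h, p2, h3, hend.1, hend.2, Or.inr ⟨q3, p3⟩⟩

/-- Levels. -/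
def cl : ℕ → ℤ
  | 0 => 0
  | n+1 => 2 * cl n + 4

lemma cl_nonneg (n : ℕ) : 0 ≤ cl n := by
  induction n with
  | zero => simp [cl]
  | succ n ih => simp only [cl]; omega

lemma cl_mono : Monotone cl := by
  apply monotone_nat_of_le_succ
  intro n
  have := cl_nonneg n
  simp only [cl]; omega

/-- Every pass at level `n` consists of many slab passes. -/
lemma multipass {s t u : ℤ} {J L : ℕ} (hu : 0 < u) (hLt : cl L * u ≤ t) (hts : 10*t ≤ s)
    (ht : 10 ≤ t) (hst : s < 10 * t + 10)
    (hJ : 4 * s < J * u)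
    (hB : ∀ n < L, ∀ j : ℕ, j < J → ω ∉ X.Bad s t u (cl n * u) j)
    (z1 z2 : ℤ) (hz : (z1 = t ∧ z2 = 2*t) ∨ (z1 = 8*t ∧ z2 = 9*t)) (ℓ : ℕ)
    (hno : ω ∉ X.Hc z1 z2 0 (4*s) ℓ)
    {f : ℕ → V} : ∀ (k n : ℕ), k + n = L → ∀ i j : ℕ, i ≤ j → Steps (X.E ω) f i j →
    (∀ m, i ≤ m → m ≤ j → f m ∈ box 0 s 0 (4*s)) → Pass s f i j (cl n * u) → k * ℓ ≤ j - i := by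
  intro k
  induction k with
  | zero => intro n _ i j _ _ _ _; simp
  | succ k ih =>
    intro n hn i j hij hs hR hp
    have hc : cl (n+1) * u = 2 * (cl n * u) + 4 * u := by simp only [cl]; ring
    have hc' : cl (n+1) * u ≤ t :=
      (mul_le_mul_of_nonneg_right (cl_mono (by omega : n+1 ≤ L)) hu.le).trans hLt
    obtain ⟨i1, i2, i3, i4, o1, o2, o3, o4, o5, q1, q4, hp'⟩ := X.onestep hu
      (mul_nonneg (cl_nonneg n) hu.le) (by rw [← hc]; exact hc') hts hJ (hB n (by omega)) hij hs hR hp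
    rw [← hc] at hp'
    have hk := ih (n+1) (by omega) i2 i3 o3 (hs.sub (by omega) (by omega))
      (fun m x y => hR m (by omega) (by omega)) hp'
    have slab : ∀ p q : ℕ, i ≤ p → p ≤ q → q ≤ j →
        (((f p).1 ≤ z1 ∧ z2 ≤ (f q).1) ∨ (z2 ≤ (f p).1 ∧ (f q).1 ≤ z1)) → ℓ ≤ q - p := by
      intro p q x1 x2 x3 hpq
      by_contra hcon
      push Not at hcon
      exact hno (X.hcross x2 (hs.sub x1 x3) (by omega)
        (fun m y1 y2 => (hR m (by omega) (by omega)).2) hpq (by exact_mod_cast hcon))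
    have hextra : ℓ ≤ i2 - i1 ∨ ℓ ≤ i4 - i3 := by
      rcases hz with ⟨rfl, rfl⟩ | ⟨rfl, rfl⟩
      · rcases hp' with ⟨r1, r2⟩ | ⟨r1, r2⟩
        · left; apply slab i1 i2 (by omega) o2 (by omega); omega
        · right; apply slab i3 i4 (by omega) o4 (by omega); omega
      · rcases hp' with ⟨r1, r2⟩ | ⟨r1, r2⟩
        · right; apply slab i3 i4 (by omega) o4 (by omega); omega
        · left; apply slab i1 i2 (by omega) o2 (by omega); omega
    have : (k+1) * ℓ = k * ℓ + ℓ := by ring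
    omega

/-- Deterministic inclusion. -/
lemma short_incl {s t u : ℤ} {J L : ℕ} (hu : 0 < u) (hLt : cl L * u ≤ t) (hts : 10*t ≤ s)
    (ht : 10 ≤ t) (hst : s < 10 * t + 10) (hJ : 4 * s < J * u) (ℓ : ℕ) :
    X.Hc 0 s 0 (4*s) ((L * ℓ : ℕ) : ℕ∞) ⊆ (X.Hc t (2*t) 0 (4*s) ℓ ∩ X.Hc (8*t) (9*t) 0 (4*s) ℓ) ∪
      ⋃ n ∈ Finset.range L, ⋃ j ∈ Finset.range J, X.Bad s t u (cl n * u) (j : ℕ) := by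
  rintro ω ⟨f, k, h1, h2, h3, h4, h5⟩
  by_cases hB : ∀ n < L, ∀ j : ℕ, j < J → ω ∉ X.Bad s t u (cl n * u) j
  · left
    have h5' : k < L * ℓ := by exact_mod_cast h5
    have hp : Pass s f 0 k (cl 0 * u) := by
      left
      simp only [Set.mem_ofPred_eq] at h3 h4
      simp [cl, h3, h4]
    constructor
    · by_contra hno
      have := X.multipass hu hLt hts ht hst hJ hB t (2*t) (Or.inl ⟨rfl, rfl⟩) ℓ hno (f := f) L 0
        (by omega) 0 k (Nat.zero_le k) h2 (fun m _ hm => h1 m hm) hp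
      omega
    · by_contra hno
      have := X.multipass hu hLt hts ht hst hJ hB (8*t) (9*t) (Or.inr ⟨rfl, rfl⟩) ℓ hno (f := f) L 0
        (by omega) 0 k (Nat.zero_le k) h2 (fun m _ hm => h1 m hm) hp
      omega
  · right
    push Not at hB
    obtain ⟨n, hn, j, hj, h⟩ := hB
    simp only [Set.mem_iUnion, Finset.mem_range]
    exact ⟨n, hn, j, hj, h⟩

/-- Confinement. -/
lemma confine {t : ℤ} (ht : 0 < t) (N : ℕ) (ℓ : ℕ∞) :
    X.P (X.Hc 0 t 0 (N * t) ℓ) ≤ (N+1) * (X.P (X.Hc 0 t 0 (4*t) ℓ) + X.h (2*t) t) := by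
  have hsub : X.Hc 0 t 0 (N*t) ℓ ⊆ ⋃ j ∈ Finset.range (N+1),
      (X.Hc 0 t (j*t) (j*t+4*t) ℓ ∪ X.Vc 0 t ((j+1)*t) ((j+3)*t) ⊤) := by
    rintro ω ⟨f, k, h1, h2, h3, h4, h5⟩
    obtain ⟨m0, hm0, hmin⟩ := Finset.exists_min_image (Finset.Icc 0 k) (fun m => (f m).2)
      ⟨0, by simp⟩
    rw [Finset.mem_Icc] at hm0
    have hmin' : ∀ m, m ≤ k → (f m0).2 ≤ (f m).2 :=
      fun m h2 => hmin m (Finset.mem_Icc.2 ⟨by omega, h2⟩)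
    have hr0 := h1 m0 hm0.2
    obtain ⟨w1, w2⟩ := exists_win (y := (f m0).2) ht
    set w := (f m0).2 / t with hw
    have hw0 : 0 ≤ w := Int.ediv_nonneg hr0.2.1 ht.le
    have hwJ : w < N + 1 := by
      have := hr0.2.2
      by_contra hc
      push Not at hc
      nlinarith
    simp only [Set.mem_iUnion, Finset.mem_range]
    refine ⟨w.toNat, by omega, ?_⟩
    rw [Int.toNat_of_nonneg hw0]
    by_cases hh : ∀ m ≤ k, (f m).2 ≤ w*t+4*t
    · left
      refine ⟨f, k, fun i hi => ⟨(h1 i hi).1, w1.trans (hmin' i hi), hh i hi⟩, h2, h3, h4, h5⟩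
    · right
      push Not at hh
      obtain ⟨m1, hm1, hh⟩ := hh
      rcases le_total m0 m1 with h | h
      · exact X.vcross h (h2.sub (by omega) (by omega)) (by linarith)
          (fun m x y => (h1 m (by omega)).1) (Or.inl ⟨w2.le, by linarith⟩) (ENat.natCast_lt_top _)
      · exact X.vcross h (h2.sub (by omega) (by omega)) (by linarith)
          (fun m x y => (h1 m (by omega)).1) (Or.inr ⟨by linarith, w2.le⟩) (ENat.natCast_lt_top _)
  refine (X.P_mono hsub).trans ((X.P_biUnion _ _).trans ?_)
  rw [show ((N:ℝ)+1) * (X.P (X.Hc 0 t 0 (4*t) ℓ) + X.h (2*t) t) =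
    ∑ j ∈ Finset.range (N+1), (X.P (X.Hc 0 t 0 (4*t) ℓ) + X.h (2*t) t) by
      rw [Finset.sum_const, Finset.card_range, nsmul_eq_mul]; push_cast; ring]
  apply Finset.sum_le_sum
  intro j _
  refine (X.P_union _ _).trans (le_of_eq ?_)
  rw [X.P_Vc', X.P_Hc]
  congr 2
  · congr 1 <;> ring
  · ring
  · ring

/-- In a finite region, paths can be taken short. -/
lemma EvL_finite (R A B : Set V) (hR : R.Finite) (ℓ : ℕ) (hℓ : R.ncard ≤ ℓ) :
    EvL X.E R A B ⊤ ⊆ EvL X.E R A B ℓ := by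
  classical
  intro ω hω
  have hex : ∃ k : ℕ, ∃ f : ℕ → V, (∀ i ≤ k, f i ∈ R) ∧ Steps (X.E ω) f 0 k ∧ f 0 ∈ A ∧ f k ∈ B := by
    obtain ⟨f, k, h1, h2, h3, h4, -⟩ := hω
    exact ⟨k, f, h1, h2, h3, h4⟩
  obtain ⟨f, h1, h2, h3, h4⟩ := Nat.find_spec hex
  set k := Nat.find hex with hk
  refine ⟨f, k, h1, h2, h3, h4, ?_⟩
  have hinj : Set.InjOn f (Finset.range (k+1) : Set ℕ) := by
    have : ∀ i j, i < j → j ≤ k → f i ≠ f j := by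
      intro i j hij hjk he
      have hlt : k - (j - i) < Nat.find hex := by omega
      refine Nat.find_min hex hlt ⟨fun m => if m ≤ i then f m else f (m + (j - i)), ?_, ?_, ?_, ?_⟩
      · intro m hm
        by_cases h : m ≤ i
        · simp only [if_pos h]; exact h1 _ (by omega)
        · simp only [if_neg h]; exact h1 _ (by omega)
      · intro m _ hm
        rcases lt_trichotomy m i with h | h | h
        · simp only [if_pos h.le, if_pos (show m + 1 ≤ i from h)]
          exact h2 m (by omega) (by omega)
        · subst h
          simp only [le_refl, if_true, if_neg (show ¬ m + 1 ≤ m by omega)]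
          rw [he, show m + 1 + (j - m) = j + 1 by omega]
          exact h2 j (by omega) (by omega)
        · simp only [if_neg (show ¬ m ≤ i by omega), if_neg (show ¬ m + 1 ≤ i by omega)]
          rw [show m + 1 + (j - i) = m + (j - i) + 1 by omega]
          exact h2 _ (by omega) (by omega)
      · simpa using h3
      · by_cases h : k - (j - i) ≤ i
        · simp only [if_pos h]
          have e : k = j := by omega
          rw [show k - (j - i) = i by omega, he, ← e]; exact h4
        · simp only [if_neg h]
          rw [show k - (j-i) + (j-i) = k by omega]; exact h4
    intro i hi j hj he
    simp only [Finset.coe_range, Set.mem_Iio] at hi hj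
    rcases lt_trichotomy i j with h | h | h
    · exact absurd he (this i j h (by omega))
    · exact h
    · exact absurd he.symm (this j i h (by omega))
  have hc : ((Finset.range (k+1)).image f).card = k + 1 := by
    rw [Finset.card_image_of_injOn hinj, Finset.card_range]
  have hle : ((Finset.range (k+1)).image f).card ≤ R.ncard := by
    rw [← Set.ncard_coe_finset]
    apply Set.ncard_le_ncard _ hR
    intro v hv
    simp only [Finset.coe_image, Finset.coe_range, Set.mem_image, Set.mem_Iio] at hv
    obtain ⟨i, hi, rfl⟩ := hv
    exact h1 i (by omega)
  exact_mod_cast (by omega : k < ℓ)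

end Model
end DaC

namespace DaC
namespace Model

variable {Ω : Type*} (X : Model Ω) {ω : Ω}

lemma Bad_small (hL : ∀ N : ℕ, 0 < N → X.LpN N) (L M : ℕ) (hM : 20 * (cl L + 1) ≤ M) (ε : ℝ)
    (hε : 0 < ε) : ∃ s0 : ℤ, ∀ s, s0 ≤ s → ∀ n < L, ∀ j : ℤ,
      X.P (X.Bad s (s/10) (s/M) (cl n * (s/M)) j) ≤ ε := by
  have hcl := cl_nonneg L
  have hM0 : 0 < M := by omega
  set K : ℕ := 2 * M + 1 with hK
  set η : ℝ := min (ε/8) ((ε/8)^(3*K) / (K+1)) with hη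
  have hη0 : 0 < η := by positivity
  have hη1 : η ≤ ε/8 := min_le_left _ _
  have hη2 : (K+1) * η ≤ (ε/8)^(3*K) := by
    have : η ≤ (ε/8)^(3*K) / (K+1) := min_le_right _ _
    rw [le_div_iff₀ (by positivity)] at this
    linarith
  obtain ⟨n1, hn1⟩ := hL (2*M) (by omega) η hη0
  obtain ⟨n2, hn2⟩ := hL 1 (by omega) η hη0
  refine ⟨max (max (2*n1) (2*n2)) (max (20*M) 200), fun s hs n hn j => ?_⟩
  have hs1 : 2 * n1 ≤ s ∧ 2 * n2 ≤ s ∧ 20 * M ≤ s ∧ 200 ≤ s := by omega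
  obtain ⟨s1, s2, s3, s4⟩ := hs1
  have hMZ : (0:ℤ) < M := by exact_mod_cast hM0
  obtain ⟨w1, w2⟩ := exists_win (u := (M:ℤ)) (y := s) hMZ
  set u := s / (M:ℤ) with hu
  have hu1 : 20 ≤ u := by
    by_contra hc
    push Not at hc
    nlinarith
  set t := s / 10 with ht
  have ht1 : 10 * t ≤ s ∧ s < 10 * t + 10 := by omega
  have hsM : s < 2 * M * u := by nlinarith
  have hc1 : cl (n+1) * u ≤ t := by
    have a1 : cl (n+1) ≤ cl L := cl_mono (by omega)
    have a2 : cl (n+1) * u ≤ cl L * u := mul_le_mul_of_nonneg_right a1 (by omega)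
    have a3 : 20 * (cl L + 1) * u ≤ M * u := mul_le_mul_of_nonneg_right hM (by omega)
    nlinarith
  have hc2 : cl (n+1) * u = 2 * (cl n * u) + 4 * u := by simp only [cl]; ring
  have ha : 0 ≤ cl n * u := mul_nonneg (cl_nonneg n) (by omega)
  set a := cl n * u with haa
  rw [hc2] at hc1
  have b1 : X.P (X.Hc a (s-a) (j*u) (j*u + (s-2*a-u)) ⊤) ≤ ε/8 := by
    rw [X.P_Hc']
    refine (hn1 _ ?_ _ ?_).trans hη1
    · omega
    · push_cast; nlinarith
  have b3 : X.P (X.Vc (2*a+4*u) s ((j+1)*u) ((j+1)*u + (s-2*a-2*u)) ⊤) ≤ ε/8 := by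
    rw [X.P_Vc']
    refine (hn1 _ ?_ _ ?_).trans hη1
    · omega
    · push_cast; nlinarith
  have b4 : X.P (X.Vc 0 (s-(2*a+4*u)) ((j+1)*u) ((j+1)*u + (s-2*a-2*u)) ⊤) ≤ ε/8 := by
    rw [X.P_Vc']
    refine (hn1 _ ?_ _ ?_).trans hη1
    · omega
    · push_cast; nlinarith
  have b2 : X.P (X.DD (s-2*a-2*u) s (3*t) 0) ≤ ε/8 := by
    have hl := X.landing (T := s-2*a-2*u) (b := s) (q := 3*t) (u := 2*a+3*u) (K := K)
      (by omega) (by omega) (by omega) (by omega) (by omega)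
    have c1 : X.h (((K:ℤ)-1)*(2*a+3*u)) (s-2*a-2*u) ≤ η := by
      refine hn2 _ (by omega) _ ?_
      rw [hK]; push_cast
      nlinarith
    have c2 : X.h (s-2*a-2*u) (s - (2*a+3*u)) ≤ η := by
      refine hn1 _ (by omega) _ ?_
      push_cast; nlinarith
    have c3 : X.P (X.DD (s-2*a-2*u) s (3*t) 0) ^ (3*K) ≤ (ε/8)^(3*K) := by
      refine hl.trans (le_trans ?_ hη2)
      have : (K:ℝ) * X.h (s-2*a-2*u) (s - (2*a+3*u)) ≤ K * η :=
        mul_le_mul_of_nonneg_left c2 (by positivity)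
      linarith
    exact le_of_pow_le_pow_left₀ (by omega) (by positivity) c3
  have b2' := X.P_Land s (3*t) (s-2*a-2*u) ((j+1)*u)
  unfold Bad
  refine (X.P_union _ _).trans ?_
  have d1 := X.P_union (X.Hc a (s-a) (j*u) (j*u + (s-2*a-u)) ⊤)
    (X.Land s (3*t) (s-2*a-2*u) ((j+1)*u))
  have d2 := X.P_union (X.Vc (2*a+4*u) s ((j+1)*u) ((j+1)*u + (s-2*a-2*u)) ⊤)
    (X.Vc 0 (s-(2*a+4*u)) ((j+1)*u) ((j+1)*u + (s-2*a-2*u)) ⊤)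
  linarith

/-- Asymptotic independence of slab crossings. -/
def Mixing : Prop := ∀ ε : ℝ, 0 < ε → ∃ s0 : ℤ, ∀ s, s0 ≤ s → ∀ ℓ : ℕ,
  X.P (X.Hc (s/10) (2*(s/10)) 0 (4*s) ℓ ∩ X.Hc (8*(s/10)) (9*(s/10)) 0 (4*s) ℓ) ≤
    X.P (X.Hc (s/10) (2*(s/10)) 0 (4*s) ℓ) * X.P (X.Hc (8*(s/10)) (9*(s/10)) 0 (4*s) ℓ) + ε

lemma recur (hL : ∀ N : ℕ, 0 < N → X.LpN N) (hmix : X.Mixing) (ε : ℝ) (hε : 0 < ε)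
    (hε1 : ε ≤ 1/30000) : ∃ s0 : ℤ, ∀ s, s0 ≤ s → ∀ ℓ : ℕ,
      X.P (X.Hc 0 (s/10) 0 (4*(s/10)) ℓ) ≤ ε → X.P (X.Hc 0 s 0 (4*s) ((200 * ℓ : ℕ) : ℕ∞)) ≤ ε := by
  obtain ⟨LL, hLL⟩ : ∃ L : ℕ, L = 200 := ⟨_, rfl⟩
  have hcl := cl_nonneg LL
  obtain ⟨M, hM⟩ : ∃ M : ℕ, 20 * (cl LL + 1) ≤ M := ⟨(20 * (cl LL + 1)).toNat, by omega⟩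
  have hM0 : 0 < M := by omega
  set J : ℕ := 8 * M with hJ
  have hJ0 : (0:ℝ) < J := by rw [hJ]; positivity
  obtain ⟨s1, h1⟩ := X.Bad_small hL LL M hM (ε / (800 * J)) (by positivity)
  obtain ⟨s2, h2⟩ := hmix (ε/4) (by positivity)
  obtain ⟨n3, h3⟩ := hL 1 (by omega) ε hε
  refine ⟨max (max s1 s2) (max (20 * n3 + 20) (max (20*M) 200)), fun s hs ℓ hℓ => ?_⟩
  have hs' : s1 ≤ s ∧ s2 ≤ s ∧ 20 * n3 + 20 ≤ s ∧ 20 * M ≤ s ∧ 200 ≤ s := by omega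
  obtain ⟨g1, g2, g3, g4, g5⟩ := hs'
  have hMZ : (0:ℤ) < M := by exact_mod_cast hM0
  obtain ⟨w1, w2⟩ := exists_win (u := (M:ℤ)) (y := s) hMZ
  have h1s := h1 s g1
  have h2s := h2 s g2 ℓ
  set u := s / (M:ℤ) with hu
  have hu1 : 20 ≤ u := by
    by_contra hc
    push Not at hc
    nlinarith
  set t := s / 10 with ht
  have ht1 : 10 * t ≤ s ∧ s < 10 * t + 10 := by omega
  have hsM : s < 2 * M * u := by nlinarith
  have hclu : cl LL * u ≤ t := by
    have a3 : 20 * (cl LL + 1) * u ≤ M * u := mul_le_mul_of_nonneg_right hM (by omega)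
    nlinarith
  have hincl := X.short_incl (s := s) (t := t) (u := u) (J := J) (L := LL) (by omega) hclu ht1.1
    (by omega) ht1.2 (by rw [hJ]; push_cast; linarith) ℓ
  rw [← hLL]
  refine (X.P_mono hincl).trans ((X.P_union _ _).trans ?_)
  have hbad : X.P (⋃ n ∈ Finset.range LL, ⋃ j ∈ Finset.range J, X.Bad s t u (cl n * u) (j : ℕ))
      ≤ ε / 4 := by
    refine (X.P_biUnion _ _).trans ?_
    have : ∀ n ∈ Finset.range LL, X.P (⋃ j ∈ Finset.range J, X.Bad s t u (cl n * u) (j : ℕ))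
        ≤ J * (ε / (800 * J)) := by
      intro n hn
      refine (X.P_biUnion _ _).trans ?_
      have hj : ∀ j ∈ Finset.range J, X.P (X.Bad s t u (cl n * u) (j : ℕ)) ≤ ε / (800 * J) :=
        fun j _ => h1s n (Finset.mem_range.1 hn) j
      refine (Finset.sum_le_sum hj).trans ?_
      simp
    refine (Finset.sum_le_sum this).trans (le_of_eq ?_)
    rw [Finset.sum_const, Finset.card_range, nsmul_eq_mul]
    rw [hLL]
    field_simp
    norm_num
  have hslab : X.P (X.Hc 0 t 0 (4*s) ℓ) ≤ 102 * ε := by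
    have c1 : X.P (X.Hc 0 t 0 (4*s) ℓ) ≤ X.P (X.Hc 0 t 0 ((50:ℕ)*t) ℓ) := by
      apply X.P_mono
      apply X.EvL_mono _ le_rfl le_rfl le_rfl
      intro v hv
      simp only [box, Set.mem_ofPred_eq] at hv ⊢
      push_cast
      omega
    have c2 := X.confine (t := t) (by omega) 50 ℓ
    have c3 : X.h (2*t) t ≤ ε := h3 t (by omega) (2*t) (by push_cast; omega)
    push_cast at c1 c2
    linarith
  have p1 : X.P (X.Hc t (2*t) 0 (4*s) ℓ) ≤ 102 * ε := by
    rw [X.P_Hc, show 2*t - t = t by ring, sub_zero]; exact hslab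
  have p2 : X.P (X.Hc (8*t) (9*t) 0 (4*s) ℓ) ≤ 102 * ε := by
    rw [X.P_Hc, show 9*t - 8*t = t by ring, sub_zero]; exact hslab
  have p3 := mul_le_mul p1 p2 (X.P_nonneg _) (by positivity)
  nlinarith

lemma iter (hL : ∀ N : ℕ, 0 < N → X.LpN N) (hmix : X.Mixing) (ε : ℝ) (hε : 0 < ε)
    (hε1 : ε ≤ 1/30000) : ∃ s0 : ℕ, 0 < s0 ∧ ∀ k n : ℕ, 10 ^ k * s0 ≤ n →
      X.P (X.Hc 0 n 0 (4*n) ((200 ^ k : ℕ) : ℕ∞)) ≤ ε := by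
  obtain ⟨s0, hs0⟩ := X.recur hL hmix ε hε hε1
  refine ⟨s0.toNat + 1, by omega, ?_⟩
  intro k
  induction k with
  | zero =>
    intro n hn
    have : X.Hc 0 n 0 (4*n) ((200 ^ 0 : ℕ) : ℕ∞) = ∅ := by
      ext ω
      simp only [Set.mem_empty_iff_false, iff_false]
      rintro ⟨f, k, h1, h2, h3, h4, h5⟩
      have : k = 0 := by
        have : k < 200 ^ 0 := by exact_mod_cast h5
        simpa using this
      subst this
      simp only [Set.mem_ofPred_eq] at h3 h4
      omega
    rw [this, X.P_empty]; exact hε.le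
  | succ k ih =>
    intro n hn
    have h1 : 10 ^ k * (s0.toNat + 1) ≤ n / 10 := by
      rw [Nat.le_div_iff_mul_le (by norm_num)]
      calc _ = 10 ^ (k+1) * (s0.toNat + 1) := by ring
        _ ≤ n := hn
    have h2 := ih _ h1
    have h3 : s0 ≤ n := by
      have : 1 ≤ 10 ^ (k+1) := Nat.one_le_pow _ _ (by norm_num)
      have : s0.toNat + 1 ≤ n := le_trans (by nlinarith) hn
      omega
    have h4 := hs0 n h3 (200 ^ k) (by push_cast at h2 ⊢; exact h2)
    rwa [← pow_succ'] at h4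

lemma box_ncard (n : ℕ) : (box 0 n 0 (4*n)).ncard ≤ (n+1) * (4*n+1) := by
  have : box 0 n 0 (4*n) = ((Finset.Icc (0:ℤ) n ×ˢ Finset.Icc (0:ℤ) (4*n) : Finset (ℤ × ℤ)) : Set V) := by
    ext v
    simp only [box, Finset.coe_product, Finset.coe_Icc, Set.mem_prod, Set.mem_Icc, Set.mem_ofPred_eq]
  rw [this, Set.ncard_coe_finset, Finset.card_product]
  simp only [Int.card_Icc]
  apply le_of_eq
  congr 1 <;> omega

/-- Short crossings of the elementary rectangle are unlikely. -/
lemma four (hL : ∀ N : ℕ, 0 < N → X.LpN N) (hmix : X.Mixing) (ε : ℝ) (hε : 0 < ε) :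
    ∃ n0 : ℕ, ∀ n : ℕ, n0 ≤ n → X.h n (4*n) ≤ ε := by
  obtain ⟨s, hs, hs'⟩ := X.iter hL hmix (min ε (1/30000)) (by positivity) (min_le_right _ _)
  obtain ⟨k0, hk0⟩ := pow_unbounded_of_one_lt (1000 * s^2) (by norm_num : 1 < 2)
  refine ⟨10 ^ k0 * s, fun n hn => ?_⟩
  have h10 : 10 ^ k0 ≤ n / s := by rwa [Nat.le_div_iff_mul_le hs]
  have hns : n / s ≠ 0 := by
    have : 0 < 10 ^ k0 := by positivity
    omega
  set k := Nat.log 10 (n / s) with hk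
  have hkk : k0 ≤ k := by
    rw [hk]; exact (Nat.le_log_iff_pow_le (by norm_num) hns).2 h10
  have h1 : 10 ^ k * s ≤ n := by
    rw [← Nat.le_div_iff_mul_le hs]
    exact Nat.pow_log_le_self 10 hns
  have h2 : n < 10 ^ (k+1) * s := by
    rw [← Nat.div_lt_iff_lt_mul hs]
    exact Nat.lt_pow_succ_log_self (by norm_num) _
  have hn1 : 1 ≤ n := by
    have : 0 < 10 ^ k * s := by positivity
    omega
  have h3 : (n+1) * (4*n+1) ≤ 200 ^ k := by
    calc (n+1) * (4*n+1) ≤ (2*n) * (5*n) := Nat.mul_le_mul (by omega) (by omega)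
      _ = 10 * n^2 := by ring
      _ ≤ 10 * (10 ^ (k+1) * s)^2 := by gcongr
      _ = (1000 * s^2) * (10 ^ k)^2 := by ring
      _ ≤ 2 ^ k * (10 ^ k)^2 := by
          apply Nat.mul_le_mul_right
          exact hk0.le.trans (Nat.pow_le_pow_right (by norm_num) hkk)
      _ = 200 ^ k := by
          rw [show 200 = 2 * (10 * 10) by norm_num, mul_pow, mul_pow]; ring
  calc X.h n (4*n) ≤ X.P (X.Hc 0 n 0 (4*n) ((200 ^ k : ℕ) : ℕ∞)) :=
        X.P_mono (X.EvL_finite _ _ _ (box_finite _ _ _ _) _ ((box_ncard n).trans h3))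
    _ ≤ min ε (1/30000) := hs' k n h1
    _ ≤ ε := min_le_left _ _

/-- Main abstract theorem. -/
theorem mainA {θ : ℝ} (hθ : 0 < θ) (h : X.Lp θ) (hmix : X.Mixing) (L : ℕ) (ε : ℝ) (hε : 0 < ε) :
    ∃ n0 : ℕ, ∀ n : ℕ, n0 ≤ n → X.h n (L*n) ≤ ε := by
  have hL := fun N hN => X.LpN_all hθ h N hN
  obtain ⟨n1, h1⟩ := X.four hL hmix (ε / (2 * (L+1))) (by positivity)
  obtain ⟨n2, h2⟩ := hL 1 (by norm_num) (ε / (2 * (L+1))) (by positivity)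
  refine ⟨max n1 (n2.toNat + 1), fun n hn => ?_⟩
  have hn' : n1 ≤ n ∧ n2.toNat + 1 ≤ n := by omega
  have c1 := X.confine (t := n) (by omega) L ⊤
  have c2 := h1 n hn'.1
  have c3 : X.h (2*n) n ≤ ε / (2 * (L+1)) := h2 n (by omega) _ (by push_cast; omega)
  calc X.h n (L*n) ≤ _ := c1
    _ ≤ (L+1) * (ε / (2 * (L+1)) + ε / (2 * (L+1))) := by
        apply mul_le_mul_of_nonneg_left _ (by positivity)
        exact add_le_add c2 c3
    _ = ε := by field_simp; norm_num

end Model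
end DaC

namespace DaC

/-! ### Binary digits of Lebesgue measure -/

lemma boolOf_eq_true {P : Prop} : boolOf P = true ↔ P := by
  unfold boolOf; exact @decide_eq_true_iff P (Classical.propDecidable P)

lemma boolOf_eq_false {P : Prop} : boolOf P = false ↔ ¬ P := by
  unfold boolOf; exact @decide_eq_false_iff_not P (Classical.propDecidable P)

lemma bool_ext_true {a b : Bool} (h : a = true ↔ b = true) : a = b := by
  cases a <;> cases b <;> simp_all

lemma measurable_boolOf {α : Type*} [MeasurableSpace α] {q : α → Prop}
    (h : MeasurableSet {x | q x}) : Measurable (fun x => boolOf (q x)) := by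
  apply measurable_to_bool
  have : (fun x => boolOf (q x)) ⁻¹' {true} = {x | q x} := by
    ext x; simp [boolOf_eq_true]
  rw [this]; exact h

lemma measurable_bit (n : ℕ) : Measurable (bit n) := by
  unfold bit
  apply measurable_boolOf
  have h1 : Measurable (fun x : ℝ => ⌊x * 2 ^ (n+1)⌋) := Int.measurable_floor.comp (by fun_prop)
  exact h1 (MeasurableSet.of_discrete (s := {z : ℤ | z % 2 = 1}))

lemma bit_add_one (n : ℕ) (x : ℝ) : bit n (x + 1) = bit n x := by
  apply bool_ext_true
  rw [bit, bit, boolOf_eq_true, boolOf_eq_true]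
  have : (x + 1) * 2 ^ (n+1) = x * 2 ^ (n+1) + ((2 * 2 ^ n : ℤ) : ℝ) := by push_cast; ring
  rw [this, Int.floor_add_intCast]
  omega

lemma bit_succ (n : ℕ) (x : ℝ) : bit (n+1) x = bit n (2 * x) := by
  unfold bit
  rw [show 2 * x * 2 ^ (n+1) = x * 2 ^ (n+1+1) by ring]

noncomputable def fair : Measure Bool := (2⁻¹ : ℝ≥0∞) • (Measure.dirac true + Measure.dirac false)

instance : IsProbabilityMeasure fair := by
  constructor
  simp [fair, ENNReal.inv_two_add_inv_two]

lemma base_eq (A : Set ℝ) : base A = volume (A ∩ Set.Ico 0 1) := by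
  unfold base
  rw [restrict_Ico_eq_restrict_Ioc.symm, Measure.restrict_apply' measurableSet_Ico]

instance : IsProbabilityMeasure base := by
  constructor
  rw [base_eq]; simp

lemma bit_zero_lo {x : ℝ} (h0 : 0 ≤ x) (h1 : x < 1/2) : bit 0 x = false := by
  rw [bit, boolOf_eq_false]
  have : ⌊x * 2 ^ (0+1)⌋ = 0 := by
    rw [Int.floor_eq_iff]; push_cast; constructor <;> linarith
  rw [this]; norm_num

lemma bit_zero_hi {x : ℝ} (h0 : 1/2 ≤ x) (h1 : x < 1) : bit 0 x = true := by
  rw [bit, boolOf_eq_true]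
  have : ⌊x * 2 ^ (0+1)⌋ = 1 := by
    rw [Int.floor_eq_iff]; push_cast; constructor <;> linarith
  rw [this]; norm_num

lemma base_split {S : Set ℝ} (hS : MeasurableSet S) (hp : ∀ x, x + 1 ∈ S ↔ x ∈ S) (t : Set Bool) :
    base {x | bit 0 x ∈ t ∧ 2 * x ∈ S} = fair t * base S := by
  classical
  set T := S ∩ Set.Ico (0:ℝ) 1 with hT
  have hTm : MeasurableSet T := hS.inter measurableSet_Ico
  have e1 : volume ((fun x : ℝ => 2 * x) ⁻¹' T) = 2⁻¹ * volume T := by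
    rw [Real.volume_preimage_mul_left (by norm_num)]
    congr 1
    rw [abs_of_pos (by norm_num), ENNReal.ofReal_inv_of_pos (by norm_num)]
    simp
  have e2 : volume ((fun x : ℝ => 2 * x) ⁻¹' ((fun x : ℝ => x + (-1)) ⁻¹' T)) = 2⁻¹ * volume T := by
    rw [Real.volume_preimage_mul_left (by norm_num), measure_preimage_add_right]
    congr 1
    rw [abs_of_pos (by norm_num), ENNReal.ofReal_inv_of_pos (by norm_num)]
    simp
  have hd : {x | bit 0 x ∈ t ∧ 2 * x ∈ S} ∩ Set.Ico 0 1 =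
      (if false ∈ t then (fun x : ℝ => 2 * x) ⁻¹' T else ∅) ∪
      (if true ∈ t then (fun x : ℝ => 2 * x) ⁻¹' ((fun x : ℝ => x + (-1)) ⁻¹' T) else ∅) := by
    ext x
    have hp2 : 2 * x + -1 ∈ S ↔ 2 * x ∈ S := by
      rw [← hp (2 * x + -1)]; ring_nf
    constructor
    · rintro ⟨⟨h1, h2⟩, h3, h4⟩
      rcases lt_or_ge x (1/2) with h | h
      · left
        rw [bit_zero_lo h3 h] at h1
        rw [if_pos h1]
        exact ⟨h2, by simp only [Set.mem_Ico]; constructor <;> linarith⟩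
      · right
        rw [bit_zero_hi h h4] at h1
        rw [if_pos h1]
        refine ⟨?_, by simp only [Set.mem_Ico]; constructor <;> linarith⟩
        exact hp2.2 h2
    · rintro (h | h)
      · split_ifs at h with ht
        · obtain ⟨h1, h2, h3⟩ := h
          simp only at h1 h2 h3
          refine ⟨⟨?_, h1⟩, by constructor <;> linarith⟩
          rw [bit_zero_lo (by linarith) (by linarith)]; exact ht
        · exact h.elim
      · split_ifs at h with ht
        · obtain ⟨h1, h2, h3⟩ := h
          simp only at h1 h2 h3
          refine ⟨⟨?_, hp2.1 h1⟩, by constructor <;> linarith⟩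
          rw [bit_zero_hi (by linarith) (by linarith)]; exact ht
        · exact h.elim
  rw [base_eq, hd, base_eq S, ← hT, measure_union]
  · have hf : fair t = (if false ∈ t then 2⁻¹ else 0) + (if true ∈ t then 2⁻¹ else 0) := by
      simp only [fair, Measure.smul_apply, Measure.add_apply, smul_eq_mul, mul_add,
        Measure.dirac_apply, Set.indicator_apply]
      rw [add_comm]; split_ifs <;> simp
    rw [hf, add_mul]
    congr 1 <;> split_ifs <;> simp [e1, e2]
    all_goals first | exact e1 | exact e2
  · rw [Set.disjoint_left]
    intro x h1 h2
    split_ifs at h1 h2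
    · have a := h1.2; have b := h2.2
      simp only [Set.mem_Ico] at a b; linarith
    all_goals first | exact h1.elim | exact h2.elim
  · split_ifs
    · exact (measurable_id.const_mul 2 |>.add_const (-1)) hTm
    · exact MeasurableSet.empty

lemma base_bits (n : ℕ) (t : ℕ → Set Bool) :
    base {x | ∀ i < n, bit i x ∈ t i} = ∏ i ∈ Finset.range n, fair (t i) := by
  induction n generalizing t with
  | zero => simp
  | succ n ih =>
    have : {x | ∀ i < n+1, bit i x ∈ t i} =
        {x | bit 0 x ∈ t 0 ∧ 2 * x ∈ {y | ∀ i < n, bit i y ∈ t (i+1)}} := by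
      ext x
      simp only [Set.mem_ofPred_eq, ← bit_succ]
      constructor
      · intro h
        exact ⟨h 0 (by omega), fun i hi => h (i+1) (by omega)⟩
      · rintro ⟨h1, h2⟩ i hi
        rcases i with _ | i
        · exact h1
        · exact h2 i (by omega)
    rw [this, base_split, ih, Finset.prod_range_succ']
    · rw [mul_comm]
    · have : {y | ∀ i < n, bit i y ∈ t (i+1)} = ⋂ i ∈ Finset.range n, bit i ⁻¹' t (i+1) := by
        ext y; simp
      rw [this]
      exact Finset.measurableSet_biInter _ fun i _ => measurable_bit i (MeasurableSet.of_discrete)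
    · intro x; simp only [Set.mem_ofPred_eq, bit_add_one]

lemma base_map_bits : base.map (fun x n => bit n x) = Measure.infinitePi (fun _ : ℕ => fair) := by
  classical
  apply Measure.eq_infinitePi
  intro s t ht
  rw [Measure.map_apply (measurable_pi_lambda _ measurable_bit)
    (.pi s.countable_toSet fun _ _ => ht _)]
  obtain ⟨n, hn⟩ := s.exists_nat_subset_range
  have h := base_bits n (fun i => if i ∈ s then t i else Set.univ)
  have e : (fun x n => bit n x) ⁻¹' (Set.pi s t) =
      {x | ∀ i < n, bit i x ∈ (if i ∈ s then t i else Set.univ)} := by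
    ext x
    simp only [Set.mem_preimage, Set.mem_pi, Set.mem_ofPred_eq]
    constructor
    · intro h i _
      split_ifs with hi
      · exact h i hi
      · trivial
    · intro h i hi
      have := h i (Finset.mem_range.1 (hn hi))
      rwa [if_pos (by exact hi)] at this
  rw [e, h]
  symm
  rw [← Finset.prod_subset hn]
  · apply Finset.prod_congr rfl
    intro i hi; rw [if_pos hi]
  · intro i _ hi; rw [if_neg hi]; exact measure_univ

noncomputable def binSum (b : ℕ → Bool) : ℝ := ∑' k : ℕ, if b k then ((2 : ℝ)⁻¹) ^ (k + 1) else 0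

lemma measurable_binSum : Measurable binSum := by
  unfold binSum
  apply Measurable.tsum
  intro k
  refine Measurable.ite ?_ measurable_const measurable_const
  have h : Measurable (fun b : ℕ → Bool => b k) := measurable_pi_apply k
  exact h (MeasurableSet.of_discrete (s := {true}))

/-- Independent bits with arbitrary thresholds. -/
theorem base_map_thr (F : ℕ → ℝ → Bool) (hF : ∀ i, Measurable (F i)) :
    Measurable (fun (x : ℝ) (i : ℕ) => F i (unif i x)) ∧
    base.map (fun x i => F i (unif i x)) = Measure.infinitePi (fun i : ℕ =>
      (Measure.infinitePi (fun _ : ℕ => fair)).map (fun b => F i (binSum b))) := by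
  have hb : Measurable (fun (x : ℝ) (n : ℕ) => bit n x) := measurable_pi_lambda _ measurable_bit
  have hG : ∀ i, Measurable (fun b : ℕ → Bool => F i (binSum b)) :=
    fun i => (hF i).comp measurable_binSum
  have hr : Measurable (fun (b : ℕ → Bool) (q : ℕ × ℕ) => b (Nat.pair q.1 q.2)) := by fun_prop
  have hc : Measurable (MeasurableEquiv.curry ℕ ℕ Bool) := MeasurableEquiv.measurable _
  have hP : Measurable (fun (b : ℕ → ℕ → Bool) (i : ℕ) => F i (binSum (b i))) :=
    measurable_pi_lambda _ fun i => (hG i).comp (measurable_pi_apply i)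
  have e : (fun (x : ℝ) (i : ℕ) => F i (unif i x)) =
    (fun (b : ℕ → ℕ → Bool) (i : ℕ) => F i (binSum (b i))) ∘ (MeasurableEquiv.curry ℕ ℕ Bool) ∘
      (fun (b : ℕ → Bool) (q : ℕ × ℕ) => b (Nat.pair q.1 q.2)) ∘ (fun (x : ℝ) (n : ℕ) => bit n x) := by
    rfl
  have inj : Function.Injective (fun q : ℕ × ℕ => Nat.pair q.1 q.2) :=
    Nat.pairEquiv.injective
  refine ⟨by rw [e]; exact hP.comp (hc.comp (hr.comp hb)), ?_⟩
  rw [e, ← Measure.map_map hP (hc.comp (hr.comp hb)), ← Measure.map_map hc (hr.comp hb),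
    ← Measure.map_map hr hb, base_map_bits]
  have e2 := Measure.map_infinitePi_infinitePi_of_inj (P := fun _ : ℕ => fair) inj
  rw [e2]
  have e3 := Measure.infinitePi_map_curry (ι := ℕ) (κ := ℕ) (fun _ _ => fair)
  rw [e3]
  exact Measure.infinitePi_map_pi (μ := fun _ : ℕ => Measure.infinitePi (fun _ : ℕ => fair)) hG

end DaC

namespace DaC

/-! ### Product spaces of bits -/

section Bits
variable {ι : Type*} 

/-- The set `S` depends only on the coordinates in `F`. -/
def Dep (F : Set ι) (S : Set (ι → Bool)) : Prop :=
  ∀ ω ω' : ι → Bool, (∀ i ∈ F, ω i = ω' i) → (ω ∈ S ↔ ω' ∈ S)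

lemma Dep.mono {F F' : Set ι} {S : Set (ι → Bool)} (h : Dep F S) (hF : F ⊆ F') : Dep F' S :=
  fun ω ω' hh => h ω ω' fun i hi => hh i (hF hi)

lemma Dep.inter {F : Set ι} {S T : Set (ι → Bool)} (h : Dep F S) (h' : Dep F T) : Dep F (S ∩ T) :=
  fun ω ω' hh => and_congr (h ω ω' hh) (h' ω ω' hh)

lemma Dep.measurable {F : Set ι} (hF : F.Finite) {S : Set (ι → Bool)} (h : Dep F S) :
    MeasurableSet S := by
  classical
  have : Finite F := hF
  have e : S = (fun ω (i : F) => ω i) ⁻¹' ((fun ω (i : F) => ω i) '' S) := by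
    ext ω
    constructor
    · exact fun hω => ⟨ω, hω, rfl⟩
    · rintro ⟨ω', h', h''⟩
      exact (h ω' ω fun i hi => congrFun h'' ⟨i, hi⟩).1 h'
  rw [e]
  have hm : Measurable (fun (ω : ι → Bool) (i : F) => ω i) := by fun_prop
  exact hm (Set.toFinite _).measurableSet

variable (μ : ι → Measure Bool) [∀ i, IsProbabilityMeasure (μ i)]

lemma bits_resample [DecidableEq ι] (i : ι) :
    ((Measure.infinitePi μ).prod (μ i)).map (fun q => Function.update q.1 i q.2) =
      Measure.infinitePi μ := by
  apply Measure.eq_infinitePi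
  intro s t ht
  have hm : Measurable (fun q : (ι → Bool) × Bool => Function.update q.1 i q.2) := by
    apply measurable_pi_lambda
    intro j
    by_cases h : j = i
    · subst h; simpa using measurable_snd
    · simp only [Function.update_of_ne h]; fun_prop
  rw [Measure.map_apply hm (.pi s.countable_toSet fun _ _ => ht _)]
  have e : (fun q : (ι → Bool) × Bool => Function.update q.1 i q.2) ⁻¹' (Set.pi s t) =
      (Set.pi (s.erase i : Finset ι) t) ×ˢ (if i ∈ s then t i else Set.univ) := by
    ext q
    simp only [Set.mem_preimage, Set.mem_pi, Set.mem_prod, Finset.mem_coe, Finset.mem_erase]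
    constructor
    · intro h
      refine ⟨fun j hj => by simpa [hj.1] using h j hj.2, ?_⟩
      split_ifs with hi
      · simpa using h i hi
      · trivial
    · rintro ⟨h1, h2⟩ j hj
      by_cases hji : j = i
      · subst hji
        rw [if_pos hj] at h2
        simpa using h2
      · simpa [hji] using h1 j ⟨hji, hj⟩
  rw [e, Measure.prod_prod, Measure.infinitePi_pi _ (fun j _ => ht j)]
  by_cases hi : i ∈ s
  · rw [if_pos hi, Finset.prod_erase_mul _ _ hi]
  · rw [if_neg hi, Finset.erase_eq_of_notMem hi, measure_univ, mul_one]

lemma bool_sum (ν : Measure Bool) [IsProbabilityMeasure ν] :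
    ν.real {false} = 1 - ν.real {true} := by
  have := probReal_compl_eq_one_sub (μ := ν) (s := {true}) (MeasurableSet.of_discrete)
  rw [← this]; congr 1; ext b; cases b <;> simp

lemma bits_split [DecidableEq ι] (i : ι) {S : Set (ι → Bool)} (hS : MeasurableSet S) :
    (Measure.infinitePi μ).real S =
      (μ i).real {true} * (Measure.infinitePi μ).real {ω | Function.update ω i true ∈ S} +
      (1 - (μ i).real {true}) * (Measure.infinitePi μ).real {ω | Function.update ω i false ∈ S} := by
  have hm : Measurable (fun q : (ι → Bool) × Bool => Function.update q.1 i q.2) := by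
    apply measurable_pi_lambda
    intro j
    by_cases h : j = i
    · subst h; simpa using measurable_snd
    · simp only [Function.update_of_ne h]; fun_prop
  have hb : ∀ b : Bool, Measurable (fun ω : ι → Bool => Function.update ω i b) := fun b =>
    hm.comp (measurable_id.prodMk measurable_const)
  rw [← bool_sum]
  conv_lhs => rw [← bits_resample μ i]
  rw [measureReal_def, Measure.map_apply hm hS]
  have e : (fun q : (ι → Bool) × Bool => Function.update q.1 i q.2) ⁻¹' S =
      ({ω | Function.update ω i true ∈ S} ×ˢ {true}) ∪
      ({ω | Function.update ω i false ∈ S} ×ˢ {false}) := by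
    ext ⟨ω, b⟩
    cases b <;> simp
  rw [e, measure_union, Measure.prod_prod, Measure.prod_prod, ENNReal.toReal_add, ENNReal.toReal_mul,
    ENNReal.toReal_mul]
  · simp only [measureReal_def]; ring
  · exact ENNReal.mul_ne_top (measure_ne_top _ _) (measure_ne_top _ _)
  · exact ENNReal.mul_ne_top (measure_ne_top _ _) (measure_ne_top _ _)
  · rw [Set.disjoint_left]
    rintro ⟨ω, b⟩ h1 h2
    have a := h1.2; have c := h2.2
    simp only [Set.mem_singleton_iff] at a c
    rw [a] at c; exact absurd c (by simp)
  · exact ((hb false) hS).prod MeasurableSet.of_discrete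

lemma Dep.update [DecidableEq ι] {F : Set ι} {S : Set (ι → Bool)} (h : Dep F S) (i : ι) (b : Bool) :
    Dep (F \ {i}) {ω | Function.update ω i b ∈ S} := by
  intro ω ω' hh
  apply h
  intro j hj
  by_cases hji : j = i
  · subst hji; simp
  · simp [hji, hh j ⟨hj, hji⟩]

lemma Dep.empty {S : Set (ι → Bool)} (h : Dep ∅ S) : S = ∅ ∨ S = Set.univ := by
  by_cases hS : S.Nonempty
  · right
    obtain ⟨ω, hω⟩ := hS
    ext ω'
    simp only [Set.mem_univ, iff_true]
    exact (h ω ω' (by simp)).1 hω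
  · left; exact Set.not_nonempty_iff_eq_empty.1 hS

/-- Independence of events depending on disjoint finite sets of coordinates. -/
lemma bits_indep (F : Finset ι) {G : Set ι} (hG : G.Finite) {S T : Set (ι → Bool)}
    (hd : Disjoint (F : Set ι) G) (hS : Dep F S) (hT : Dep G T) :
    (Measure.infinitePi μ).real (S ∩ T) =
      (Measure.infinitePi μ).real S * (Measure.infinitePi μ).real T := by
  classical
  induction F using Finset.induction_on generalizing S with
  | empty =>
    rw [Finset.coe_empty] at hS
    rcases hS.empty with h | h <;> subst h <;> simp
  | insert i F hi ih =>
    have hS' : ∀ b, Dep F {ω | Function.update ω i b ∈ S} := fun b =>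
      (hS.update i b).mono (by
        rintro j ⟨hj1, hj2⟩
        rcases Finset.mem_insert.1 (Finset.mem_coe.1 hj1) with h | h
        · exact absurd h hj2
        · exact h)
    have hd' : Disjoint (F : Set ι) G := hd.mono_left (by simp)
    have hiG : i ∉ G := fun h => Set.disjoint_left.1 hd (by simp) h
    have hu : ∀ b, {ω | Function.update ω i b ∈ S ∩ T} = {ω | Function.update ω i b ∈ S} ∩ T := by
      intro b
      ext ω
      refine and_congr Iff.rfl (hT _ _ ?_)
      intro j hj
      rw [Function.update_of_ne]
      rintro rfl; exact hiG hj
    have mS := hS.measurable (Finset.finite_toSet _)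
    have mT := hT.measurable hG
    rw [bits_split μ i (mS.inter mT), hu, hu, ih hd' (hS' true), ih hd' (hS' false),
      bits_split μ i mS]
    ring

lemma two_point {w x1 x0 y1 y0 z1 z0 : ℝ} (hw0 : 0 ≤ w) (hw1 : w ≤ 1) (h1 : x1 * y1 ≤ z1)
    (h0 : x0 * y0 ≤ z0) (h : (x0 ≤ x1 ∧ y0 ≤ y1) ∨ (x1 ≤ x0 ∧ y1 ≤ y0)) :
    (w * x1 + (1-w) * x0) * (w * y1 + (1-w) * y0) ≤ w * z1 + (1-w) * z0 := by
  have hp : 0 ≤ (x1 - x0) * (y1 - y0) := by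
    rcases h with h | h
    · exact mul_nonneg (by linarith) (by linarith)
    · exact mul_nonneg_of_nonpos_of_nonpos (by linarith) (by linarith)
  have h2 : 0 ≤ w * (1 - w) * ((x1 - x0) * (y1 - y0)) :=
    mul_nonneg (mul_nonneg hw0 (by linarith)) hp
  have h3 := mul_le_mul_of_nonneg_left h1 hw0
  have h4 := mul_le_mul_of_nonneg_left h0 (by linarith : 0 ≤ 1 - w)
  nlinarith

def UpSet (S : Set (ι → Bool)) : Prop :=
  ∀ ω ω' : ι → Bool, (∀ i, ω i = true → ω' i = true) → ω ∈ S → ω' ∈ S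

/-- Harris inequality. -/
lemma bits_harris (F : Finset ι) {S T : Set (ι → Bool)} (hS : Dep F S) (hT : Dep F T)
    (uS : UpSet S) (uT : UpSet T) :
    (Measure.infinitePi μ).real S * (Measure.infinitePi μ).real T ≤
      (Measure.infinitePi μ).real (S ∩ T) := by
  classical
  induction F using Finset.induction_on generalizing S T with
  | empty =>
    rw [Finset.coe_empty] at hS hT
    rcases hS.empty with h | h <;> subst h <;> simp
  | insert i F hi ih =>
    have hD : ∀ {S : Set (ι → Bool)}, Dep (↑(insert i F) : Set ι) S → ∀ b,
        Dep F {ω | Function.update ω i b ∈ S} := fun hS b =>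
      (hS.update i b).mono (by
        rintro j ⟨hj1, hj2⟩
        rcases Finset.mem_insert.1 (Finset.mem_coe.1 hj1) with h | h
        · exact absurd h hj2
        · exact h)
    have hU : ∀ {S : Set (ι → Bool)}, UpSet S → ∀ b, UpSet {ω | Function.update ω i b ∈ S} := by
      intro S uS b ω ω' h hω
      refine uS _ _ (fun j => ?_) hω
      by_cases hj : j = i
      · subst hj; simp
      · simpa [hj] using h j
    have hM : ∀ {S : Set (ι → Bool)}, UpSet S → 
        (Measure.infinitePi μ).real {ω | Function.update ω i false ∈ S} ≤
        (Measure.infinitePi μ).real {ω | Function.update ω i true ∈ S} := by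
      intro S uS
      refine measureReal_mono ?_ (measure_ne_top _ _)
      intro ω hω
      refine uS _ _ (fun j => ?_) hω
      by_cases hj : j = i
      · subst hj; simp
      · simp [hj]
    have mS := hS.measurable (Finset.finite_toSet _)
    have mT := hT.measurable (Finset.finite_toSet _)
    rw [bits_split μ i mS, bits_split μ i mT, bits_split μ i (mS.inter mT)]
    exact two_point measureReal_nonneg measureReal_le_one
      (ih (hD hS true) (hD hT true) (hU uS true) (hU uT true))
      (ih (hD hS false) (hD hT false) (hU uS false) (hU uT false)) (Or.inl ⟨hM uS, hM uT⟩)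

end Bits
end DaC

namespace DaC

/-! ### Cluster representatives and finite volume colourings -/

abbrev Idx : Type := Sym2 V ⊕ V
abbrev Om : Type := Idx → Bool

/-- Representative of minimal encoding of the component of `v`. -/
noncomputable def rp (r : V → V → Prop) (v : V) : V :=
  (Encodable.decode (α := V) (sInf (Encodable.encode '' {w | Relation.ReflTransGen r v w}))).getD v

lemma rp_spec (r : V → V → Prop) (v : V) : Relation.ReflTransGen r v (rp r v) ∧
    ∀ w, Relation.ReflTransGen r v w → Encodable.encode (rp r v) ≤ Encodable.encode w := by
  have hne : (Encodable.encode '' {w | Relation.ReflTransGen r v w}).Nonempty :=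
    ⟨_, v, Relation.ReflTransGen.refl, rfl⟩
  obtain ⟨w, hw, hw'⟩ := Nat.sInf_mem hne
  have e : rp r v = w := by
    unfold rp; rw [← hw', Encodable.encodek]; rfl
  rw [e]
  refine ⟨hw, fun z hz => ?_⟩
  rw [hw']
  exact Nat.sInf_le ⟨z, hz, rfl⟩

lemma rp_congr {r r' : V → V → Prop} {v v' : V}
    (h : ∀ w, Relation.ReflTransGen r v w ↔ Relation.ReflTransGen r' v' w) : rp r v = rp r' v' := by
  apply Encodable.encode_injective
  apply le_antisymm
  · exact (rp_spec r v).2 _ ((h _).2 (rp_spec r' v').1)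
  · exact (rp_spec r' v').2 _ ((h _).1 (rp_spec r v).1)

lemma rtg_symm {r : V → V → Prop} (hr : ∀ a b, r a b → r b a) {u v : V}
    (h : Relation.ReflTransGen r u v) : Relation.ReflTransGen r v u := by
  induction h with
  | refl => exact .refl
  | tail _ h2 ih => exact .head (hr _ _ h2) ih

lemma rp_eq_of_conn {r : V → V → Prop} (hr : ∀ a b, r a b → r b a) {u v : V}
    (h : Relation.ReflTransGen r u v) : rp r u = rp r v :=
  rp_congr fun _ => ⟨fun hw => (rtg_symm hr h).trans hw, fun hw => h.trans hw⟩

open Classical in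
/-- Colouring with an active set `A` of colour `c`. -/
noncomputable def col (r : V → V → Prop) (A : Set V) (c : Bool) (κ : V → Bool) (v : V) : Bool :=
  if ∃ a ∈ A, Relation.ReflTransGen r a v then c else κ (rp r v)

/-- Add an edge to a relation. -/
def addE (r : V → V → Prop) (a b : V) : V → V → Prop :=
  fun u v => r u v ∨ (u = a ∧ v = b) ∨ (u = b ∧ v = a)

lemma col_addE {r : V → V → Prop} (hr : ∀ a b, r a b → r b a) {A : Set V} {a b : V} (ha : a ∈ A)
    (c : Bool) (κ : V → Bool) : col (addE r a b) A c κ = col r (insert b A) c κ := by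
  funext v
  have hm : ∀ {u v}, Relation.ReflTransGen r u v → Relation.ReflTransGen (addE r a b) u v :=
    fun h => Relation.ReflTransGen.mono (fun x y hxy => Or.inl hxy) _ _ h
  have h1 : (∃ x ∈ A, Relation.ReflTransGen (addE r a b) x v) ↔
      ∃ x ∈ insert b A, Relation.ReflTransGen r x v := by
    constructor
    · rintro ⟨x, hx, h⟩
      induction h with
      | refl => exact ⟨x, Or.inr hx, .refl⟩
      | tail _ h2 ih =>
        rcases h2 with h2 | ⟨rfl, rfl⟩ | ⟨rfl, rfl⟩
        · obtain ⟨y, hy, hy'⟩ := ih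
          exact ⟨y, hy, hy'.tail h2⟩
        · exact ⟨_, Or.inl rfl, .refl⟩
        · exact ⟨_, Or.inr ha, .refl⟩
    · rintro ⟨x, hx, h⟩
      rcases hx with rfl | hx
      · exact ⟨a, ha, .head (Or.inr (Or.inl ⟨rfl, rfl⟩)) (hm h)⟩
      · exact ⟨x, hx, hm h⟩
  unfold col
  by_cases h : ∃ x ∈ insert b A, Relation.ReflTransGen r x v
  · rw [if_pos (h1.2 h), if_pos h]
  · rw [if_neg (fun h' => h (h1.1 h')), if_neg h]
    congr 1
    apply rp_congr
    intro w
    refine ⟨fun hw => ?_, hm⟩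
    induction hw with
    | refl => exact .refl
    | tail _ h2 ih =>
      rcases h2 with h2 | ⟨rfl, rfl⟩ | ⟨rfl, rfl⟩
      · exact ih.tail h2
      · exact (h ⟨_, Or.inr ha, rtg_symm hr ih⟩).elim
      · exact (h ⟨_, Or.inl rfl, rtg_symm hr ih⟩).elim

lemma col_empty (r : V → V → Prop) (c : Bool) (κ : V → Bool) (v : V) :
    col r ∅ c κ v = κ (rp r v) := by
  unfold col; rw [if_neg]; simp

lemma closed_rtg {r : V → V → Prop} {U : Set V} (hU : ∀ a b, r a b → a ∈ U → b ∈ U) {u v : V}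
    (h : Relation.ReflTransGen r u v) (hu : u ∈ U) : v ∈ U := by
  induction h with
  | refl => exact hu
  | tail _ h2 ih => exact hU _ _ h2 ih

/-- Open edges inside the edge set `E`. -/
def Op (ω : Om) (E : Set (Sym2 V)) (u v : V) : Prop := s(u, v) ∈ E ∧ ω (Sum.inl s(u, v)) = true

lemma Op_symm (ω : Om) (E : Set (Sym2 V)) (u v : V) (h : Op ω E u v) : Op ω E v u := by
  unfold Op at *; rwa [Sym2.eq_swap]

def coin (ω : Om) (v : V) : Bool := ω (Sum.inr v)

/-- Finite volume colours. -/
noncomputable def fcol (E : Set (Sym2 V)) (A : Set V) (c : Bool) (ω : Om) : V → Bool :=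
  col (Op ω E) A c (coin ω)

lemma fcol_open {E : Set (Sym2 V)} {A : Set V} {a b : V} (he : s(a, b) ∈ E) (ha : a ∈ A) (c : Bool)
    (ω : Om) : fcol E A c (Function.update ω (Sum.inl s(a, b)) true) =
      fcol (E \ {s(a, b)}) (insert b A) c ω := by
  unfold fcol
  rw [← col_addE (Op_symm _ _) ha]
  congr 1
  funext u v
  apply propext
  unfold Op addE
  by_cases h : s(u, v) = s(a, b)
  · have := Sym2.eq_iff.1 h
    simp [h, he, this]
  · have h2 : ¬ (u = a ∧ v = b ∨ u = b ∧ v = a) := fun h' => h (Sym2.eq_iff.2 h')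
    have h3 : (Sum.inl s(u, v) : Idx) ≠ Sum.inl s(a, b) := fun h' => h (Sum.inl_injective h')
    rw [Function.update_of_ne h3]
    simp [Op, h, h2]

lemma fcol_closed {E : Set (Sym2 V)} {A : Set V} {a b : V} (c : Bool)
    (ω : Om) : fcol E A c (Function.update ω (Sum.inl s(a, b)) false) =
      fcol (E \ {s(a, b)}) A c ω := by
  unfold fcol
  congr 1
  funext u v
  apply propext
  unfold Op
  by_cases h : s(u, v) = s(a, b)
  · simp [h]
  · have h3 : (Sum.inl s(u, v) : Idx) ≠ Sum.inl s(a, b) := fun h' => h (Sum.inl_injective h')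
    rw [Function.update_of_ne h3]
    simp [h]

lemma fcol_coin {E : Set (Sym2 V)} {v : V}
    (hv : ∀ ω : Om, ∀ w, Relation.ReflTransGen (Op ω E) v w → Encodable.encode v ≤ Encodable.encode w)
    (c c' : Bool) (ω : Om) : fcol E ∅ c' (Function.update ω (Sum.inr v) c) = fcol E {v} c ω := by
  have hOp : Op (Function.update ω (Sum.inr v) c) E = Op ω E := by
    funext x y; unfold Op; rw [Function.update_of_ne (by simp)]
  funext x
  unfold fcol
  rw [hOp, col_empty]
  unfold col
  have hrv : rp (Op ω E) v = v := by
    apply Encodable.encode_injective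
    exact le_antisymm ((rp_spec _ v).2 v .refl) (hv ω _ (rp_spec _ v).1)
  by_cases h : Relation.ReflTransGen (Op ω E) v x
  · rw [if_pos ⟨v, rfl, h⟩, ← rp_eq_of_conn (Op_symm ω E) h, hrv]
    simp [coin]
  · rw [if_neg (by rintro ⟨a, rfl, h'⟩; exact h h')]
    unfold coin
    rw [Function.update_of_ne]
    intro h'
    have h2 : rp (Op ω E) x = v := Sum.inr_injective h'
    exact h (rtg_symm (Op_symm ω E) (h2 ▸ (rp_spec (Op ω E) x).1))

open Classical in
lemma fcol_final {E : Set (Sym2 V)} {A : Set V} (hA : ∀ a b, s(a, b) ∈ E → a ∈ A → b ∈ A)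
    (c c' : Bool) (ω : Om) :
    fcol E A c ω = fun v => if v ∈ A then c else fcol E ∅ c' ω v := by
  funext v
  unfold fcol
  rw [col_empty]
  unfold col
  congr 1
  apply propext
  constructor
  · rintro ⟨a, ha, h⟩
    exact closed_rtg (fun x y hxy hx => hA x y hxy.1 hx) h ha
  · intro h; exact ⟨v, h, .refl⟩

/-- Dependence on colours. -/
lemma fcol_dep {E : Set (Sym2 V)} {U : Set V} (hU : ∀ a b, s(a, b) ∈ E → a ∈ U → b ∈ U)
    (A : Set V) (c : Bool) {C : Set (V → Bool)} (hC : Dep U C) :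
    Dep (Sum.inl '' E ∪ Sum.inr '' U : Set Idx) {ω : Om | fcol E A c ω ∈ C} := by
  intro ω ω' h
  have hOp : Op ω E = Op ω' E := by
    funext x y
    unfold Op
    apply propext
    constructor
    · rintro ⟨h1, h2⟩; exact ⟨h1, by rw [← h _ (Or.inl ⟨_, h1, rfl⟩)]; exact h2⟩
    · rintro ⟨h1, h2⟩; exact ⟨h1, by rw [h _ (Or.inl ⟨_, h1, rfl⟩)]; exact h2⟩
  apply hC
  intro v hv
  unfold fcol
  rw [hOp]
  unfold col
  split_ifs
  · rfl
  · apply h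
    right
    exact ⟨_, closed_rtg (fun x y hxy hx => hU x y hxy.1 hx) (rp_spec _ v).1 hv, rfl⟩

variable (μ : Idx → Measure Bool) [∀ i, IsProbabilityMeasure (μ i)]

open Classical in
theorem fkg_aux (n : ℕ) : ∀ (E : Finset (Sym2 V)) (U A : Finset V) (c : Bool) (C D : Set (V → Bool)),
    E.card + 2 * U.card + (if A = ∅ then 1 else 0) ≤ n →
    (∀ a b, s(a, b) ∈ E → a ∈ U → b ∈ U) → A ⊆ U → Dep U C → Dep U D → UpSet C → UpSet D →
    (Measure.infinitePi μ).real {ω | fcol E A c ω ∈ C} *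
      (Measure.infinitePi μ).real {ω | fcol E A c ω ∈ D} ≤
      (Measure.infinitePi μ).real {ω | fcol E A c ω ∈ C ∩ D} := by
  induction n with
  | zero =>
    intro E U A c C D hn hU hA hC hD uC uD
    have : U = ∅ := by rw [← Finset.card_eq_zero]; omega
    subst this
    rw [Finset.coe_empty] at hC
    rcases hC.empty with h | h <;> subst h <;> simp
  | succ n ih =>
    intro E U A c C D hn hU hA hC hD uC uD
    have meas : ∀ C : Set (V → Bool), Dep U C → MeasurableSet {ω | fcol E A c ω ∈ C} := fun C hC =>
      (fcol_dep (E := (E : Set (Sym2 V))) (U := U) hU A c hC).measurable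
        (((Finset.finite_toSet _).image _).union ((Finset.finite_toSet _).image _))
    by_cases hex : ∃ a b, s(a, b) ∈ E ∧ a ∈ A ∧ b ∉ A
    · -- reveal an edge
      obtain ⟨a, b, he, ha, hb⟩ := hex
      have hbU : b ∈ U := hU a b he (hA ha)
      have hcard : (E.erase s(a, b)).card + 1 = E.card := Finset.card_erase_add_one he
      have hAne : A ≠ ∅ := Finset.ne_empty_of_mem ha
      rw [if_neg hAne] at hn
      have e1 : ∀ C : Set (V → Bool), {ω : Om | Function.update ω (Sum.inl s(a, b)) true ∈
          {ω | fcol E A c ω ∈ C}} =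
          {ω | fcol (E.erase s(a, b)) (insert b A : Finset V) c ω ∈ C} := by
        intro C; ext ω
        have := fcol_open (E := (E : Set (Sym2 V))) (A := A) he ha c ω
        simp only [Set.mem_ofPred_eq, Finset.coe_erase, Finset.coe_insert]
        rw [this]
      have e0 : ∀ C : Set (V → Bool), {ω : Om | Function.update ω (Sum.inl s(a, b)) false ∈
          {ω | fcol E A c ω ∈ C}} =
          {ω | fcol (E.erase s(a, b)) A c ω ∈ C} := by
        intro C; ext ω
        have := fcol_closed (E := (E : Set (Sym2 V))) (A := A) (a := a) (b := b) c ω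
        simp only [Set.mem_ofPred_eq, Finset.coe_erase]
        rw [this]
      have hU' : ∀ x y, s(x, y) ∈ E.erase s(a, b) → x ∈ U → y ∈ U := fun x y h =>
        hU x y (Finset.mem_of_mem_erase h)
      rw [bits_split μ (Sum.inl s(a, b)) (meas C hC), bits_split μ (Sum.inl s(a, b)) (meas D hD),
        bits_split μ (Sum.inl s(a, b)) (meas _ (hC.inter hD)), e1, e1, e1, e0, e0, e0]
      refine two_point measureReal_nonneg measureReal_le_one
        (ih _ U _ c C D ?_ hU' ?_ hC hD uC uD) (ih _ U A c C D ?_ hU' hA hC hD uC uD) ?_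
      · rw [if_neg (Finset.insert_ne_empty _ _)]; omega
      · exact Finset.insert_subset hbU hA
      · rw [if_neg hAne]; omega
      · cases c
        · right
          have key : ∀ ω v, fcol (E.erase s(a, b)) (insert b A : Finset V) false ω v = true →
              fcol (E.erase s(a, b)) A false ω v = true := by
            intro ω v h
            unfold fcol col at h ⊢
            split_ifs at h with h1
            rw [if_neg]
            · exact h
            · rintro ⟨x, hx, hx'⟩
              exact h1 ⟨x, by simp; exact Or.inr hx, hx'⟩
          exact ⟨measureReal_mono (fun ω hω => uC _ _ (key ω) hω) (measure_ne_top _ _),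
            measureReal_mono (fun ω hω => uD _ _ (key ω) hω) (measure_ne_top _ _)⟩
        · left
          have key : ∀ ω v, fcol (E.erase s(a, b)) A true ω v = true →
              fcol (E.erase s(a, b)) (insert b A : Finset V) true ω v = true := by
            intro ω v h
            unfold fcol col at h ⊢
            split_ifs with h1
            · rfl
            · rw [if_neg] at h
              · exact h
              · rintro ⟨x, hx, hx'⟩
                exact h1 ⟨x, by simp; exact Or.inr hx, hx'⟩
          exact ⟨measureReal_mono (fun ω hω => uC _ _ (key ω) hω) (measure_ne_top _ _),
            measureReal_mono (fun ω hω => uD _ _ (key ω) hω) (measure_ne_top _ _)⟩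
    · push Not at hex
      by_cases hAe : A = ∅
      · subst hAe
        by_cases hUe : U = ∅
        · subst hUe
          rw [Finset.coe_empty] at hC
          rcases hC.empty with h | h <;> subst h <;> simp
        · -- reveal a coin
          obtain ⟨v, hvU, hv⟩ := Finset.exists_min_image U Encodable.encode
            (Finset.nonempty_iff_ne_empty.2 hUe)
          have hmin : ∀ ω : Om, ∀ w, Relation.ReflTransGen (Op ω E) v w →
              Encodable.encode v ≤ Encodable.encode w := fun ω w hw =>
            hv w (closed_rtg (U := (U : Set V)) (fun x y hxy hx => hU x y hxy.1 hx) hw hvU)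
          have e : ∀ (b : Bool) (C : Set (V → Bool)), {ω : Om | Function.update ω (Sum.inr v) b ∈
              {ω | fcol E (∅ : Finset V) c ω ∈ C}} = {ω | fcol E ({v} : Finset V) b ω ∈ C} := by
            intro b C; ext ω
            have := fcol_coin hmin b c ω
            simp only [Set.mem_ofPred_eq, Finset.coe_empty, Finset.coe_singleton]
            rw [this]
          rw [if_pos rfl] at hn
          rw [bits_split μ (Sum.inr v) (meas C hC), bits_split μ (Sum.inr v) (meas D hD),
            bits_split μ (Sum.inr v) (meas _ (hC.inter hD)), e, e, e, e, e, e]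
          have key : ∀ ω x, fcol E ({v} : Finset V) false ω x = true →
              fcol E ({v} : Finset V) true ω x = true := by
            intro ω x h
            unfold fcol col at h ⊢
            split_ifs at h ⊢
            exact h
          have hsub : {v} ⊆ U := Finset.singleton_subset_iff.2 hvU
          have hcd : E.card + 2 * U.card + (if ({v} : Finset V) = ∅ then 1 else 0) ≤ n := by
            rw [if_neg (Finset.singleton_ne_empty _)]; omega
          exact two_point measureReal_nonneg measureReal_le_one
            (ih E U {v} true C D hcd hU hsub hC hD uC uD)
            (ih E U {v} false C D hcd hU hsub hC hD uC uD)
            (Or.inl ⟨measureReal_mono (fun ω hω => uC _ _ (key ω) hω) (measure_ne_top _ _),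
              measureReal_mono (fun ω hω => uD _ _ (key ω) hω) (measure_ne_top _ _)⟩)
      · -- finalize
        rw [if_neg hAe] at hn
        have hcl : ∀ a b, s(a, b) ∈ (E : Set (Sym2 V)) → a ∈ (A : Set V) → b ∈ (A : Set V) :=
          fun a b h1 h2 => hex a b h1 h2
        set sub : (V → Bool) → (V → Bool) := fun ξ v => if v ∈ A then c else ξ v with hsub
        have e : ∀ C : Set (V → Bool), {ω | fcol E A c ω ∈ C} =
            {ω | fcol E (∅ : Finset V) c ω ∈ sub ⁻¹' C} := by
          intro C; ext ω
          have h := fcol_final hcl c c ω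
          simp only [Set.mem_ofPred_eq, Set.mem_preimage, hsub, Finset.coe_empty]
          rw [h]
          simp only [Finset.mem_coe]
        have hD' : ∀ {C : Set (V → Bool)}, Dep U C → Dep (U \ A : Finset V) (sub ⁻¹' C) := by
          intro C hC ξ ξ' h
          apply hC
          intro v hv
          simp only [hsub]
          split_ifs with hvA
          · rfl
          · exact h v (by simp; exact ⟨hv, hvA⟩)
        have hu' : ∀ {C : Set (V → Bool)}, UpSet C → UpSet (sub ⁻¹' C) := by
          intro C uC ξ ξ' h hξ
          refine uC _ _ ?_ hξ
          intro v
          simp only [hsub]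
          split_ifs
          · exact id
          · exact h v
        have hAc : 0 < A.card := Finset.card_pos.2 (Finset.nonempty_iff_ne_empty.2 hAe)
        have hc1 := Finset.card_sdiff_add_card_eq_card hA
        rw [e C, e D, e (C ∩ D)]
        refine ih E (U \ A) ∅ c _ _ ?_ ?_ (by simp) (hD' hC) (hD' hD) (hu' uC) (hu' uD)
        · rw [if_pos rfl]; omega
        · intro a b hab ha
          rw [Finset.mem_sdiff] at ha ⊢
          refine ⟨hU a b hab ha.1, fun hb => ha.2 ?_⟩
          exact hcl b a (by rw [Sym2.eq_swap]; exact hab) hb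

end DaC

namespace DaC

/-! ### Infinite volume -/

def SqE : Set (Sym2 V) := {e | ∃ u v, e = s(u, v) ∧ SqAdj u v}

lemma SqAdj_symm {u v : V} (h : SqAdj u v) : SqAdj v u := by
  unfold SqAdj at *; nlinarith

lemma mem_SqE {u v : V} : s(u, v) ∈ SqE ↔ SqAdj u v := by
  constructor
  · rintro ⟨a, b, h, hab⟩
    rcases Sym2.eq_iff.1 h with ⟨rfl, rfl⟩ | ⟨rfl, rfl⟩
    · exact hab
    · exact SqAdj_symm hab
  · intro h; exact ⟨u, v, rfl, h⟩

/-- The colour configuration. -/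
noncomputable def xi (ω : Om) (v : V) : Bool := coin ω (rp (Op ω SqE) v)

lemma Op_mono {ω : Om} {E E' : Set (Sym2 V)} (h : E ⊆ E') {u v : V}
    (huv : Relation.ReflTransGen (Op ω E) u v) : Relation.ReflTransGen (Op ω E') u v :=
  Relation.ReflTransGen.mono (fun _ _ hab => ⟨h hab.1, hab.2⟩) _ _ huv

open Filter in
lemma rp_eventually (ω : Om) (v : V) : ∀ᶠ S : Finset (Sym2 V) in atTop,
    rp (Op ω (↑S ∩ SqE)) v = rp (Op ω SqE) v := by
  have key : ∀ w, Relation.ReflTransGen (Op ω SqE) v w →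
      ∀ᶠ S : Finset (Sym2 V) in atTop, Relation.ReflTransGen (Op ω (↑S ∩ SqE)) v w := by
    intro w hw
    induction hw with
    | refl => exact Eventually.of_forall fun _ => .refl
    | @tail b c _ h2 ih =>
      filter_upwards [ih, eventually_ge_atTop {s(b, c)}] with S h1 h3
      exact h1.tail ⟨⟨Finset.singleton_subset_iff.1 h3, h2.1⟩, h2.2⟩
  filter_upwards [key _ (rp_spec (Op ω SqE) v).1] with S hS
  apply Encodable.encode_injective
  apply le_antisymm
  · exact (rp_spec _ v).2 _ hS
  · exact (rp_spec _ v).2 _ (Op_mono Set.inter_subset_right (rp_spec (Op ω (↑S ∩ SqE)) v).1)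

/-- Finite approximations. -/
noncomputable def fin (S : Finset (Sym2 V)) : Finset (Sym2 V) := by
  classical exact S.filter (· ∈ SqE)

lemma fin_coe (S : Finset (Sym2 V)) : (fin S : Set (Sym2 V)) = ↑S ∩ SqE := by
  classical
  ext e; simp [fin]

open Filter in
lemma xi_eventually (ω : Om) {U : Set V} (hU : U.Finite) {C : Set (V → Bool)} (hC : Dep U C) :
    ∀ᶠ S : Finset (Sym2 V) in atTop,
      (ω ∈ {ω | fcol (fin S) ∅ true ω ∈ C} ↔ ω ∈ {ω | xi ω ∈ C}) := by
  have h : ∀ᶠ S : Finset (Sym2 V) in atTop, ∀ v ∈ U, rp (Op ω (↑S ∩ SqE)) v = rp (Op ω SqE) v :=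
    hU.eventually_all.2 fun v _ => rp_eventually ω v
  filter_upwards [h] with S hS
  apply hC
  intro v hv
  unfold fcol xi
  rw [fin_coe, col_empty, hS v hv]

lemma exists_closed {U : Set V} (hU : U.Finite) (S : Finset (Sym2 V)) :
    ∃ U' : Finset V, U ⊆ U' ∧ ∀ a b, s(a, b) ∈ S → a ∈ U' → b ∈ U' := by
  classical
  refine ⟨hU.toFinset ∪ S.biUnion Sym2.toFinset, fun v hv => by simp [hv], ?_⟩
  intro a b hab _
  rw [Finset.mem_union, Finset.mem_biUnion]
  right
  exact ⟨_, hab, by rw [Sym2.mem_toFinset]; simp⟩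

lemma fin_measurable {U : Set V} (hU : U.Finite) {C : Set (V → Bool)} (hC : Dep U C)
    (S : Finset (Sym2 V)) : MeasurableSet {ω | fcol (fin S) ∅ true ω ∈ C} := by
  obtain ⟨U', h1, h2⟩ := exists_closed hU (fin S)
  exact (fcol_dep (E := (fin S : Set (Sym2 V))) (U := U') h2 ∅ true (hC.mono h1)).measurable
    (((Finset.finite_toSet _).image _).union ((Finset.finite_toSet _).image _))

lemma xi_measurable {U : Set V} (hU : U.Finite) {C : Set (V → Bool)} (hC : Dep U C) :
    MeasurableSet {ω | xi ω ∈ C} :=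
  measurableSet_of_tendsto_indicator Filter.atTop (fin_measurable hU hC)
    (fun ω => xi_eventually ω hU hC)

section
variable (μ : Idx → Measure Bool) [∀ i, IsProbabilityMeasure (μ i)]

lemma xi_tendsto {U : Set V} (hU : U.Finite) {C : Set (V → Bool)} (hC : Dep U C) :
    Filter.Tendsto (fun S => (Measure.infinitePi μ).real {ω | fcol (fin S) ∅ true ω ∈ C})
      Filter.atTop (nhds ((Measure.infinitePi μ).real {ω | xi ω ∈ C})) :=
  (ENNReal.tendsto_toReal (measure_ne_top _ _)).comp
    (tendsto_measure_of_tendsto_indicator_of_isFiniteMeasure Filter.atTop (Measure.infinitePi μ)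
      (fin_measurable hU hC) (fun ω => xi_eventually ω hU hC))

theorem xi_fkg {U : Set V} (hU : U.Finite) {C D : Set (V → Bool)} (hC : Dep U C) (hD : Dep U D)
    (uC : UpSet C) (uD : UpSet D) :
    (Measure.infinitePi μ).real {ω | xi ω ∈ C} * (Measure.infinitePi μ).real {ω | xi ω ∈ D} ≤
      (Measure.infinitePi μ).real {ω | xi ω ∈ C ∩ D} := by
  refine le_of_tendsto_of_tendsto' ((xi_tendsto μ hU hC).mul (xi_tendsto μ hU hD))
    (xi_tendsto μ hU (hC.inter hD)) ?_
  intro S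
  obtain ⟨U', h1, h2⟩ := exists_closed hU (fin S)
  have := fkg_aux μ _ (fin S) U' ∅ true C D le_rfl h2 (by simp) (hC.mono h1) (hD.mono h1) uC uD
  simpa only [Finset.coe_empty] using this

end

/-! ### The product structure -/

variable (me mv : Measure Bool) [IsProbabilityMeasure me] [IsProbabilityMeasure mv]

noncomputable def muF : Idx → Measure Bool
  | Sum.inl _ => me
  | Sum.inr _ => mv

instance (i : Idx) : IsProbabilityMeasure (muF me mv i) := by
  cases i <;> (simp only [muF]; infer_instance)

noncomputable def QQ : Measure Om := Measure.infinitePi (muF me mv)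
instance : IsProbabilityMeasure (QQ me mv) := by unfold QQ; infer_instance
noncomputable def Qe : Measure (Sym2 V → Bool) := Measure.infinitePi (fun _ => me)
instance : IsProbabilityMeasure (Qe me) := by unfold Qe; infer_instance
noncomputable def Qv : Measure (V → Bool) := Measure.infinitePi (fun _ => mv)
instance : IsProbabilityMeasure (Qv mv) := by unfold Qv; infer_instance

def join (η : Sym2 V → Bool) (κ : V → Bool) : Om := Sum.elim η κ

lemma measurable_join : Measurable (fun q : (Sym2 V → Bool) × (V → Bool) => join q.1 q.2) := by
  apply measurable_pi_lambda
  rintro (i | i)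
  · exact (measurable_pi_apply i).comp measurable_fst
  · exact (measurable_pi_apply i).comp measurable_snd

lemma QQ_eq : QQ me mv = ((Qe me).prod (Qv mv)).map (fun q => join q.1 q.2) := by
  symm
  apply Measure.eq_infinitePi
  intro s t ht
  rw [Measure.map_apply measurable_join (.pi s.countable_toSet fun _ _ => ht _)]
  have e : (fun q : (Sym2 V → Bool) × (V → Bool) => join q.1 q.2) ⁻¹' (Set.pi s t) =
      (Set.pi s.toLeft fun i => t (Sum.inl i)) ×ˢ (Set.pi s.toRight fun i => t (Sum.inr i)) := by
    ext q
    simp only [Set.mem_preimage, Set.mem_pi, Set.mem_prod, Finset.mem_coe, Finset.mem_toLeft,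
      Finset.mem_toRight]
    constructor
    · intro h; exact ⟨fun i hi => h _ hi, fun i hi => h _ hi⟩
    · rintro ⟨h1, h2⟩ (i | i) hi
      · exact h1 i hi
      · exact h2 i hi
  rw [e, Measure.prod_prod, Qe, Qv, Measure.infinitePi_pi _ (fun _ _ => ht _),
    Measure.infinitePi_pi _ (fun _ _ => ht _)]
  conv_rhs => rw [← Finset.toLeft_disjSum_toRight (u := s)]
  rw [Finset.prod_disjSum]
  rfl

lemma QQ_fubini {S : Set Om} (hS : MeasurableSet S) :
    QQ me mv S = ∫⁻ η, Qv mv {κ | join η κ ∈ S} ∂(Qe me) := by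
  rw [QQ_eq, Measure.map_apply measurable_join hS, Measure.prod_apply (measurable_join hS)]
  rfl

lemma measurable_slice {S : Set Om} (hS : MeasurableSet S) :
    Measurable (fun η => Qv mv {κ | join η κ ∈ S}) :=
  measurable_measure_prodMk_left (measurable_join hS)

/-- The law of `κ ∘ R` depends only on the kernel of `R`. -/
lemma law_kernel {R1 R2 : V → V} (h : ∀ u v, R1 u = R1 v ↔ R2 u = R2 v) {C : Set (V → Bool)}
    (hC : MeasurableSet C) :
    Qv mv {κ | (fun v => κ (R1 v)) ∈ C} = Qv mv {κ | (fun v => κ (R2 v)) ∈ C} := by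
  set q : V → Set.range R1 := fun v => ⟨R1 v, v, rfl⟩ with hq
  have key : ∀ f : Set.range R1 → V, Function.Injective f →
      Qv mv {κ | (fun v => κ (f (q v))) ∈ C} =
        Measure.infinitePi (fun _ : Set.range R1 => mv) {y | (fun v => y (q v)) ∈ C} := by
    intro f hf
    have e := Measure.map_infinitePi_infinitePi_of_inj (P := fun _ : V => mv) hf
    rw [← e, Measure.map_apply]
    · rfl
    · fun_prop
    · have : Measurable (fun (y : Set.range R1 → Bool) (v : V) => y (q v)) := by fun_prop
      exact this hC
  have h1 := key (fun k => k.1) Subtype.val_injective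
  have hch : ∀ k : Set.range R1, ∃ v, R1 v = k.1 := fun k => k.2
  choose c hc using hch
  have h2 := key (fun k => R2 (c k)) (by
    intro k l hkl
    have := (h _ _).2 hkl
    rw [hc, hc] at this
    exact Subtype.ext this)
  have h3 : ∀ v, R2 (c (q v)) = R2 v := fun v => (h _ _).1 (hc (q v))
  simp only [h3] at h2
  rw [h2]
  exact h1

def OpE (η : Sym2 V → Bool) (u v : V) : Prop := s(u, v) ∈ SqE ∧ η s(u, v) = true

lemma OpE_symm (η : Sym2 V → Bool) (u v : V) (h : OpE η u v) : OpE η v u := by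
  unfold OpE at *; rwa [Sym2.eq_swap]

lemma xi_join (η : Sym2 V → Bool) (κ : V → Bool) (v : V) : xi (join η κ) v = κ (rp (OpE η) v) := rfl

lemma rp_ker {r : V → V → Prop} (hr : ∀ a b, r a b → r b a) (u v : V) :
    rp r u = rp r v ↔ Relation.ReflTransGen r u v := by
  refine ⟨fun h => ?_, rp_eq_of_conn hr⟩
  exact (rp_spec r u).1.trans (h ▸ rtg_symm hr (rp_spec r v).1)

lemma iso_adj {σ : V ≃ V} (hσ : IsIso σ) (u v : V) : SqAdj (σ u) (σ v) ↔ SqAdj u v := by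
  unfold SqAdj; rw [hσ]

lemma sym2_map_inj (σ : V ≃ V) : Function.Injective (Sym2.map σ) := Sym2.map.injective σ.injective

lemma OpE_map {σ : V ≃ V} (hσ : IsIso σ) (η : Sym2 V → Bool) (u v : V) :
    OpE (fun e => η (Sym2.map σ e)) u v ↔ OpE η (σ u) (σ v) := by
  unfold OpE
  rw [mem_SqE, mem_SqE, iso_adj hσ]; rfl

lemma conn_map {σ : V ≃ V} (hσ : IsIso σ) (η : Sym2 V → Bool) (u v : V) :
    Relation.ReflTransGen (OpE (fun e => η (Sym2.map σ e))) u v ↔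
      Relation.ReflTransGen (OpE η) (σ u) (σ v) := by
  constructor
  · intro h
    exact Relation.ReflTransGen.lift σ (fun a b hab => (OpE_map hσ η a b).1 hab) _ _ h
  · intro h
    have := Relation.ReflTransGen.lift (p := OpE (fun e => η (Sym2.map σ e))) σ.symm
      (fun a b hab => (OpE_map hσ η _ _).2 (by simpa using hab)) _ _ h
    simpa [Function.onFun] using this

theorem xi_symm {σ : V ≃ V} (hσ : IsIso σ) {U : Set V} (hU : U.Finite) {C : Set (V → Bool)}
    (hC : Dep U C) :
    QQ me mv {ω | (fun v => xi ω (σ v)) ∈ C} = QQ me mv {ω | xi ω ∈ C} := by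
  have hm1 : MeasurableSet {ω | xi ω ∈ C} := xi_measurable hU hC
  have hC2 : Dep (σ '' U) {ξ : V → Bool | (fun v => ξ (σ v)) ∈ C} := by
    intro ξ ξ' h
    exact hC _ _ fun v hv => h _ ⟨v, hv, rfl⟩
  have hm2 : MeasurableSet {ω | (fun v => xi ω (σ v)) ∈ C} := xi_measurable (hU.image _) hC2
  rw [QQ_fubini me mv hm1, QQ_fubini me mv hm2]
  have hmC := hC.measurable hU
  have e : ∀ η : Sym2 V → Bool, Qv mv {κ | join η κ ∈ {ω | (fun v => xi ω (σ v)) ∈ C}} =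
      Qv mv {κ | join (fun e => η (Sym2.map σ e)) κ ∈ {ω | xi ω ∈ C}} := by
    intro η
    refine law_kernel mv (R1 := fun v => rp (OpE η) (σ v))
      (R2 := fun v => rp (OpE (fun e => η (Sym2.map σ e))) v) ?_ hmC
    intro u v
    rw [rp_ker (OpE_symm _), rp_ker (OpE_symm _), conn_map hσ]
  simp only [e]
  have hmap : (Qe me).map (fun η e => η (Sym2.map σ e)) = Qe me :=
    Measure.map_infinitePi_infinitePi_of_inj (P := fun _ : Sym2 V => me) (sym2_map_inj σ)
  conv_rhs => rw [← hmap]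
  rw [lintegral_map (measurable_slice mv hm1) (by fun_prop)]

lemma QQ_permute (σ : V ≃ V) {S : Set Om} (hS : MeasurableSet S) :
    QQ me mv {ω | (fun i => ω (Sum.map (Sym2.map σ) σ i)) ∈ S} = QQ me mv S := by
  have inj : Function.Injective (Sum.map (Sym2.map σ) σ) := (sym2_map_inj σ).sumMap σ.injective
  have e := Measure.map_infinitePi_infinitePi_of_inj (P := muF me mv) inj
  have e2 : (fun i => muF me mv (Sum.map (Sym2.map σ) σ i)) = muF me mv := by
    funext i; cases i <;> rfl
  simp only [e2] at e
  unfold QQ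
  conv_rhs => rw [← e]
  rw [Measure.map_apply (by fun_prop) hS]
  rfl

end DaC

namespace DaC

/-! ### Model instances -/

def PathL (E : V → V → Prop) (R A B : Set V) (ℓ : ℕ∞) : Prop :=
  ∃ (f : ℕ → V) (k : ℕ), (∀ i ≤ k, f i ∈ R) ∧ Steps E f 0 k ∧ f 0 ∈ A ∧ f k ∈ B ∧ (k : ℕ∞) < ℓ

lemma PathL_congr {E E' : V → V → Prop} {R : Set V} (h : ∀ u ∈ R, ∀ v ∈ R, E u v → E' u v)
    {A B : Set V} {ℓ : ℕ∞} (hp : PathL E R A B ℓ) : PathL E' R A B ℓ := by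
  obtain ⟨f, k, h1, h2, h3⟩ := hp
  exact ⟨f, k, h1, fun m a b => h _ (h1 m b.le) _ (h1 (m+1) b) (h2 m a b), h3⟩

lemma PathL_map {E E' : V → V → Prop} {σ : V ≃ V} (h : ∀ u v, E u v ↔ E' (σ u) (σ v))
    (R A B : Set V) (ℓ : ℕ∞) :
    PathL E (σ ⁻¹' R) (σ ⁻¹' A) (σ ⁻¹' B) ℓ ↔ PathL E' R A B ℓ := by
  constructor
  · rintro ⟨f, k, h1, h2, h3, h4, h5⟩
    exact ⟨fun m => σ (f m), k, h1, fun m a b => (h _ _).1 (h2 m a b), h3, h4, h5⟩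
  · rintro ⟨f, k, h1, h2, h3, h4, h5⟩
    refine ⟨fun m => σ.symm (f m), k, fun i hi => ?_, fun m a b => (h _ _).2 ?_, ?_, ?_, h5⟩
    · simpa using h1 i hi
    · simpa using h2 m a b
    · simpa using h3
    · simpa using h4

/-- Admissible colour adjacencies. -/
structure AdjOK (adj : V → V → Prop) : Prop where
  sq : ∀ u v, SqAdj u v → adj u v
  near : ∀ u v, adj u v → Near u v
  diag : ∀ u v, adj u v → u.1 ≠ v.1 → u.2 ≠ v.2 → adj u (u.1, v.2)
  iso : ∀ σ : V ≃ V, IsIso σ → ∀ u v, adj (σ u) (σ v) ↔ adj u v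
  symm : ∀ u v, adj u v → adj v u

lemma near_of_le {u v : V} (h : (u.1 - v.1) ^ 2 + (u.2 - v.2) ^ 2 ≤ 2) : Near u v := by
  constructor <;> rw [abs_le] <;> constructor <;> nlinarith [sq_nonneg (u.1 - v.1), sq_nonneg (u.2 - v.2)]

lemma sq_ne {u v : V} (h : (u.1 - v.1) ^ 2 + (u.2 - v.2) ^ 2 = 1) : u.1 = v.1 ∨ u.2 = v.2 := by
  by_contra hc
  push Not at hc
  have h1 : 0 < (u.1 - v.1) ^ 2 := by have := sub_ne_zero.2 hc.1; positivity
  have h2 : 0 < (u.2 - v.2) ^ 2 := by have := sub_ne_zero.2 hc.2; positivity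
  omega

lemma adjOK_sq : AdjOK SqAdj where
  sq _ _ h := h
  near u v h := near_of_le (by unfold SqAdj at h; omega)
  diag u v h h1 h2 := by rcases sq_ne h with h | h <;> contradiction
  iso σ hσ u v := iso_adj hσ u v
  symm u v h := SqAdj_symm h

lemma adjOK_star : AdjOK StarAdj where
  sq _ _ h := Or.inl h
  near u v h := near_of_le (by unfold StarAdj at h; omega)
  diag u v h h1 h2 := by
    have a1 : 0 < (u.1 - v.1) ^ 2 := by have := sub_ne_zero.2 h1; positivity
    have a2 : 0 < (u.2 - v.2) ^ 2 := by have := sub_ne_zero.2 h2; positivity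
    unfold StarAdj at *
    left
    simp only [sub_self]
    omega
  iso σ hσ u v := by unfold StarAdj; rw [hσ]
  symm u v h := by
    unfold StarAdj at *
    rw [show (v.1 - u.1) ^ 2 + (v.2 - u.2) ^ 2 = (u.1 - v.1) ^ 2 + (u.2 - v.2) ^ 2 by ring]; exact h

def EC (adj : V → V → Prop) (ξ : V → Bool) (u v : V) : Prop := adj u v ∧ ξ u = true ∧ ξ v = true

lemma EC_dep (adj : V → V → Prop) (R A B : Set V) (ℓ : ℕ∞) : Dep R (EvL (EC adj) R A B ℓ) := by
  intro ξ ξ' h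
  constructor
  · exact PathL_congr fun u hu v hv h' => ⟨h'.1, h u hu ▸ h'.2.1, h v hv ▸ h'.2.2⟩
  · exact PathL_congr fun u hu v hv h' => ⟨h'.1, (h u hu).symm ▸ h'.2.1, (h v hv).symm ▸ h'.2.2⟩

lemma EC_up (adj : V → V → Prop) (R A B : Set V) (ℓ : ℕ∞) : UpSet (EvL (EC adj) R A B ℓ) := by
  intro ξ ξ' h
  exact PathL_congr fun u hu v hv h' => ⟨h'.1, h u h'.2.1, h v h'.2.2⟩

variable (me mv : Measure Bool) [IsProbabilityMeasure me] [IsProbabilityMeasure mv]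

/-- The colour model. -/
noncomputable def colM (adj : V → V → Prop) (ha : AdjOK adj) : Model Om where
  P S := (QQ me mv).real S
  E ω := EC adj (xi ω)
  P_nonneg _ := measureReal_nonneg
  P_mono h := measureReal_mono h (measure_ne_top _ _)
  P_union A B := measureReal_union_le A B
  P_empty := measureReal_empty
  P_univ := probReal_univ
  E_symm ω u v h := ⟨ha.symm _ _ h.1, h.2.2, h.2.1⟩
  E_near ω u v h := ha.near _ _ h.1
  E_diag ω u v w z h h1 h2 hw hz := ⟨hw ▸ ha.diag _ _ h.1 h1 h2, h.2.1, hz.2.1⟩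
  Inc S := ∃ (C : Set (V → Bool)) (U : Set V), U.Finite ∧ Dep U C ∧ UpSet C ∧ S = {ω | xi ω ∈ C}
  inc_univ := ⟨Set.univ, ∅, Set.finite_empty, fun _ _ _ => by simp, fun _ _ _ _ => trivial, by ext; simp⟩
  inc_inter := by
    rintro A B ⟨C, U, hU, hC, uC, rfl⟩ ⟨D, W, hW, hD, uD, rfl⟩
    exact ⟨C ∩ D, U ∪ W, hU.union hW, (hC.mono Set.subset_union_left).inter
      (hD.mono Set.subset_union_right), fun ω ω' h hh => ⟨uC _ _ h hh.1, uD _ _ h hh.2⟩, rfl⟩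
  fkg := by
    rintro A B ⟨C, U, hU, hC, uC, rfl⟩ ⟨D, W, hW, hD, uD, rfl⟩
    exact xi_fkg (muF me mv) (hU.union hW) (hC.mono Set.subset_union_left)
      (hD.mono Set.subset_union_right) uC uD
  inc_ev R A B hR := ⟨EvL (EC adj) R A B ⊤, R, hR, EC_dep _ _ _ _ _, EC_up _ _ _ _ _, rfl⟩
  symm σ hσ R A B ℓ hR := by
    have hR' : (σ ⁻¹' R).Finite := hR.preimage σ.injective.injOn
    have := xi_symm me mv hσ hR' (EC_dep adj (σ ⁻¹' R) (σ ⁻¹' A) (σ ⁻¹' B) ℓ)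
    unfold Measure.real
    congr 1
    refine this.symm.trans ?_
    congr 1
    ext ω
    exact PathL_map (fun u v => and_congr (ha.iso σ hσ u v).symm Iff.rfl) R A B ℓ

/-- Edges within a set. -/
def eIn (R : Set V) : Set (Sym2 V) := {e | ∃ u ∈ R, ∃ v ∈ R, e = s(u, v)}

lemma eIn_finite {R : Set V} (hR : R.Finite) : (eIn R).Finite := by
  apply ((hR.prod hR).image (fun q => s(q.1, q.2))).subset
  rintro e ⟨u, hu, v, hv, rfl⟩
  exact ⟨(u, v), ⟨hu, hv⟩, rfl⟩

def EB (ω : Om) : V → V → Prop := Op ω SqE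

lemma EB_dep (R A B : Set V) (ℓ : ℕ∞) : Dep (Sum.inl '' eIn R : Set Idx) (EvL EB R A B ℓ) := by
  intro ξ ξ' h
  constructor
  · exact PathL_congr fun u hu v hv h' => ⟨h'.1, h _ ⟨_, ⟨u, hu, v, hv, rfl⟩, rfl⟩ ▸ h'.2⟩
  · exact PathL_congr fun u hu v hv h' => ⟨h'.1, (h _ ⟨_, ⟨u, hu, v, hv, rfl⟩, rfl⟩).symm ▸ h'.2⟩

lemma EB_up (R A B : Set V) (ℓ : ℕ∞) : UpSet (EvL EB R A B ℓ) := by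
  intro ξ ξ' h
  exact PathL_congr fun u hu v hv h' => ⟨h'.1, h _ h'.2⟩

lemma EB_measurable {R : Set V} (hR : R.Finite) (A B : Set V) (ℓ : ℕ∞) :
    MeasurableSet (EvL EB R A B ℓ) := (EB_dep R A B ℓ).measurable ((eIn_finite hR).image _)

/-- The bond model. -/
noncomputable def bondM : Model Om where
  P S := (QQ me mv).real S
  E := EB
  P_nonneg _ := measureReal_nonneg
  P_mono h := measureReal_mono h (measure_ne_top _ _)
  P_union A B := measureReal_union_le A B
  P_empty := measureReal_empty
  P_univ := probReal_univ
  E_symm ω u v h := Op_symm _ _ _ _ h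
  E_near ω u v h := adjOK_sq.near _ _ (mem_SqE.1 h.1)
  E_diag ω u v w z h h1 h2 hw hz := by
    rcases sq_ne (mem_SqE.1 h.1) with h | h <;> contradiction
  Inc S := ∃ F : Finset Idx, Dep F S ∧ UpSet S
  inc_univ := ⟨∅, fun _ _ _ => by simp, fun _ _ _ _ => trivial⟩
  inc_inter := by
    classical
    rintro A B ⟨F, hF, uF⟩ ⟨G, hG, uG⟩
    refine ⟨F ∪ G, (hF.mono ?_).inter (hG.mono ?_), fun ω ω' h hh => ⟨uF _ _ h hh.1, uG _ _ h hh.2⟩⟩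
    · simp
    · simp
  fkg := by
    classical
    rintro A B ⟨F, hF, uF⟩ ⟨G, hG, uG⟩
    exact bits_harris (muF me mv) (F ∪ G) (hF.mono (by simp)) (hG.mono (by simp)) uF uG
  inc_ev R A B hR := ⟨((eIn_finite hR).image _).toFinset, by
    rw [Set.Finite.coe_toFinset]; exact EB_dep R A B ⊤, EB_up R A B ⊤⟩
  symm σ hσ R A B ℓ hR := by
    have hR' : (σ ⁻¹' R).Finite := hR.preimage σ.injective.injOn
    have := QQ_permute me mv σ (EB_measurable hR' (σ ⁻¹' A) (σ ⁻¹' B) ℓ)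
    unfold Measure.real
    congr 1
    refine this.symm.trans ?_
    congr 1
    ext ω
    refine PathL_map (fun u v => ?_) R A B ℓ
    unfold EB Op
    rw [mem_SqE, mem_SqE, iso_adj hσ]; rfl

/-- Colour crossings are at least as likely as open crossings, up to a factor. -/
lemma bond_le_col {adj : V → V → Prop} (ha : AdjOK adj) {R : Set V} (hR : R.Finite) (A B : Set V)
    (ℓ : ℕ∞) : mv.real {true} * (QQ me mv).real (EvL EB R A B ℓ) ≤
      (QQ me mv).real (EvL (fun ω => EC adj (xi ω)) R A B ℓ) := by
  have key : mv {true} * QQ me mv (EvL EB R A B ℓ) ≤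
      QQ me mv (EvL (fun ω => EC adj (xi ω)) R A B ℓ) := by
    have m1 := EB_measurable hR A B ℓ
    have m2 : MeasurableSet (EvL (fun ω => EC adj (xi ω)) R A B ℓ) :=
      xi_measurable hR (EC_dep adj R A B ℓ)
    rw [QQ_fubini me mv m1, QQ_fubini me mv m2, ← lintegral_const_mul _ (measurable_slice mv m1)]
    apply lintegral_mono
    intro η
    by_cases hη : PathL (OpE η) R A B ℓ
    · obtain ⟨f, k, h1, h2, h3, h4, h5⟩ := hη
      have hr : ∀ i ≤ k, rp (OpE η) (f i) = rp (OpE η) (f 0) := by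
        intro i
        induction i with
        | zero => intro _; rfl
        | succ i ih =>
          intro hi
          rw [← ih (by omega)]
          exact (rp_eq_of_conn (OpE_symm η) (.single (h2 i (by omega) (by omega)))).symm
      have hsub : (fun κ : V → Bool => κ (rp (OpE η) (f 0))) ⁻¹' {true} ⊆
          {κ | join η κ ∈ EvL (fun ω => EC adj (xi ω)) R A B ℓ} := by
        intro κ hκ
        refine ⟨f, k, h1, fun m a b => ⟨ha.sq _ _ (mem_SqE.1 (h2 m a b).1), ?_, ?_⟩, h3, h4, h5⟩
        · rw [xi_join, hr m b.le]; exact hκ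
        · rw [xi_join, hr (m+1) b]; exact hκ
      have e : mv {true} = Qv mv ((fun κ : V → Bool => κ (rp (OpE η) (f 0))) ⁻¹' {true}) := by
        have := Measure.infinitePi_map_eval (fun _ : V => mv) (rp (OpE η) (f 0))
        conv_lhs => rw [← this]
        rw [Measure.map_apply (measurable_pi_apply _) (MeasurableSet.of_discrete)]
        rfl
      calc _ ≤ mv {true} * 1 := mul_le_mul_right prob_le_one _
        _ = _ := by rw [mul_one, e]
        _ ≤ _ := measure_mono hsub
    · have : {κ | join η κ ∈ EvL EB R A B ℓ} = ∅ := by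
        ext κ
        simp only [Set.mem_ofPred_eq, Set.mem_empty_iff_false, iff_false]
        exact hη
      simp [this]
  have := ENNReal.toReal_mono (measure_ne_top _ _) key
  rwa [ENNReal.toReal_mul] at this

end DaC

namespace DaC

/-! ### Mixing -/

variable (me mv : Measure Bool) [IsProbabilityMeasure me] [IsProbabilityMeasure mv]

lemma eIn_disjoint {R R' : Set V} (h : Disjoint R R') : Disjoint (eIn R) (eIn R') := by
  rw [Set.disjoint_left] at *
  rintro e ⟨u, hu, v, hv, rfl⟩ ⟨u', hu', v', hv', he⟩
  rcases Sym2.eq_iff.1 he with ⟨rfl, rfl⟩ | ⟨rfl, rfl⟩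
  · exact h hu hu'
  · exact h hu hv'

lemma box_disjoint {a b c d a' b' c' d' : ℤ} (h : b < a') : Disjoint (box a b c d) (box a' b' c' d') := by
  rw [Set.disjoint_left]
  rintro v ⟨⟨h1, h2⟩, _⟩ ⟨⟨h3, h4⟩, _⟩
  omega

lemma bond_mixing : (bondM me mv).Mixing := by
  intro ε hε
  refine ⟨10, fun s hs ℓ => ?_⟩
  have hd : Disjoint (box (s/10) (2*(s/10)) 0 (4*s)) (box (8*(s/10)) (9*(s/10)) 0 (4*s)) :=
    box_disjoint (by omega)
  have f1 := (eIn_finite (box_finite (s/10) (2*(s/10)) 0 (4*s))).image (Sum.inl : _ → Idx)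
  have f2 := (eIn_finite (box_finite (8*(s/10)) (9*(s/10)) 0 (4*s))).image (Sum.inl : _ → Idx)
  have := bits_indep (muF me mv) f1.toFinset f2
    (S := (bondM me mv).Hc (s/10) (2*(s/10)) 0 (4*s) ℓ)
    (T := (bondM me mv).Hc (8*(s/10)) (9*(s/10)) 0 (4*s) ℓ) (by
      rw [Set.Finite.coe_toFinset]
      exact (Set.disjoint_image_iff Sum.inl_injective).2 (eIn_disjoint hd))
    (by rw [Set.Finite.coe_toFinset]; exact EB_dep _ _ _ _) (EB_dep _ _ _ _)
  have h2 : (bondM me mv).P ((bondM me mv).Hc (s/10) (2*(s/10)) 0 (4*s) ℓ ∩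
    (bondM me mv).Hc (8*(s/10)) (9*(s/10)) 0 (4*s) ℓ) = _ := this
  rw [h2]
  exact (le_add_of_nonneg_right hε.le)

/-- An open path leaves `B` starting from `R`. -/
def Exit (R B : Set V) : Set Om :=
  {ω | ∃ u ∈ R, ∃ v, v ∉ B ∧ Relation.ReflTransGen (Op ω SqE) u v}

lemma stay {R B : Set V} (hRB : R ⊆ B) {ω : Om} (hω : ω ∉ Exit R B) {u : V} (hu : u ∈ R) {w : V}
    (h : Relation.ReflTransGen (Op ω SqE) u w) :
    w ∈ B ∧ Relation.ReflTransGen (Op ω (SqE ∩ eIn B)) u w := by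
  induction h with
  | refl => exact ⟨hRB hu, .refl⟩
  | @tail b c h1 h2 ih =>
    have hc : c ∈ B := by
      by_contra hc
      exact hω ⟨u, hu, c, hc, h1.tail h2⟩
    exact ⟨hc, ih.2.tail ⟨⟨h2.1, b, ih.1, c, hc, rfl⟩, h2.2⟩⟩

lemma local_eq {R B : Set V} (hRB : R ⊆ B) {C : Set (V → Bool)} (hC : Dep R C) {ω : Om}
    (hω : ω ∉ Exit R B) : xi ω ∈ C ↔ fcol (SqE ∩ eIn B) ∅ true ω ∈ C := by
  apply hC
  intro u hu
  unfold fcol xi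
  rw [col_empty]
  congr 1
  apply rp_congr
  intro w
  exact ⟨fun h => (stay hRB hω hu h).2, fun h => Op_mono Set.inter_subset_left h⟩

lemma loc_dep {R B : Set V} (hRB : R ⊆ B) {C : Set (V → Bool)} (hC : Dep R C) :
    Dep (Sum.inl '' eIn B ∪ Sum.inr '' B : Set Idx) {ω : Om | fcol (SqE ∩ eIn B) ∅ true ω ∈ C} := by
  refine (fcol_dep (E := SqE ∩ eIn B) (U := B) ?_ ∅ true (hC.mono hRB)).mono ?_
  · rintro a b ⟨_, u, hu, v, hv, he⟩ _
    rcases Sym2.eq_iff.1 he with ⟨rfl, rfl⟩ | ⟨rfl, rfl⟩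
    · exact hv
    · exact hu
  · exact Set.union_subset_union_left _ (Set.image_mono Set.inter_subset_right)

lemma col_mix {R1 B1 R2 B2 : Set V} (h1 : R1 ⊆ B1) (h2 : R2 ⊆ B2) (f1 : B1.Finite) (f2 : B2.Finite)
    (hd : Disjoint B1 B2) {C1 C2 : Set (V → Bool)} (hC1 : Dep R1 C1) (hC2 : Dep R2 C2) :
    (QQ me mv).real ({ω | xi ω ∈ C1} ∩ {ω | xi ω ∈ C2}) ≤
      (QQ me mv).real {ω | xi ω ∈ C1} * (QQ me mv).real {ω | xi ω ∈ C2} +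
      2 * ((QQ me mv).real (Exit R1 B1) + (QQ me mv).real (Exit R2 B2)) := by
  set S1 := {ω | xi ω ∈ C1}
  set S2 := {ω | xi ω ∈ C2}
  set T1 := {ω : Om | fcol (SqE ∩ eIn B1) ∅ true ω ∈ C1} with hT1
  set T2 := {ω : Om | fcol (SqE ∩ eIn B2) ∅ true ω ∈ C2} with hT2
  set N1 := Exit R1 B1
  set N2 := Exit R2 B2
  have e1 : ∀ ω, ω ∉ N1 → (ω ∈ S1 ↔ ω ∈ T1) := fun ω hω => local_eq h1 hC1 hω
  have e2 : ∀ ω, ω ∉ N2 → (ω ∈ S2 ↔ ω ∈ T2) := fun ω hω => local_eq h2 hC2 hω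
  have g1 : (Sum.inl '' eIn B1 ∪ Sum.inr '' B1 : Set Idx).Finite :=
    ((eIn_finite f1).image _).union (f1.image _)
  have g2 : (Sum.inl '' eIn B2 ∪ Sum.inr '' B2 : Set Idx).Finite :=
    ((eIn_finite f2).image _).union (f2.image _)
  have ind : (QQ me mv).real (T1 ∩ T2) = (QQ me mv).real T1 * (QQ me mv).real T2 := by
    refine bits_indep (muF me mv) g1.toFinset g2 ?_ ?_ (loc_dep h2 hC2)
    · rw [Set.Finite.coe_toFinset]
      have hde := eIn_disjoint hd
      rw [Set.disjoint_left] at *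
      rintro i (⟨e, he, rfl⟩ | ⟨v, hv, rfl⟩) (⟨e', he', h⟩ | ⟨v', hv', h⟩)
      · cases h; exact hde he he'
      · cases h
      · cases h
      · cases h; exact hd hv hv'
    · rw [Set.Finite.coe_toFinset]; exact loc_dep h1 hC1
  have mono : ∀ {A B : Set Om}, A ⊆ B → (QQ me mv).real A ≤ (QQ me mv).real B :=
    fun h => measureReal_mono h (measure_ne_top _ _)
  have i1 : (QQ me mv).real (S1 ∩ S2) ≤ (QQ me mv).real (T1 ∩ T2) + (QQ me mv).real N1
      + (QQ me mv).real N2 := by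
    refine (mono (B := (T1 ∩ T2 ∪ N1) ∪ N2) ?_).trans ((measureReal_union_le _ _).trans
      (add_le_add (measureReal_union_le _ _) le_rfl))
    rintro ω ⟨a, b⟩
    by_cases c1 : ω ∈ N1
    · exact Or.inl (Or.inr c1)
    by_cases c2 : ω ∈ N2
    · exact Or.inr c2
    exact Or.inl (Or.inl ⟨(e1 ω c1).1 a, (e2 ω c2).1 b⟩)
  have i2 : (QQ me mv).real T1 ≤ (QQ me mv).real S1 + (QQ me mv).real N1 := by
    refine (mono (B := S1 ∪ N1) ?_).trans (measureReal_union_le _ _)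
    intro ω a
    by_cases c1 : ω ∈ N1
    · exact Or.inr c1
    · exact Or.inl ((e1 ω c1).2 a)
  have i3 : (QQ me mv).real T2 ≤ (QQ me mv).real S2 + (QQ me mv).real N2 := by
    refine (mono (B := S2 ∪ N2) ?_).trans (measureReal_union_le _ _)
    intro ω a
    by_cases c1 : ω ∈ N2
    · exact Or.inr c1
    · exact Or.inl ((e2 ω c1).2 a)
  have t1 : (QQ me mv).real T1 ≤ 1 := measureReal_le_one
  have s2 : (QQ me mv).real S2 ≤ 1 := measureReal_le_one
  have p1 : 0 ≤ (QQ me mv).real T1 := measureReal_nonneg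
  have p2 : 0 ≤ (QQ me mv).real S2 := measureReal_nonneg
  have p3 : 0 ≤ (QQ me mv).real N1 := measureReal_nonneg
  have p4 : 0 ≤ (QQ me mv).real N2 := measureReal_nonneg
  rw [ind] at i1
  have a1 : (QQ me mv).real T1 * (QQ me mv).real T2 ≤ (QQ me mv).real T1 *
    ((QQ me mv).real S2 + (QQ me mv).real N2) := mul_le_mul_of_nonneg_left i3 p1
  have a2 : (QQ me mv).real T1 * (QQ me mv).real N2 ≤ (QQ me mv).real N2 :=
    mul_le_of_le_one_left p4 t1
  have a3 : (QQ me mv).real T1 * (QQ me mv).real S2 ≤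
    ((QQ me mv).real S1 + (QQ me mv).real N1) * (QQ me mv).real S2 := mul_le_mul_of_nonneg_right i2 p2
  have a4 : (QQ me mv).real N1 * (QQ me mv).real S2 ≤ (QQ me mv).real N1 :=
    mul_le_of_le_one_right p3 s2
  nlinarith

lemma rtg_path {E : V → V → Prop} {u v : V} (h : Relation.ReflTransGen E u v) :
    ∃ (f : ℕ → V) (k : ℕ), Steps E f 0 k ∧ f 0 = u ∧ f k = v := by
  induction h with
  | refl => exact ⟨fun _ => u, 0, fun m a b => by omega, rfl, rfl⟩
  | @tail b c h1 h2 ih =>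
    obtain ⟨f, k, hs, h0, hk⟩ := ih
    refine ⟨fun m => if m ≤ k then f m else c, k + 1, ?_, by simpa using h0, by simp⟩
    intro m _ hm
    by_cases hmk : m < k
    · simp only [show m ≤ k by omega, show m + 1 ≤ k by omega, if_true]
      exact hs m (by omega) hmk
    · have : m = k := by omega
      subst this
      simp only [le_refl, if_true, show ¬ (m + 1 ≤ m) by omega, if_false]
      rw [hk]; exact h2

lemma exit_sub {x1 x2 y1 y2 t : ℤ} (ht : 0 ≤ t) :
    Exit (box x1 x2 y1 y2) (box (x1-t) (x2+t) (y1-t) (y2+t)) ⊆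
      ((bondM me mv).Hc x2 (x2+t) (y1-t) (y2+t) ⊤ ∪ (bondM me mv).Hc (x1-t) x1 (y1-t) (y2+t) ⊤) ∪
      ((bondM me mv).Vc (x1-t) (x2+t) y2 (y2+t) ⊤ ∪ (bondM me mv).Vc (x1-t) (x2+t) (y1-t) y1 ⊤) := by
  classical
  rintro ω ⟨u, hu, v, hv, hc⟩
  obtain ⟨f, k, hs, h0, hk⟩ := rtg_path hc
  have hex : ∃ m, f m ∉ box (x1-t) (x2+t) (y1-t) (y2+t) := ⟨k, hk ▸ hv⟩
  obtain ⟨m, hm, hmin⟩ : ∃ m, f m ∉ box (x1-t) (x2+t) (y1-t) (y2+t) ∧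
      ∀ j < m, f j ∈ box (x1-t) (x2+t) (y1-t) (y2+t) :=
    ⟨Nat.find hex, Nat.find_spec hex, fun j hj => not_not.1 (Nat.find_min hex hj)⟩
  have hmk : m ≤ k := by
    by_contra hlt
    exact hv (hk ▸ hmin k (by omega))
  obtain ⟨⟨u1, u2⟩, u3, u4⟩ := hu
  rw [← h0] at u1 u2 u3 u4
  cases m with
  | zero => exact absurd ⟨⟨by omega, by omega⟩, by omega, by omega⟩ hm
  | succ m =>
    have hn := (bondM me mv).E_near ω _ _ (hs m (by omega) (by omega))
    obtain ⟨n1, n2⟩ := hn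
    rw [abs_le] at n1 n2
    obtain ⟨⟨b1, b2⟩, b3, b4⟩ := hmin m (by omega)
    have hs' : Steps ((bondM me mv).E ω) f 0 m := fun j a b => hs j a (by omega)
    have hx : ∀ j, 0 ≤ j → j ≤ m → x1 - t ≤ (f j).1 ∧ (f j).1 ≤ x2 + t :=
      fun j _ hj => (hmin j (by omega)).1
    have hy : ∀ j, 0 ≤ j → j ≤ m → y1 - t ≤ (f j).2 ∧ (f j).2 ≤ y2 + t :=
      fun j _ hj => (hmin j (by omega)).2
    have hcase : (f m).1 = x2 + t ∨ (f m).1 = x1 - t ∨ (f m).2 = y2 + t ∨ (f m).2 = y1 - t := by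
      by_contra hcon
      apply hm
      refine ⟨⟨?_, ?_⟩, ?_, ?_⟩ <;> omega
    rcases hcase with hh | hh | hh | hh
    · left; left
      exact Model.hcross _ (Nat.zero_le m) hs' (by omega) hy (Or.inl ⟨by omega, by omega⟩) (by simp)
    · left; right
      exact Model.hcross _ (Nat.zero_le m) hs' (by omega) hy (Or.inr ⟨by omega, by omega⟩) (by simp)
    · right; left
      exact Model.vcross _ (Nat.zero_le m) hs' (by omega) hx (Or.inl ⟨by omega, by omega⟩) (by simp)
    · right; right
      exact Model.vcross _ (Nat.zero_le m) hs' (by omega) hx (Or.inr ⟨by omega, by omega⟩) (by simp)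

lemma exit_prob {x1 x2 y1 y2 t b : ℤ} (ht : 0 ≤ t) (hb1 : x2 - x1 + 2 * t ≤ b)
    (hb2 : y2 - y1 + 2 * t ≤ b) :
    (QQ me mv).real (Exit (box x1 x2 y1 y2) (box (x1-t) (x2+t) (y1-t) (y2+t))) ≤
      4 * (bondM me mv).h t b := by
  have h := (bondM me mv).P_mono (exit_sub me mv (x1 := x1) (x2 := x2) (y1 := y1) (y2 := y2) ht)
  have k1 := (bondM me mv).P_Hc' x2 (x2+t) (y1-t) (y2+t)
  have k2 := (bondM me mv).P_Hc' (x1-t) x1 (y1-t) (y2+t)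
  have k3 := (bondM me mv).P_Vc' (x1-t) (x2+t) y2 (y2+t)
  have k4 := (bondM me mv).P_Vc' (x1-t) (x2+t) (y1-t) y1
  have m1 := (bondM me mv).h_mono (a := t) (a' := x2 + t - x2) (b := b) (b' := y2 + t - (y1 - t)) ht
    (by omega) (by omega)
  have m2 := (bondM me mv).h_mono (a := t) (a' := x1 - (x1-t)) (b := b) (b' := y2 + t - (y1 - t)) ht
    (by omega) (by omega)
  have m3 := (bondM me mv).h_mono (a := t) (a' := y2 + t - y2) (b := b) (b' := x2 + t - (x1 - t)) ht
    (by omega) (by omega)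
  have m4 := (bondM me mv).h_mono (a := t) (a' := y1 - (y1-t)) (b := b) (b' := x2 + t - (x1 - t)) ht
    (by omega) (by omega)
  have u1 := (bondM me mv).P_union ((bondM me mv).Hc x2 (x2+t) (y1-t) (y2+t) ⊤ ∪
    (bondM me mv).Hc (x1-t) x1 (y1-t) (y2+t) ⊤)
      ((bondM me mv).Vc (x1-t) (x2+t) y2 (y2+t) ⊤ ∪ (bondM me mv).Vc (x1-t) (x2+t) (y1-t) y1 ⊤)
  have u2 := (bondM me mv).P_union ((bondM me mv).Hc x2 (x2+t) (y1-t) (y2+t) ⊤)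
    ((bondM me mv).Hc (x1-t) x1 (y1-t) (y2+t) ⊤)
  have u3 := (bondM me mv).P_union ((bondM me mv).Vc (x1-t) (x2+t) y2 (y2+t) ⊤)
    ((bondM me mv).Vc (x1-t) (x2+t) (y1-t) y1 ⊤)
  have : (bondM me mv).P (Exit (box x1 x2 y1 y2) (box (x1-t) (x2+t) (y1-t) (y2+t))) ≤
      4 * (bondM me mv).h t b := by linarith
  exact this

lemma box_mono {a b c d a' b' c' d' : ℤ} (h1 : a' ≤ a) (h2 : b ≤ b') (h3 : c' ≤ c) (h4 : d ≤ d') :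
    box a b c d ⊆ box a' b' c' d' := by
  rintro v ⟨⟨x1, x2⟩, x3, x4⟩
  exact ⟨⟨by omega, by omega⟩, by omega, by omega⟩

lemma col_mixing {θ : ℝ} (hθ : 0 < θ) (hL : (bondM me mv).Lp θ) {adj : V → V → Prop}
    (ha : AdjOK adj) : (colM me mv adj ha).Mixing := by
  intro ε hε
  obtain ⟨n0, hn0⟩ := (bondM me mv).mainA hθ hL (bond_mixing me mv) 50 (ε / 16) (by positivity)
  refine ⟨10 * (n0 + 5), fun s hs ℓ => ?_⟩
  obtain ⟨t, ht⟩ : ∃ t : ℕ, (t : ℤ) = s / 10 := ⟨(s/10).toNat, by omega⟩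
  have hh := hn0 t (by omega)
  push_cast at hh
  rw [ht] at hh
  have x1 := exit_prob me mv (x1 := s/10) (x2 := 2*(s/10)) (y1 := 0) (y2 := 4*s) (t := s/10)
    (b := 50 * (s/10)) (by omega) (by omega) (by omega)
  have x2 := exit_prob me mv (x1 := 8*(s/10)) (x2 := 9*(s/10)) (y1 := 0) (y2 := 4*s) (t := s/10)
    (b := 50 * (s/10)) (by omega) (by omega) (by omega)
  have := col_mix me mv (R1 := box (s/10) (2*(s/10)) 0 (4*s))
    (B1 := box (s/10-s/10) (2*(s/10)+s/10) (0-s/10) (4*s+s/10))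
    (R2 := box (8*(s/10)) (9*(s/10)) 0 (4*s))
    (B2 := box (8*(s/10)-s/10) (9*(s/10)+s/10) (0-s/10) (4*s+s/10))
    (box_mono (by omega) (by omega) (by omega) (by omega))
    (box_mono (by omega) (by omega) (by omega) (by omega))
    (box_finite _ _ _ _) (box_finite _ _ _ _) (box_disjoint (by omega))
    (EC_dep adj _ {v | v.1 = s/10} {v | v.1 = 2*(s/10)} ℓ)
    (EC_dep adj _ {v | v.1 = 8*(s/10)} {v | v.1 = 9*(s/10)} ℓ)
  refine le_trans this (add_le_add le_rfl ?_)
  linarith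

end DaC

namespace DaC

/-! ### Transfer to the concrete model -/

noncomputable def code : Idx → ℕ
  | Sum.inl e => 2 * Sym2.lift ⟨eIdx, fun _ _ => min_comm _ _⟩ e
  | Sum.inr v => 2 * Encodable.encode v + 1

lemma eIdx_inj {u v a b : V} (h : eIdx u v = eIdx a b) : s(u, v) = s(a, b) := by
  unfold eIdx at h
  have inj := @Encodable.encode_injective (V × V) _
  rcases min_choice (Encodable.encode (u, v)) (Encodable.encode (v, u)) with h1 | h1 <;>
  rcases min_choice (Encodable.encode (a, b)) (Encodable.encode (b, a)) with h2 | h2 <;>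
  · rw [h1, h2] at h
    have := inj h
    simp only [Prod.mk.injEq] at this
    obtain ⟨rfl, rfl⟩ := this
    first
    | rfl
    | exact Sym2.eq_swap

lemma code_inj : Function.Injective code := by
  rintro (e | v) (e' | v') h
  · induction e using Sym2.ind with | _ u v =>
    induction e' using Sym2.ind with | _ a b =>
    simp only [code, Sym2.lift_mk] at h
    rw [eIdx_inj (by omega : eIdx u v = eIdx a b)]
  · simp only [code] at h; omega
  · simp only [code] at h; omega
  · simp only [code] at h
    rw [Encodable.encode_injective (by omega : Encodable.encode v = Encodable.encode v')]

section
variable (p r : ℝ) (c : Bool)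

noncomputable def FF (i : ℕ) (y : ℝ) : Bool :=
  if i % 2 = 0 then boolOf (y < p) else (boolOf (y < r) == c)

noncomputable def ZZ (x : ℝ) : Om := fun i => FF p r c (code i) (unif (code i) x)

noncomputable def meP : Measure Bool :=
  (Measure.infinitePi fun _ : ℕ => fair).map (fun b => FF p r c 0 (binSum b))
noncomputable def mvP : Measure Bool :=
  (Measure.infinitePi fun _ : ℕ => fair).map (fun b => FF p r c 1 (binSum b))

lemma meas_lt (q : ℝ) : Measurable (fun y : ℝ => boolOf (y < q)) :=
  measurable_boolOf measurableSet_Iio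

lemma FF_meas (i : ℕ) : Measurable (FF p r c i) := by
  unfold FF
  by_cases h : i % 2 = 0
  · simp only [h, if_true]; exact meas_lt p
  · simp only [h, if_false]
    exact (Measurable.of_discrete (f := fun b : Bool => (b == c))).comp (meas_lt r)


lemma FF_even (k : ℕ) : FF p r c (2 * k) = FF p r c 0 := by
  funext y; simp [FF]
lemma FF_odd (k : ℕ) : FF p r c (2 * k + 1) = FF p r c 1 := by
  funext y
  have : (2 * k + 1) % 2 = 1 := by omega
  simp [FF, this]

instance : IsProbabilityMeasure (meP p r c) :=
  Measure.isProbabilityMeasure_map ((FF_meas p r c 0).comp measurable_binSum).aemeasurable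
instance : IsProbabilityMeasure (mvP p r c) :=
  Measure.isProbabilityMeasure_map ((FF_meas p r c 1).comp measurable_binSum).aemeasurable

lemma ZZ_law : Measurable (ZZ p r c) ∧ base.map (ZZ p r c) = QQ (meP p r c) (mvP p r c) := by
  obtain ⟨hm, hl⟩ := base_map_thr (FF p r c) (FF_meas p r c)
  have hr : Measurable (fun (y : ℕ → Bool) (i : Idx) => y (code i)) := by fun_prop
  refine ⟨hr.comp hm, ?_⟩
  have e : ZZ p r c = (fun (y : ℕ → Bool) (i : Idx) => y (code i)) ∘
    (fun x i => FF p r c i (unif i x)) := rfl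
  rw [e, ← Measure.map_map hr hm, hl]
  have hpi : ∀ i, IsProbabilityMeasure ((Measure.infinitePi (fun _ : ℕ => fair)).map
      (fun b => FF p r c i (binSum b))) := fun i =>
    Measure.isProbabilityMeasure_map ((FF_meas p r c i).comp measurable_binSum).aemeasurable
  have := Measure.map_infinitePi_infinitePi_of_inj (P := fun i : ℕ =>
      (Measure.infinitePi (fun _ : ℕ => fair)).map (fun b => FF p r c i (binSum b))) code_inj
  refine this.trans ?_
  unfold QQ
  congr 1
  funext i
  cases i with
  | inl e => simp only [code, FF_even, muF, meP]
  | inr v => simp only [code, FF_odd, muF, mvP]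

lemma edge_eq (x : ℝ) : (fun a b => edgeCfg SqAdj p x a b = true) = Op (ZZ p r c x) SqE := by
  funext a b
  unfold edgeCfg Op ZZ
  rw [mem_SqE]
  simp only [code, Sym2.lift_mk, FF_even, Bool.and_eq_true, boolOf_eq_true, edgeU]
  simp [FF, boolOf_eq_true]

lemma xi_eq (x : ℝ) (v : V) : xi (ZZ p r c x) v = (colourCfg SqAdj p r x v == c) := by
  unfold xi
  rw [← edge_eq p r c x]
  unfold colourCfg coin ZZ
  simp only [code, FF_odd]
  rfl

lemma col_eq (x : ℝ) (v : V) : colourCfg SqAdj p r x v = (xi (ZZ p r c x) v == c) := by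
  rw [xi_eq]; cases colourCfg SqAdj p r x v <;> cases c <;> rfl

lemma xi_coord_measurable (v : V) : Measurable (fun ω : Om => xi ω v) := by
  apply measurable_to_bool
  exact xi_measurable (U := {v}) (Set.finite_singleton v) (C := {ξ | ξ v = true})
    (fun ξ ξ' h => by simp [h v rfl])

lemma cfg_measurable : Measurable (fun x => (edgeCfg SqAdj p x, colourCfg SqAdj p r x)) := by
  have hm := (ZZ_law p r true).1
  refine Measurable.prodMk ?_ ?_
  · refine measurable_pi_lambda _ fun a => measurable_pi_lambda _ fun b => ?_
    apply measurable_to_bool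
    have e : (fun x => edgeCfg SqAdj p x a b) ⁻¹' {true} =
        ZZ p r true ⁻¹' {ω | Op ω SqE a b} := by
      ext x
      exact iff_of_eq (congrFun (congrFun (edge_eq p r true x) a) b)
    rw [e]
    apply hm
    by_cases h : s(a, b) ∈ SqE
    · have : {ω : Om | Op ω SqE a b} = (fun ω : Om => ω (Sum.inl s(a, b))) ⁻¹' {true} := by
        ext ω; simp [Op, h]
      rw [this]
      exact measurable_pi_apply _ (MeasurableSet.of_discrete)
    · have : {ω : Om | Op ω SqE a b} = ∅ := by
        ext ω; simp [Op, h]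
      rw [this]; exact MeasurableSet.empty
  · refine measurable_pi_lambda _ fun v => ?_
    have e : (fun x => colourCfg SqAdj p r x v) =
      (fun b : Bool => (b == true)) ∘ (fun ω => xi ω v) ∘ ZZ p r true := by
      funext x; exact col_eq p r true x v
    rw [e]
    exact Measurable.of_discrete.comp ((xi_coord_measurable v).comp hm)

lemma DaC_eq {U : Set V} (hU : U.Finite) {C : Set (V → Bool)} (hC : Dep U C) :
    DaCMeasure SqAdj p r (colourEvent C) =
      QQ (meP p r c) (mvP p r c) {ω | xi ω ∈ {ξ : V → Bool | (fun v => ξ v == c) ∈ C}} := by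
  have hm1 : MeasurableSet (colourEvent C) := measurable_snd (hC.measurable hU)
  have hC' : Dep U {ξ : V → Bool | (fun v => ξ v == c) ∈ C} := by
    intro ξ ξ' h
    exact hC _ _ fun v hv => by simp only [h v hv]
  rw [← (ZZ_law p r c).2, Measure.map_apply (ZZ_law p r c).1 (xi_measurable hU hC'), DaCMeasure,
    Measure.map_apply (cfg_measurable p r) hm1]
  congr 1
  ext x
  simp only [Set.mem_preimage, colourEvent, Set.mem_ofPred_eq]
  rw [show colourCfg SqAdj p r x = fun v => xi (ZZ p r c x) v == c from funext (col_eq p r c x)]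

end

/-! ### Crossings -/

lemma crossing_iff {adj : V → V → Prop} {good : V → Prop} {R A B : Set V} (hAB : Disjoint A B) :
    HasCrossing adj good R A B ↔
      PathL (fun u v => adj u v ∧ good u ∧ good v) R A B ⊤ := by
  constructor
  · rintro ⟨k, f, h1, h2, h3, h4⟩
    refine ⟨fun m => f ⟨min m k, by omega⟩, k, fun i _ => (h1 _).1, ?_, ?_, ?_, by simp⟩
    · intro m _ hm
      refine ⟨?_, (h1 _).2, (h1 _).2⟩
      have := h2 ⟨m, hm⟩
      convert this using 2
      · ext; simp; omega
      · ext; simp; omega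
    · convert h3 using 2
      ext; simp
    · convert h4 using 2
      ext; simp
  · rintro ⟨f, k, h1, h2, h3, h4, -⟩
    have hk : 0 < k := by
      rcases Nat.eq_zero_or_pos k with rfl | h
      · exact absurd h4 (Set.disjoint_left.1 hAB h3)
      · exact h
    refine ⟨k, fun i => f i, fun i => ⟨h1 _ (by omega), ?_⟩, fun i => ?_, by simpa using h3,
      by simpa using h4⟩
    · by_cases hi : (i : ℕ) < k
      · exact (h2 i (by omega) hi).2.1
      · have := (h2 (k-1) (by omega) (by omega)).2.2
        rw [show k - 1 + 1 = (i : ℕ) by omega] at this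
        exact this
    · simpa using (h2 i (by omega) i.2).1

/-- Crossing events of colour `c`. -/
def CrC (adj : V → V → Prop) (c : Bool) (n m : ℕ) : Set ColourCfg :=
  {ξ | HasCrossing adj (fun v => ξ v = c) (Rect n m) (TopSide n m) (BotSide n m)}

lemma CrC_dep (adj : V → V → Prop) (c : Bool) (n m : ℕ) : Dep (Rect n m) (CrC adj c n m) := by
  intro ξ ξ' h
  constructor
  · rintro ⟨k, f, h1, h2⟩
    exact ⟨k, f, fun i => ⟨(h1 i).1, (h _ (h1 i).1).symm.trans (h1 i).2⟩, h2⟩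
  · rintro ⟨k, f, h1, h2⟩
    exact ⟨k, f, fun i => ⟨(h1 i).1, (h _ (h1 i).1).trans (h1 i).2⟩, h2⟩

lemma Rect_eq (n m : ℕ) : Rect n m = box 0 n 0 m := by
  ext v; simp only [Rect, box, Set.mem_ofPred_eq]; tauto

lemma prob_eq {adj : V → V → Prop} (ha : AdjOK adj) (p r : ℝ) (c : Bool) (n m : ℕ) (hm : 0 < m) :
    DaCMeasure SqAdj p r (colourEvent (CrC adj c n m)) =
      ENNReal.ofReal ((colM (meP p r c) (mvP p r c) adj ha).h m n) := by
  have hv := (colM (meP p r c) (mvP p r c) adj ha).P_Vc' 0 n 0 m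
  rw [sub_zero, sub_zero, Model.Vc, Model.EvL_comm] at hv
  rw [← hv, DaC_eq p r c (Rect_eq n m ▸ box_finite _ _ _ _) (CrC_dep adj c n m)]
  refine Eq.trans ?_ (ofReal_measureReal (measure_ne_top _ _)).symm
  congr 1
  ext ω
  have hd : Disjoint (TopSide n m) (BotSide n m) := by
    rw [Set.disjoint_left]
    rintro v ⟨_, h1⟩ ⟨_, h2⟩
    omega
  show HasCrossing adj (fun v => (xi ω v == c) = c) (Rect n m) (TopSide n m) (BotSide n m) ↔ _
  refine (crossing_iff hd).trans ?_
  have hg : ∀ b : Bool, ((b == c) = c) ↔ b = true := by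
    intro b; cases b <;> cases c <;> simp
  simp only [hg]
  rw [Rect_eq]
  constructor
  · rintro ⟨f, k, h1, h2, h3, h4, h5⟩
    exact ⟨f, k, h1, h2, h3.2, h4.2, h5⟩
  · rintro ⟨f, k, h1, h2, h3, h4, h5⟩
    refine ⟨f, k, h1, h2, ⟨?_, h3⟩, ⟨?_, h4⟩, h5⟩
    · rw [Rect_eq]; exact h1 0 (by omega)
    · rw [Rect_eq]; exact h1 k le_rfl

section
variable (me mv : Measure Bool) [IsProbabilityMeasure me] [IsProbabilityMeasure mv]

lemma h_zero (hmv : mv {true} = 0) {adj : V → V → Prop} (ha : AdjOK adj) (n m : ℕ) (hm : 0 < m) :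
    (colM me mv adj ha).h m n = 0 := by
  have hw : ∀ w : V, QQ me mv {ω | ω (Sum.inr w) = true} = 0 := by
    intro w
    have := Measure.infinitePi_map_eval (muF me mv) (Sum.inr w)
    have e : QQ me mv {ω | ω (Sum.inr w) = true} =
      ((Measure.infinitePi (muF me mv)).map (fun ω => ω (Sum.inr w))) {true} := by
      rw [Measure.map_apply (measurable_pi_apply _) (MeasurableSet.of_discrete)]; rfl
    rw [e]
    exact (congrFun (congrArg _ this) _).trans hmv
  have hU : QQ me mv (⋃ w : V, {ω | ω (Sum.inr w) = true}) = 0 := measure_iUnion_null hw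
  have : QQ me mv ((colM me mv adj ha).Hc 0 m 0 n ⊤) = 0 := by
    refine measure_mono_null ?_ hU
    rintro ω ⟨f, k, h1, h2, h3, h4, h5⟩
    have hk : 0 < k := by
      rcases Nat.eq_zero_or_pos k with rfl | h
      · simp only [Set.mem_ofPred_eq] at h3 h4; omega
      · exact h
    exact Set.mem_iUnion.2 ⟨_, (h2 0 le_rfl hk).2.1⟩
  show (QQ me mv).real _ = 0
  rw [Measure.real, this]; rfl

lemma bond_Lp {β : ℝ} (hβ : mv.real {true} = β) (hp : 0 < β) {adj : V → V → Prop} (ha : AdjOK adj)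
    {θ : ℝ} (h : (colM me mv adj ha).Lp θ) : (bondM me mv).Lp θ := by
  intro ε hε
  obtain ⟨n0, hn⟩ := h (β * ε) (by positivity)
  refine ⟨n0, fun n h1 m h2 => ?_⟩
  have k1 := hn n h1 m h2
  have k2 := bond_le_col me mv ha (box_finite 0 m 0 n) {v | v.1 = 0} {v | v.1 = m} ⊤
  rw [hβ] at k2
  exact le_of_mul_le_mul_left (k2.trans k1) hp

end

theorem rsw_gen {adj : V → V → Prop} (ha : AdjOK adj) (c : Bool) (p r : ℝ) {ρ₁ ρ₂ : ℝ}
    (h1 : 0 < ρ₁) (h2 : 0 < ρ₂)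
    (hl : 0 < Filter.limsup (fun n : ℕ =>
      DaCMeasure SqAdj p r (colourEvent (CrC adj c n ⌈ρ₁ * (n : ℝ)⌉₊))) Filter.atTop) :
    0 < Filter.limsup (fun n : ℕ =>
      DaCMeasure SqAdj p r (colourEvent (CrC adj c n ⌈ρ₂ * (n : ℝ)⌉₊))) Filter.atTop := by
  by_contra hcon
  have h0 : Filter.limsup (fun n : ℕ =>
      DaCMeasure SqAdj p r (colourEvent (CrC adj c n ⌈ρ₂ * (n : ℝ)⌉₊))) Filter.atTop = 0 :=
    nonpos_iff_eq_zero.1 (not_lt.1 hcon)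
  set X := colM (meP p r c) (mvP p r c) adj ha with hX
  have hpos : ∀ {ρ : ℝ}, 0 < ρ → ∀ n : ℕ, 1 ≤ n → 0 < ⌈ρ * (n : ℝ)⌉₊ := by
    intro ρ hρ n hn
    rw [Nat.ceil_pos]
    have : (0 : ℝ) < n := by exact_mod_cast hn
    positivity
  have hLp : X.Lp (ρ₂ + 1) := by
    intro ε hε
    have hev := Filter.eventually_lt_of_limsup_lt (h0.trans_lt (ENNReal.ofReal_pos.2 hε))
    obtain ⟨n0, hn0⟩ := Filter.eventually_atTop.1 hev
    refine ⟨n0 + 1, fun n hn m hm => ?_⟩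
    obtain ⟨n, rfl⟩ : ∃ k : ℕ, n = k := ⟨n.toNat, by omega⟩
    have k1 := hn0 n (by omega)
    rw [prob_eq ha p r c n _ (hpos h2 n (by omega)), ENNReal.ofReal_lt_ofReal_iff hε] at k1
    refine le_trans (X.h_mono (by omega) ?_ le_rfl) k1.le
    have hc := Nat.ceil_lt_add_one (a := ρ₂ * (n : ℝ)) (by positivity)
    have hn1 : (1 : ℝ) ≤ n := by exact_mod_cast (by omega : 1 ≤ n)
    have : ((⌈ρ₂ * (n : ℝ)⌉₊ : ℤ) : ℝ) ≤ m := by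
      push_cast at hm ⊢
      nlinarith
    exact_mod_cast this
  have hfin : ∀ ε : ℝ, 0 < ε → ∃ n0 : ℕ, ∀ n : ℕ, n0 ≤ n → 0 < n →
      X.h (⌈ρ₁ * (n : ℝ)⌉₊ : ℤ) n ≤ ε := by
    intro ε hε
    by_cases hz : (mvP p r c) {true} = 0
    · refine ⟨0, fun n _ hn => ?_⟩
      rw [hX, h_zero _ _ hz ha n _ (hpos h1 n hn)]
      exact hε.le
    · have hb := bond_Lp (meP p r c) (mvP p r c) rfl
        (ENNReal.toReal_pos hz (measure_ne_top _ _)) ha hLp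
      have hmix := col_mixing (meP p r c) (mvP p r c) (by positivity) hb ha
      obtain ⟨n0, hn0⟩ := X.mainA (by positivity : 0 < ρ₂ + 1) hLp hmix ⌈1 / ρ₁⌉₊ ε hε
      refine ⟨⌈n0 / ρ₁⌉₊, fun n hn _ => ?_⟩
      have g1 : ρ₁ * (n : ℝ) ≤ ⌈ρ₁ * (n : ℝ)⌉₊ := Nat.le_ceil _
      have g2 : 1 / ρ₁ ≤ ⌈1 / ρ₁⌉₊ := Nat.le_ceil _
      have g3 : n0 / ρ₁ ≤ n := (Nat.le_ceil _).trans (by exact_mod_cast hn)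
      have g4 : n0 ≤ ⌈ρ₁ * (n : ℝ)⌉₊ := by
        rw [div_le_iff₀ h1] at g3
        have : (n0 : ℝ) ≤ ⌈ρ₁ * (n : ℝ)⌉₊ := by linarith
        exact_mod_cast this
      refine le_trans (X.h_mono (by omega) le_rfl ?_) (hn0 _ g4)
      have : (n : ℝ) ≤ ⌈1 / ρ₁⌉₊ * ⌈ρ₁ * (n : ℝ)⌉₊ := by
        calc (n : ℝ) = 1 / ρ₁ * (ρ₁ * n) := by field_simp
          _ ≤ _ := by gcongr
      exact_mod_cast this
  obtain ⟨q, hq0, hq1⟩ := ENNReal.lt_iff_exists_nnreal_btwn.1 hl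
  have hq : (0 : ℝ) < q := by exact_mod_cast hq0
  obtain ⟨n0, hn0⟩ := hfin q hq
  refine absurd hq1 (not_lt.2 ?_)
  refine Filter.limsup_le_of_le (by isBoundedDefault) ?_
  filter_upwards [Filter.eventually_ge_atTop (n0 + 1)] with n hn
  rw [prob_eq ha p r c n _ (hpos h1 n (by omega))]
  refine (ENNReal.ofReal_le_ofReal (hn0 n (by omega) (by omega))).trans ?_
  simp

end DaC

namespace DaC

/-- **RSW property of the DaC model (Lemma 2.6).** For `p < 1/2` and
`r ∈ [0,1]`: (a) if black vertical crossings of `n × ⌈ρn⌉` rectangles occur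
with non-vanishing probability for some aspect ratio `ρ > 0`, then they do for
every `ρ > 0`; and (b) the same for white vertical `*`-crossings. -/
theorem rsw (p r : ℝ) (hp0 : 0 ≤ p) (hp : p < 1 / 2) (hr0 : 0 ≤ r) (hr1 : r ≤ 1) :
    ((∃ ρ : ℝ, 0 < ρ ∧
        0 < Filter.limsup
          (fun n : ℕ =>
            DaCMeasure SqAdj p r (colourEvent (VertBC SqAdj n ⌈ρ * (n : ℝ)⌉₊)))
          Filter.atTop) →
      ∀ ρ : ℝ, 0 < ρ →
        0 < Filter.limsup
          (fun n : ℕ =>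
            DaCMeasure SqAdj p r (colourEvent (VertBC SqAdj n ⌈ρ * (n : ℝ)⌉₊)))
          Filter.atTop) ∧
    ((∃ ρ : ℝ, 0 < ρ ∧
        0 < Filter.limsup
          (fun n : ℕ =>
            DaCMeasure SqAdj p r (colourEvent (VertWStarC n ⌈ρ * (n : ℝ)⌉₊)))
          Filter.atTop) →
      ∀ ρ : ℝ, 0 < ρ →
        0 < Filter.limsup
          (fun n : ℕ =>
            DaCMeasure SqAdj p r (colourEvent (VertWStarC n ⌈ρ * (n : ℝ)⌉₊)))
          Filter.atTop) := by
  refine ⟨?_, ?_⟩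
  · rintro ⟨ρ₁, h1, hl⟩ ρ₂ h2
    exact rsw_gen adjOK_sq true p r h1 h2 hl
  · rintro ⟨ρ₁, h1, hl⟩ ρ₂ h2
    exact rsw_gen adjOK_star false p r h1 h2 hl

end DaC
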